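/- arXiv:1803.02017 — 3 statements merged into one kernel-verified Lean document; each statement's English description precedes it below -/
import Mathlib

section
/- Let I = I(D) be the edge ideal of a vertex-weighted digraph D with vertices x_1,…,x_n and weight d_i at x_i. If U is the digraph obtained from D by assigning weight 2 to every vertex x_i with d_i ≥ 2 (and leaving weights 1 unchanged), then I(D) is Cohen–Macaulay if and only if I(U) is Cohen–Macaulay. -/
/-! The Krull dimension of `R/I(D)` depends only on which primes contain `I(D)`, hence not on the
(positive) weights. The point is that the depth does not change when a weight `d ≥ 2` is replaced by
`d + 1`.

Fix a variable `x_j` and `a ≥ 1`, and let `ψ : R → R` be the flat substitution `x_j ↦ x_j^a`. For a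
monomial ideal `I_A` spanned by the monomials with exponent in an upper set `A`, the restriction of
scalars `ψ^*(R/I_A)` splits as a direct sum over `r < a` of the `R/I_{A_r}`, where `A_r` consists of
the `e` such that changing `e_j` to `r + a e_j` gives an element of `A`. Also
`Ext^i(R/m, ψ^* N)` vanishes exactly when `Ext^i(R/mR, N)` does, where `mR = (x_j^a, x_i : i ≠ j)` is
the extension of `m` along `ψ`; and as `R/mR` is an iterated extension of copies of `R/m`, the first
nonvanishing degree of `Ext(R/mR, N)` is that of `Ext(R/m, N)`. Hence
`depth R/I_A ≥ k` if and only if `depth R/I_{A_r} ≥ k` for all `r < a` (`depthGE_iff_residue`).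

Consider now ideals generated by `x_i^{s_i} x_l^{w_l}` over the edges `(i, l)`. If `s_j`, `w_j` are
multiplied by `b`, all residue classes modulo `b` give back the original ideal, so the depth is
unchanged (`depthGE_scale`). The residue class of `r` modulo `a` replaces `(s_j, w_j)` by
`(⌈(s_j - r) / a⌉, ⌈(w_j - r) / a⌉)`. Combining the two, `(1, d)` is transformed into `(1, d + 1)` by
`b = d + 1`, `a = d`, `r = d - 1` when `d ≥ 2`, and `(1, d + 1)` into `(1, d)` by `b = d`,
`a = d + 1`, `r = 0`; this gives both inequalities between the depths (`depthGE_succ_weight`). -/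

open MvPolynomial CategoryTheory Opposite

noncomputable section

/-- The polynomial ring `K[x_v : v ∈ σ]` over the field `K`. -/
abbrev MvPoly (K : Type) [Field K] (σ : Type) : Type := MvPolynomial σ K

variable (K : Type) [Field K] (σ : Type)

/-- The graded maximal ideal `m = (x_v : v ∈ σ)` generated by all the variables. -/
def maxIdeal : Ideal (MvPoly K σ) := Ideal.span (Set.range MvPolynomial.X)

/-- The depth of `R/I` with respect to the graded maximal ideal, defined as
`inf { i | Ext^i(R/m, R/I) ≠ 0 }` (with value `⊤` for the zero module). -/
def depthQ (I : Ideal (MvPoly K σ)) : ℕ∞ :=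
  sInf { d : ℕ∞ | ∃ i : ℕ, d = i ∧
    Nontrivial (((Ext (MvPoly K σ) (ModuleCat (MvPoly K σ)) i).obj
      (op (ModuleCat.of (MvPoly K σ) (MvPoly K σ ⧸ maxIdeal K σ)))).obj
      (ModuleCat.of (MvPoly K σ) (MvPoly K σ ⧸ I))) }

/-- `R/I` is Cohen–Macaulay: its depth equals its Krull dimension. -/
def IsCMQ (I : Ideal (MvPoly K σ)) : Prop :=
  ((depthQ K σ I : ℕ∞) : WithBot ℕ∞) = ringKrullDim (MvPoly K σ ⧸ I)

variable {n : ℕ}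

/-- The monomial `x^a`. -/
def mono (K : Type) [Field K] {n : ℕ} (a : Fin n →₀ ℕ) : MvPoly K (Fin n) :=
  MvPolynomial.monomial a 1

/-- A monomial ideal: an ideal generated by monomials. -/
def IsMonomialIdeal (I : Ideal (MvPoly K (Fin n))) : Prop :=
  ∃ S : Set (Fin n →₀ ℕ), I = Ideal.span (mono K '' S)

/-- A squarefree exponent vector. -/
def SqfreeExp (a : Fin n →₀ ℕ) : Prop := ∀ i, a i ≤ 1

/-- A squarefree monomial ideal: an ideal generated by squarefree monomials. -/
def IsSqfreeMonomialIdeal (I : Ideal (MvPoly K (Fin n))) : Prop :=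
  ∃ S : Set (Fin n →₀ ℕ), (∀ a ∈ S, SqfreeExp a) ∧ I = Ideal.span (mono K '' S)

/-- A vertex-weighted digraph on the vertex set `Fin n`: edges are ordered pairs of
distinct vertices, and each vertex `x_i` has a weight `wt i ≥ 1`. -/
structure VWDigraph (n : ℕ) where
  adj : Fin n → Fin n → Prop
  loopless : ∀ i, ¬ adj i i
  wt : Fin n → ℕ
  wt_pos : ∀ i, 1 ≤ wt i

/-- The edge ideal of a vertex-weighted digraph:
`I(D) = (x_i x_j^{d_j} : (x_i, x_j) ∈ E(D))`. -/
def VWDigraph.edgeIdeal (K : Type) [Field K] {n : ℕ} (D : VWDigraph n) :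
    Ideal (MvPoly K (Fin n)) :=
  Ideal.span { p | ∃ i j, D.adj i j ∧ p = MvPolynomial.X i * MvPolynomial.X j ^ D.wt j }

end

/-! ### Vanishing of `Ext` over a commutative ring -/

section Homological

variable {R : Type} [CommRing R]

/-- The functor `_root_.Ext` (derived from `linearYoneda`) and `Abelian.Ext` (derived category)
vanish simultaneously: both are computed by `Hom(P, Y)` for a projective resolution `P` of `X`. -/
theorem subsingleton_oldExt_iff (X Y : ModuleCat.{0} R) (i : ℕ) :
    Subsingleton (((Ext R (ModuleCat.{0} R) i).obj (op X)).obj Y) ↔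
      Subsingleton (Abelian.Ext X Y i) := by
  let P := projectiveResolution X
  rw [← ModuleCat.isZero_iff_subsingleton, (P.isoExt i Y).isZero_iff,
    ← HomologicalComplex.exactAt_iff_isZero_homology]
  cases i with
  | zero =>
    rw [HomologicalComplex.exactAt_iff' _ 0 0 1 (by simp) (by simp),
      ShortComplex.moduleCat_exact_iff, Abelian.Ext.homEquiv₀.subsingleton_congr]
    constructor
    · intro h
      refine subsingleton_of_forall_eq 0 fun f => ?_
      obtain ⟨q, hq, hdq⟩ : ∃ q : P.complex.X 0 ⟶ X, Epi q ∧ P.complex.d 1 0 ≫ q = 0 :=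
        ⟨P.π.f 0, inferInstanceAs (Epi (P.π.f 0)), P.complex_d_comp_π_f_zero⟩
      have hf : P.complex.d 1 0 ≫ q ≫ f = 0 := by
        rw [← Category.assoc, hdq, Limits.zero_comp]
      -- the incoming differential of the Hom complex vanishes in degree `0`
      obtain ⟨(g : P.complex.X 0 ⟶ Y), hg⟩ := h (q ≫ f) hf
      have hd : P.complex.d 0 0 ≫ g = q ≫ f := hg
      rw [P.complex.shape 0 0 (by simp), Limits.zero_comp] at hd
      exact (cancel_epi q).1 (by rw [← hd, Limits.comp_zero])
    · intro h f hf
      have hf' : P.complex.d 1 0 ≫ f = 0 := hf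
      have hg : P.π.f 0 ≫ P.exact₀.desc f hf' = f := P.exact₀.g_desc f hf'
      have h0 : P.exact₀.desc f hf' = 0 := h.elim _ _
      rw [h0, Limits.comp_zero] at hg
      exact ⟨0, by rw [map_zero]; exact hg⟩
  | succ p =>
    rw [HomologicalComplex.exactAt_iff' _ p (p+1) (p+2) (by simp) (by simp),
      ShortComplex.moduleCat_exact_iff]
    constructor
    · intro h
      refine subsingleton_of_forall_eq 0 fun x => ?_
      obtain ⟨f, hf, rfl⟩ := P.extMk_surjective x (p+2) rfl
      rw [P.extMk_eq_zero_iff f (p+2) rfl hf p rfl]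
      exact h f hf
    · intro h f hf
      exact (P.extMk_eq_zero_iff f (p+2) rfl hf p rfl).1 (Subsingleton.elim _ _)

open Abelian

/-- Dimension shifting along an injective middle term, from degree `0` to degree `1`. -/
theorem subsingleton_ext_one_iff {S : ShortComplex (ModuleCat.{0} R)} (hS : S.ShortExact)
    [Injective S.X₂] (A : ModuleCat.{0} R) :
    Subsingleton (Ext A S.X₁ 1) ↔ ∀ f : A ⟶ S.X₃, ∃ g : A ⟶ S.X₂, g ≫ S.g = f := by
  constructor
  · intro h f
    obtain ⟨y, hy⟩ := Ext.covariant_sequence_exact₃ A hS (Ext.mk₀ f) (zero_add 1)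
      (Subsingleton.elim _ _)
    obtain ⟨g, rfl⟩ := (Ext.mk₀_bijective _ _).2 y
    exact ⟨g, (Ext.mk₀_bijective _ _).1 (by simpa using hy)⟩
  · intro h
    refine subsingleton_of_forall_eq 0 fun x => ?_
    obtain ⟨y, rfl⟩ := Ext.covariant_sequence_exact₁ A hS x (Ext.eq_zero_of_injective _)
      (zero_add 1)
    obtain ⟨f, rfl⟩ := (Ext.mk₀_bijective _ _).2 y
    obtain ⟨g, rfl⟩ := h f
    rw [← Ext.mk₀_comp_mk₀, Ext.comp_assoc_of_second_deg_zero]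
    simp

/-- Dimension shifting along an injective middle term, in positive degrees. -/
theorem subsingleton_ext_succ_iff {S : ShortComplex (ModuleCat.{0} R)} (hS : S.ShortExact)
    [Injective S.X₂] (A : ModuleCat.{0} R) (i : ℕ) :
    Subsingleton (Ext A S.X₁ (i + 2)) ↔ Subsingleton (Ext A S.X₃ (i + 1)) := by
  constructor
  · intro h
    refine subsingleton_of_forall_eq 0 fun x => ?_
    obtain ⟨y, rfl⟩ := Ext.covariant_sequence_exact₃ A hS x rfl (Subsingleton.elim _ _)
    rw [Ext.eq_zero_of_injective y]; simp
  · intro h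
    refine subsingleton_of_forall_eq 0 fun x => ?_
    obtain ⟨y, rfl⟩ := Ext.covariant_sequence_exact₁ A hS x (Ext.eq_zero_of_injective _) rfl
    rw [Subsingleton.elim y 0]; simp

/-- If `F` is exact and preserves injectives, and `Hom(X', -) ≅ Hom(X, F -)` naturally, then
`Ext^i(X', -)` and `Ext^i(X, F -)` vanish simultaneously. Only this pointwise form of an
adjunction, at one pair `(X, X')`, is required. -/
theorem subsingleton_ext_of_adj (F : ModuleCat.{0} R ⥤ ModuleCat.{0} R)
    [F.PreservesZeroMorphisms]
    [Limits.PreservesFiniteLimits F] [Limits.PreservesFiniteColimits F]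
    (hF : ∀ E, Injective E → Injective (F.obj E)) {X' X : ModuleCat.{0} R}
    (e : ∀ N, (X' ⟶ N) ≃ (X ⟶ F.obj N))
    (he : ∀ {N M} (f : X' ⟶ N) (g : N ⟶ M), e M (f ≫ g) = e N f ≫ F.map g)
    (i : ℕ) (N : ModuleCat.{0} R) :
    Subsingleton (Ext X' N i) ↔ Subsingleton (Ext X (F.obj N) i) := by
  induction i using Nat.strong_induction_on generalizing N with
  | _ i ih =>
  match i with
  | 0 => rw [Ext.homEquiv₀.subsingleton_congr, Ext.homEquiv₀.subsingleton_congr,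
      (e N).subsingleton_congr]
  | 1 =>
    let S := ShortComplex.mk _ _ (Limits.cokernel.condition (Injective.ι N))
    have hS : S.ShortExact := { exact := S.exact_of_g_is_cokernel (Limits.cokernelIsCokernel _) }
    have hI : Injective S.X₂ := inferInstanceAs (Injective (Injective.under N))
    have hI' : Injective (S.map F).X₂ := hF _ hI
    have h1 := subsingleton_ext_one_iff hS X'
    have h2 := subsingleton_ext_one_iff (hS.map_of_exact F) X
    refine h1.trans (Iff.trans ?_ h2.symm)
    constructor
    · intro h f
      obtain ⟨g, hg⟩ := h ((e _).symm f)
      refine ⟨e _ g, ?_⟩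
      change e _ g ≫ F.map S.g = f
      rw [← he, hg]; exact (e _).apply_symm_apply f
    · intro h f
      obtain ⟨g, hg⟩ := h (e _ f)
      refine ⟨(e _).symm g, (e _).injective ?_⟩
      rw [he]
      exact (congrArg (· ≫ F.map S.g) ((e _).apply_symm_apply g)).trans hg
  | i + 2 =>
    let S := ShortComplex.mk _ _ (Limits.cokernel.condition (Injective.ι N))
    have hS : S.ShortExact := { exact := S.exact_of_g_is_cokernel (Limits.cokernelIsCokernel _) }
    have hI : Injective S.X₂ := inferInstanceAs (Injective (Injective.under N))
    have hI' : Injective (S.map F).X₂ := hF _ hI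
    exact (subsingleton_ext_succ_iff hS X' i).trans ((ih (i + 1) (by omega) S.X₃).trans
      (subsingleton_ext_succ_iff (hS.map_of_exact F) X i).symm)

end Homological

section Homological2
open Abelian
variable {R : Type} [CommRing R]

/-- If `Y m` is an `m`-fold iterated extension of `k₀`, then `Ext^i(k₀, N) = 0` for `i < k` implies
the same for `Y m`. -/
theorem ext_vanishing_of_filtration {k₀ : ModuleCat.{0} R} (Y : ℕ → ModuleCat.{0} R)
    (h0 : Limits.IsZero (Y 0))
    (hS : ∀ m, ∃ (f : Y m ⟶ Y (m + 1)) (g : Y (m + 1) ⟶ k₀) (w : f ≫ g = 0),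
      (ShortComplex.mk f g w).ShortExact) (N : ModuleCat.{0} R) (k : ℕ)
    (hk : ∀ i < k, Subsingleton (Ext k₀ N i)) (m : ℕ) :
    ∀ i < k, Subsingleton (Ext (Y m) N i) := by
  induction m with
  | zero =>
    intro i _
    refine subsingleton_of_forall_eq 0 fun x => ?_
    rw [← Ext.mk₀_id_comp x, h0.eq_of_src (𝟙 (Y 0)) 0]
    simp
  | succ m ih =>
    intro i hi
    obtain ⟨f, g, w, hS⟩ := hS m
    refine subsingleton_of_forall_eq 0 fun x => ?_
    have := ih i hi
    have := hk i hi
    obtain ⟨y, rfl⟩ := Ext.contravariant_sequence_exact₂ hS N x (Subsingleton.elim _ _)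
    rw [Subsingleton.elim y 0]; simp

/-- For nonzero iterated extensions the previous implication is an equivalence: if `i` is the first
degree with `Ext^i(k₀, N) ≠ 0`, then `Ext^(i-1)(Y m, N) = 0`, so `Ext^i(k₀, N)` embeds into
`Ext^i(Y (m + 1), N)`. -/
theorem ext_vanishing_iff_of_filtration {k₀ : ModuleCat.{0} R} (Y : ℕ → ModuleCat.{0} R)
    (h0 : Limits.IsZero (Y 0))
    (hS : ∀ m, ∃ (f : Y m ⟶ Y (m + 1)) (g : Y (m + 1) ⟶ k₀) (w : f ≫ g = 0),
      (ShortComplex.mk f g w).ShortExact) (N : ModuleCat.{0} R) (k : ℕ) (m : ℕ) :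
    (∀ i < k, Subsingleton (Ext k₀ N i)) ↔ ∀ i < k, Subsingleton (Ext (Y (m + 1)) N i) := by
  refine ⟨fun h => ext_vanishing_of_filtration Y h0 hS N k h (m + 1), fun h i => ?_⟩
  induction i using Nat.strong_induction_on with
  | _ i ih =>
  intro hi
  obtain ⟨f, g, w, hSm⟩ := hS m
  have := h i hi
  match i with
  | 0 =>
    have : Epi g := hSm.epi_g
    exact (Ext.precomp_mk₀_injective_of_epi N g).subsingleton
  | i + 1 =>
    have := ext_vanishing_of_filtration Y h0 hS N (i + 1)
      (fun i' hi' => ih i' hi' (by omega)) m i (by omega)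
    refine subsingleton_of_forall_eq 0 fun x => ?_
    obtain ⟨y, rfl⟩ := Ext.contravariant_sequence_exact₃ hSm N x (Subsingleton.elim _ _)
      (add_comm 1 i)
    rw [Subsingleton.elim y 0]; simp

/-- The natural map `Hom(R/IR, N) → Hom(R/I, ψ^* N)`, where the extension `IR` of `I` along `ψ` is
called `J`. -/
noncomputable def quotientHomToRestrict (ψ : R →+* R) {I J : Ideal R} (hJ : J = I.map ψ)
    (N : ModuleCat.{0} R) (f : ModuleCat.of R (R ⧸ J) ⟶ N) :
    ModuleCat.of R (R ⧸ I) ⟶ (ModuleCat.restrictScalars ψ).obj N :=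
  ModuleCat.ofHom (Y := (ModuleCat.restrictScalars ψ).obj N)
    { toFun := fun x => f.hom (Ideal.quotientMap J ψ (hJ ▸ Ideal.le_comap_map) x)
      map_add' := fun x y => by
        rw [map_add, map_add]; rfl
      map_smul' := fun c x => by
        obtain ⟨x, rfl⟩ := Ideal.Quotient.mk_surjective x
        rw [Algebra.smul_def, map_mul, Ideal.Quotient.algebraMap_eq, Ideal.quotientMap_mk,
          ← Ideal.Quotient.algebraMap_eq, ← Algebra.smul_def, map_smul]
        rfl }

theorem quotientHomToRestrict_bijective (ψ : R →+* R) {I J : Ideal R} (hJ : J = I.map ψ)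
    (N : ModuleCat.{0} R) : Function.Bijective (quotientHomToRestrict ψ hJ N) := by
  constructor
  · intro f g hfg
    have h1 : f.hom (1 : R ⧸ J) = g.hom (1 : R ⧸ J) := by
      have := congrArg (fun t => t.hom (1 : R ⧸ I)) hfg
      change f.hom (Ideal.quotientMap J ψ _ (1 : R ⧸ I)) =
        g.hom (Ideal.quotientMap J ψ _ (1 : R ⧸ I)) at this
      rwa [map_one] at this
    refine ModuleCat.hom_ext (LinearMap.ext fun x => ?_)
    obtain ⟨x, rfl⟩ := Ideal.Quotient.mk_surjective x
    have hx : Ideal.Quotient.mk J x = x • (1 : R ⧸ J) := by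
      rw [Algebra.smul_def, mul_one]; rfl
    rw [hx]
    exact (map_smul f.hom x _).trans ((congrArg (x • ·) h1).trans (map_smul g.hom x _).symm)
  · intro g
    let v : N := g.hom (1 : R ⧸ I)
    have hg : ∀ x : R, g.hom (Ideal.Quotient.mk I x) = ψ x • v := fun x => by
      have hx : Ideal.Quotient.mk I x = x • (1 : R ⧸ I) := by
        rw [Algebra.smul_def, mul_one]; rfl
      rw [hx]
      exact map_smul g.hom x _
    have hv : J ≤ LinearMap.ker (LinearMap.toSpanSingleton R N v) := by
      rw [hJ, Ideal.map_le_iff_le_comap]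
      intro x hx
      change ψ x • v = 0
      rw [← hg, Ideal.Quotient.eq_zero_iff_mem.2 hx]
      exact map_zero g.hom
    refine ⟨ModuleCat.ofHom (Submodule.liftQ J (LinearMap.toSpanSingleton R N v) hv), ?_⟩
    refine ModuleCat.hom_ext (LinearMap.ext fun x => ?_)
    obtain ⟨x, rfl⟩ := Ideal.Quotient.mk_surjective x
    exact (hg x).symm

/-- Restriction of scalars along a flat ring map preserves injectives, as its left adjoint is
exact. -/
theorem restrictScalars_injective (ψ : R →+* R)
    [Module.Flat R ((ModuleCat.restrictScalars.{0} ψ).obj (ModuleCat.of R R))]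
    (E : ModuleCat.{0} R) (hE : Injective E) :
    Injective ((ModuleCat.restrictScalars.{0} ψ).obj E) := by
  have : (ModuleCat.extendScalars.{0} ψ).PreservesMonomorphisms := ⟨fun {M N} f hf => by
    rw [ModuleCat.mono_iff_injective] at hf ⊢
    exact Module.Flat.lTensor_preserves_injective_linearMap
      (M := (ModuleCat.restrictScalars.{0} ψ).obj (ModuleCat.of R R)) f.hom hf⟩
  exact (ModuleCat.extendRestrictScalarsAdj.{0} ψ).map_injective E hE

theorem subsingleton_ext_restrictScalars_iff (ψ : R →+* R)
    [Module.Flat R ((ModuleCat.restrictScalars.{0} ψ).obj (ModuleCat.of R R))]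
    {I J : Ideal R} (hJ : J = I.map ψ) (i : ℕ) (N : ModuleCat.{0} R) :
    Subsingleton (Ext (ModuleCat.of R (R ⧸ J)) N i) ↔
      Subsingleton (Ext (ModuleCat.of R (R ⧸ I)) ((ModuleCat.restrictScalars ψ).obj N) i) :=
  subsingleton_ext_of_adj (ModuleCat.restrictScalars.{0} ψ) (restrictScalars_injective ψ)
    (fun N => Equiv.ofBijective _ (quotientHomToRestrict_bijective ψ hJ N))
    (fun _ _ => rfl) i N

/-- `Ext^i(X, -)` vanishes on `M` if it vanishes on the `L r` and the identity of `M` is a sum of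
maps factoring through the `L r`. -/
theorem subsingleton_ext_of_sum_factor {ι : Type} [Fintype ι] {X M : ModuleCat.{0} R}
    (L : ι → ModuleCat.{0} R) (p : ∀ r, M ⟶ L r) (s : ∀ r, L r ⟶ M)
    (h : ∑ r, p r ≫ s r = 𝟙 M) (i : ℕ) (hL : ∀ r, Subsingleton (Ext X (L r) i)) :
    Subsingleton (Ext X M i) := by
  refine subsingleton_of_forall_eq 0 fun x => ?_
  rw [← Ext.comp_mk₀_id x, ← h, Ext.mk₀_sum, Ext.comp_sum]
  refine Finset.sum_eq_zero fun r _ => ?_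
  rw [← Ext.mk₀_comp_mk₀, ← Ext.comp_assoc_of_second_deg_zero,
    Subsingleton.elim (x.comp (Ext.mk₀ (p r)) (add_zero i)) 0]
  simp

end Homological2

/-! ### Splitting a restriction of scalars -/

section Splitting
open Abelian
variable {R : Type} [CommRing R]

/-- The `R`-linear map `ψ^*(R/Q) → R/Q'` induced by an additive map `π` satisfying the projection
formula `π (ψ c * p) = c * π p` and sending `Q` into `Q'`. -/
noncomputable def quotProj (ψ : R →+* R) (π : R →+ R) (hπ : ∀ c p, π (ψ c * p) = c * π p)
    {Q Q' : Ideal R} (h : ∀ p ∈ Q, π p ∈ Q') :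
    (ModuleCat.restrictScalars.{0} ψ).obj (ModuleCat.of R (R ⧸ Q)) ⟶ ModuleCat.of R (R ⧸ Q') :=
  ModuleCat.ofHom (X := (ModuleCat.restrictScalars.{0} ψ).obj (ModuleCat.of R (R ⧸ Q)))
    { toFun := fun x => QuotientAddGroup.map Q.toAddSubgroup Q'.toAddSubgroup π h x
      map_add' := fun x y => map_add _ x y
      map_smul' := fun c x => by
        obtain ⟨p, rfl⟩ := Submodule.Quotient.mk_surjective Q x
        exact congrArg (Submodule.Quotient.mk (p := Q')) (hπ c p) }

/-- The `R`-linear map `R/Q' → ψ^*(R/Q)` induced by a `ψ`-semilinear additive map `s` sending `Q'`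
into `Q`. -/
noncomputable def quotIncl (ψ : R →+* R) (s : R →+ R) (hs : ∀ c p, s (c * p) = ψ c * s p)
    {Q Q' : Ideal R} (h : ∀ p ∈ Q', s p ∈ Q) :
    ModuleCat.of R (R ⧸ Q') ⟶ (ModuleCat.restrictScalars.{0} ψ).obj (ModuleCat.of R (R ⧸ Q)) :=
  ModuleCat.ofHom (Y := (ModuleCat.restrictScalars.{0} ψ).obj (ModuleCat.of R (R ⧸ Q)))
    { toFun := fun x => QuotientAddGroup.map Q'.toAddSubgroup Q.toAddSubgroup s h x
      map_add' := fun x y => map_add _ x y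
      map_smul' := fun c x => by
        obtain ⟨p, rfl⟩ := Submodule.Quotient.mk_surjective Q' x
        exact congrArg (Submodule.Quotient.mk (p := Q)) (hs c p) }

theorem quotIncl_quotProj (ψ : R →+* R) (π s : R →+ R) (hπ : ∀ c p, π (ψ c * p) = c * π p)
    (hs : ∀ c p, s (c * p) = ψ c * s p) {Q Q' : Ideal R} (h : ∀ p ∈ Q, π p ∈ Q')
    (h' : ∀ p ∈ Q', s p ∈ Q) (hid : ∀ p, π (s p) = p) :
    quotIncl ψ s hs h' ≫ quotProj ψ π hπ h = 𝟙 _ := by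
  refine ModuleCat.hom_ext (LinearMap.ext fun x => ?_)
  obtain ⟨p, rfl⟩ := Submodule.Quotient.mk_surjective Q' x
  exact congrArg (Submodule.Quotient.mk (p := Q')) (hid p)

theorem sum_quotProj_quotIncl {ι : Type} [Fintype ι] (ψ : R →+* R) (π s : ι → R →+ R)
    (hπ : ∀ r c p, π r (ψ c * p) = c * π r p)
    (hs : ∀ r c p, s r (c * p) = ψ c * s r p) {Q : Ideal R} {Q' : ι → Ideal R}
    (h : ∀ r, ∀ p ∈ Q, π r p ∈ Q' r)
    (h' : ∀ r, ∀ p ∈ Q' r, s r p ∈ Q) (hsum : ∀ p, ∑ r, s r (π r p) = p) :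
    ∑ r, quotProj ψ (π r) (hπ r) (h r) ≫ quotIncl ψ (s r) (hs r) (h' r) = 𝟙 _ := by
  refine ModuleCat.hom_ext (LinearMap.ext fun x => ?_)
  rw [ModuleCat.hom_sum, LinearMap.sum_apply]
  obtain ⟨p, rfl⟩ := Submodule.Quotient.mk_surjective Q x
  refine Eq.trans ?_ (congrArg (Submodule.Quotient.mk (p := Q)) (hsum p))
  exact (map_sum (Submodule.mkQ Q) _ _).symm

/-- The decomposition `ψ^* R = ⨁ s_r(R)` exhibits `ψ^* R` as a retract of a finite free module. -/
theorem flat_restrictScalars_of_splitting {ι : Type} [Fintype ι] (ψ : R →+* R) (π s : ι → R →+ R)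
    (hπ : ∀ r c p, π r (ψ c * p) = c * π r p)
    (hs : ∀ r c p, s r (c * p) = ψ c * s r p) (hsum : ∀ p, ∑ r, s r (π r p) = p) :
    Module.Flat R ((ModuleCat.restrictScalars.{0} ψ).obj (ModuleCat.of R R)) := by
  let M := (ModuleCat.restrictScalars.{0} ψ).obj (ModuleCat.of R R)
  let p' : M →ₗ[R] (ι → R) :=
    { toFun := fun x r => π r x
      map_add' := fun x y => funext fun r => map_add (π r) x y
      map_smul' := fun c x => funext fun r => hπ r c x }
  let s' : (ι → R) →ₗ[R] M :=
    { toFun := fun q => (∑ r, s r (q r) : R)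
      map_add' := fun x y => by
        simp only [Pi.add_apply, map_add, Finset.sum_add_distrib]; rfl
      map_smul' := fun c x => by
        refine Eq.trans ?_ (Finset.mul_sum Finset.univ (fun r => s r (x r)) (ψ c)).symm
        exact Finset.sum_congr rfl fun r _ => hs r c (x r) }
  exact Module.Flat.of_retract p' s' (LinearMap.ext fun x => hsum x)

/-- The homological core: if `ψ^*(R/Q)` splits as `⨁ R/Q'_r`, and `R/IR` (extension along `ψ`)
has a finite filtration with all quotients `R/I`, then `Ext^i(R/I, -)` vanishes below `k` on `R/Q`
if and only if it does so on every `R/Q'_r`. -/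
theorem ext_vanishing_iff_of_splitting {ι : Type} [Fintype ι] (ψ : R →+* R) (π s : ι → R →+ R)
    (hπ : ∀ r c p, π r (ψ c * p) = c * π r p)
    (hs : ∀ r c p, s r (c * p) = ψ c * s r p) (hid : ∀ r p, π r (s r p) = p)
    (hsum : ∀ p, ∑ r, s r (π r p) = p) {Q : Ideal R} {Q' : ι → Ideal R}
    (h : ∀ r, ∀ p ∈ Q, π r p ∈ Q' r) (h' : ∀ r, ∀ p ∈ Q' r, s r p ∈ Q)
    {I : Ideal R} (J : ℕ → Ideal R) (a : ℕ) (hJa : J (a + 1) = I.map ψ) (hJ0 : J 0 = ⊤)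
    (hJ : ∀ m, ∃ (f : ModuleCat.of R (R ⧸ J m) ⟶ ModuleCat.of R (R ⧸ J (m + 1)))
      (g : ModuleCat.of R (R ⧸ J (m + 1)) ⟶ ModuleCat.of R (R ⧸ I)) (w : f ≫ g = 0),
      (ShortComplex.mk f g w).ShortExact) (k : ℕ) :
    (∀ i < k, Subsingleton (Ext (ModuleCat.of R (R ⧸ I)) (ModuleCat.of R (R ⧸ Q)) i)) ↔
      ∀ r, ∀ i < k,
        Subsingleton (Ext (ModuleCat.of R (R ⧸ I)) (ModuleCat.of R (R ⧸ Q' r)) i) := by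
  have hzero : Limits.IsZero (ModuleCat.of R (R ⧸ J 0)) := by
    rw [ModuleCat.isZero_iff_subsingleton]
    exact Ideal.Quotient.subsingleton_iff.2 hJ0
  have := flat_restrictScalars_of_splitting ψ π s hπ hs hsum
  have h1 := ext_vanishing_iff_of_filtration (fun m => ModuleCat.of R (R ⧸ J m)) hzero hJ
    (ModuleCat.of R (R ⧸ Q)) k a
  refine h1.trans ((forall₂_congr fun i _ => subsingleton_ext_restrictScalars_iff ψ hJa i _).trans
    ⟨fun hM r i hi => ?_, fun hL i hi => ?_⟩)
  · have := hM i hi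
    exact subsingleton_ext_of_sum_factor (ι := Unit)
      (fun _ => (ModuleCat.restrictScalars.{0} ψ).obj (ModuleCat.of R (R ⧸ Q)))
      (fun _ => quotIncl ψ (s r) (hs r) (h' r)) (fun _ => quotProj ψ (π r) (hπ r) (h r))
      (by simpa using quotIncl_quotProj ψ (π r) (s r) (hπ r) (hs r) (h r) (h' r) (hid r))
      i (fun _ => this)
  · exact subsingleton_ext_of_sum_factor _ (fun r => quotProj ψ (π r) (hπ r) (h r))
      (fun r => quotIncl ψ (s r) (hs r) (h' r)) (sum_quotProj_quotIncl ψ π s hπ hs h h' hsum) i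
      fun r => hL r i hi

end Splitting

/-! ### Monomial ideals and the substitution `x_j ↦ x_j^a` -/

section Monomial

open MvPolynomial

variable {K : Type} [Field K] {n : ℕ}

/-- The `K`-algebra endomorphism `x_j ↦ x_j^a`, `x_i ↦ x_i` for `i ≠ j`. -/
noncomputable def stretchHom (K : Type) [Field K] {n : ℕ} (j : Fin n) (a : ℕ) :
    MvPolynomial (Fin n) K →ₐ[K] MvPolynomial (Fin n) K :=
  aeval fun i => X i ^ Function.update (fun _ => 1) j a i

theorem stretchHom_monomial (j : Fin n) (a : ℕ) (e : Fin n →₀ ℕ) (c : K) :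
    stretchHom K j a (monomial e c) = monomial (e.update j (a * e j)) c := by
  rw [stretchHom, aeval_monomial, monomial_eq, algebraMap_eq, Finsupp.prod_fintype _ _ (by simp),
    Finsupp.prod_fintype _ _ (by simp)]
  congr 1
  refine Finset.prod_congr rfl fun i _ => ?_
  rw [← pow_mul]
  by_cases h : i = j
  · subst h; simp
  · simp [h]

/-- The `r`-th coefficient of a polynomial in the basis `1, x_j, …, x_j^(a-1)` over the image of
`stretchHom K j a`: it keeps the monomials whose `x_j`-exponent is `r` modulo `a`, and replaces that
exponent by its quotient by `a`. -/
noncomputable def residuePart (K : Type) [Field K] {n : ℕ} (j : Fin n) (a r : ℕ) :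
    MvPolynomial (Fin n) K →ₗ[K] MvPolynomial (Fin n) K :=
  (basisMonomials (Fin n) K).constr K fun e =>
    if e j % a = r then monomial (e.update j (e j / a)) 1 else 0

theorem residuePart_monomial (j : Fin n) (a r : ℕ) (e : Fin n →₀ ℕ) (c : K) :
    residuePart K j a r (monomial e c) =
      if e j % a = r then monomial (e.update j (e j / a)) c else 0 := by
  have h : monomial e c = c • basisMonomials (Fin n) K e := by simp [smul_monomial]
  rw [h, map_smul, residuePart, Module.Basis.constr_basis]
  split_ifs <;> simp [smul_monomial]

theorem residuePart_stretchHom_mul (j : Fin n) {a : ℕ} (ha : 0 < a) (r : ℕ)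
    (q p : MvPolynomial (Fin n) K) :
    residuePart K j a r (stretchHom K j a q * p) = q * residuePart K j a r p := by
  induction q using MvPolynomial.induction_on' with
  | add q₁ q₂ h₁ h₂ => rw [map_add, add_mul, map_add, h₁, h₂, add_mul]
  | monomial u c =>
  induction p using MvPolynomial.induction_on' with
  | add p₁ p₂ h₁ h₂ => rw [mul_add, map_add, map_add, h₁, h₂, mul_add]
  | monomial v d =>
  rw [stretchHom_monomial, monomial_mul, residuePart_monomial, residuePart_monomial]
  have hj : (u.update j (a * u j) + v) j = a * u j + v j := by simp
  rw [hj, Nat.mul_add_mod, Nat.mul_add_div ha]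
  split_ifs
  · rw [monomial_mul]
    congr 2
    ext i
    by_cases h : i = j
    · subst h; simp
    · simp [h]
  · simp

theorem residuePart_X_pow_mul_stretchHom (j : Fin n) {a r : ℕ} (hr : r < a)
    (q : MvPolynomial (Fin n) K) :
    residuePart K j a r (X j ^ r * stretchHom K j a q) = q := by
  rw [mul_comm, residuePart_stretchHom_mul j (by omega), X_pow_eq_monomial, residuePart_monomial]
  have h : (Finsupp.single j r).update j 0 = 0 := by
    ext i
    by_cases h : i = j
    · subst h; simp
    · simp [h]
  simp [Nat.mod_eq_of_lt hr, Nat.div_eq_of_lt hr, h]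

theorem sum_X_pow_mul_stretchHom_residuePart (j : Fin n) {a : ℕ} (ha : 0 < a)
    (p : MvPolynomial (Fin n) K) :
    ∑ r : Fin a, X j ^ (r : ℕ) * stretchHom K j a (residuePart K j a r p) = p := by
  induction p using MvPolynomial.induction_on' with
  | add p₁ p₂ h₁ h₂ =>
    simp only [map_add, mul_add, Finset.sum_add_distrib]
    rw [h₁, h₂]
  | monomial v d =>
  rw [Finset.sum_eq_single (⟨v j % a, Nat.mod_lt _ ha⟩ : Fin a)]
  · rw [residuePart_monomial, if_pos rfl, stretchHom_monomial, X_pow_eq_monomial, monomial_mul,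
      one_mul]
    congr 2
    ext i
    by_cases h : i = j
    · subst h; simp [Nat.mod_add_div]
    · simp [h]
  · intro r _ hr
    rw [residuePart_monomial, if_neg (fun h => hr (Fin.ext h.symm))]
    simp
  · simp

/-- The monomial ideal spanned by the monomials with exponent in `A`. -/
noncomputable def monI (K : Type) [Field K] {n : ℕ} (A : Set (Fin n →₀ ℕ)) :
    Ideal (MvPolynomial (Fin n) K) :=
  Ideal.span ((fun e => monomial e (1 : K)) '' A)

theorem mem_monI {A : Set (Fin n →₀ ℕ)} (hA : IsUpperSet A) {p : MvPolynomial (Fin n) K} :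
    p ∈ monI K A ↔ ∀ e, coeff e p ≠ 0 → e ∈ A := by
  rw [monI, mem_ideal_span_monomial_image]
  simp only [mem_support_iff]
  exact forall₂_congr fun e _ => ⟨fun ⟨s, hs, hse⟩ => hA hse hs, fun h => ⟨e, h, le_rfl⟩⟩

theorem monomial_mem_monI {A : Set (Fin n →₀ ℕ)} {e : Fin n →₀ ℕ} (he : e ∈ A) (c : K) :
    monomial e c ∈ monI K A := by
  have : monomial e c = C c * monomial e 1 := by simp [C_mul_monomial]
  rw [this]
  exact Ideal.mul_mem_left _ _ (Ideal.subset_span ⟨e, he, rfl⟩)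

/-- The exponents `e` such that `x_j^r ψ(x^e)` has its exponent in `A`, where `ψ` is the substitution
`x_j ↦ x_j^a`. -/
def residueSet (j : Fin n) (a r : ℕ) (A : Set (Fin n →₀ ℕ)) : Set (Fin n →₀ ℕ) :=
  {e | e.update j (r + a * e j) ∈ A}

theorem residuePart_mem (j : Fin n) {a r : ℕ} {A : Set (Fin n →₀ ℕ)} (hA : IsUpperSet A)
    {p : MvPolynomial (Fin n) K} (hp : p ∈ monI K A) :
    residuePart K j a r p ∈ monI K (residueSet j a r A) := by
  rw [p.as_sum, map_sum]
  refine Ideal.sum_mem _ fun e he => ?_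
  have heA : e ∈ A := (mem_monI hA).1 hp e (mem_support_iff.1 he)
  rw [residuePart_monomial]
  split_ifs with h
  · refine monomial_mem_monI ?_ _
    have : (e.update j (e j / a)).update j (r + a * (e.update j (e j / a)) j) = e := by
      ext i
      by_cases hi : i = j
      · subst hi; simp [← h, Nat.mod_add_div]
      · simp [hi]
    change Finsupp.update _ _ _ ∈ A
    rw [this]
    exact heA
  · exact zero_mem _

theorem X_pow_mul_stretchHom_mem (j : Fin n) {a r : ℕ} {A : Set (Fin n →₀ ℕ)}
    {p : MvPolynomial (Fin n) K} (hp : p ∈ monI K (residueSet j a r A)) :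
    X j ^ r * stretchHom K j a p ∈ monI K A := by
  induction hp using Submodule.span_induction with
  | mem x hx =>
    obtain ⟨e, he, rfl⟩ := hx
    dsimp only
    rw [stretchHom_monomial, X_pow_eq_monomial, monomial_mul, one_mul]
    refine monomial_mem_monI ?_ _
    have : Finsupp.single j r + e.update j (a * e j) = e.update j (r + a * e j) := by
      ext i
      by_cases hi : i = j
      · subst hi; simp
      · simp [hi]
    rw [this]
    exact he
  | zero => simp
  | add x y _ _ hx hy => rw [map_add, mul_add]; exact add_mem hx hy
  | smul c x _ hx =>
    rw [smul_eq_mul, map_mul, mul_left_comm]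
    exact Ideal.mul_mem_left _ _ hx

end Monomial

/-! ### Depth and residue classes of exponents -/

section Step

open MvPolynomial Abelian

variable {K : Type} [Field K] {n : ℕ}

/-- Exponents of the monomials in the ideal `(x_j^m, x_i : i ≠ j)`. -/
def fatSet (j : Fin n) (m : ℕ) : Set (Fin n →₀ ℕ) := {e | m ≤ e j ∨ ∃ i ≠ j, 1 ≤ e i}

theorem isUpperSet_fatSet (j : Fin n) (m : ℕ) : IsUpperSet (fatSet j m) := by
  rintro e f hef (h | ⟨i, hi, h⟩)
  · exact Or.inl (h.trans (hef j))
  · exact Or.inr ⟨i, hi, h.trans (hef i)⟩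

theorem maxIdeal_eq_span : maxIdeal K (Fin n) = Ideal.span (Set.range X) := rfl

theorem X_mem_fat {j i : Fin n} (hi : i ≠ j) (m : ℕ) : (X i : MvPolynomial (Fin n) K) ∈
    monI K (fatSet j m) :=
  monomial_mem_monI (Or.inr ⟨i, hi, by simp⟩) _

theorem X_pow_mem_fat (j : Fin n) (m : ℕ) : (X j ^ m : MvPolynomial (Fin n) K) ∈
    monI K (fatSet j m) := by
  rw [X_pow_eq_monomial]
  exact monomial_mem_monI (Or.inl (by simp)) _

theorem monI_fat_le (j : Fin n) (m : ℕ) {I : Ideal (MvPolynomial (Fin n) K)}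
    (hj : X j ^ m ∈ I) (hI : ∀ i ≠ j, X i ∈ I) : monI K (fatSet j m) ≤ I := by
  rw [monI, Ideal.span_le]
  rintro _ ⟨e, he, rfl⟩
  obtain ⟨i, k, hk, hki⟩ : ∃ i k, X i ^ k ∈ I ∧ k ≤ e i := by
    rcases he with h | ⟨i, hi, h⟩
    · exact ⟨j, m, hj, h⟩
    · exact ⟨i, 1, by simpa using hI i hi, h⟩
  have : monomial e (1 : K) = monomial (e - Finsupp.single i k) 1 * X i ^ k := by
    rw [X_pow_eq_monomial, monomial_mul, tsub_add_cancel_of_le (by simpa using hki), one_mul]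
  change monomial e (1 : K) ∈ I
  rw [this]
  exact Ideal.mul_mem_left _ _ hk

theorem fat_one (j : Fin n) : monI K (fatSet j 1) = maxIdeal K (Fin n) := by
  apply le_antisymm
  · exact monI_fat_le j 1 (by rw [pow_one]; exact Ideal.subset_span ⟨j, rfl⟩)
      fun i _ => Ideal.subset_span ⟨i, rfl⟩
  · rw [maxIdeal_eq_span, Ideal.span_le]
    rintro _ ⟨i, rfl⟩
    by_cases h : i = j
    · subst h; simpa using X_pow_mem_fat (K := K) i 1
    · exact X_mem_fat h 1

/-- `(x_j^a, x_i : i ≠ j)` is the extension of the maximal ideal along `x_j ↦ x_j^a`. -/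
theorem fat_eq_map (j : Fin n) (a : ℕ) :
    monI K (fatSet j a) = (maxIdeal K (Fin n)).map (stretchHom K j a : _ →+* _) := by
  rw [maxIdeal_eq_span, Ideal.map_span]
  apply le_antisymm
  · refine monI_fat_le j a (Ideal.subset_span ⟨X j, ⟨j, rfl⟩, by simp [stretchHom]⟩)
      fun i hi => Ideal.subset_span ⟨X i, ⟨i, rfl⟩, by simp [stretchHom, hi]⟩
  · rw [Ideal.span_le]
    rintro _ ⟨_, ⟨i, rfl⟩, rfl⟩
    by_cases h : i = j
    · subst h; simpa [stretchHom] using X_pow_mem_fat (K := K) i a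
    · simpa [stretchHom, h] using X_mem_fat (K := K) h a

theorem fat_anti (j : Fin n) {m m' : ℕ} (h : m ≤ m') :
    monI K (fatSet j m') ≤ monI K (fatSet j m) :=
  monI_fat_le j m' (Ideal.pow_mem_of_pow_mem _ (X_pow_mem_fat j m) h) fun _ hi => X_mem_fat hi m

theorem X_mul_mem_fat_iff (j : Fin n) (m : ℕ) (p : MvPolynomial (Fin n) K) :
    X j * p ∈ monI K (fatSet j (m + 1)) ↔ p ∈ monI K (fatSet j m) := by
  rw [mem_monI (isUpperSet_fatSet _ _), mem_monI (isUpperSet_fatSet _ _)]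
  constructor
  · intro h e he
    have := h (Finsupp.single j 1 + e) (by rwa [coeff_X_mul])
    rcases this with h | ⟨i, hi, h⟩
    · left; simp at h; omega
    · right; refine ⟨i, hi, ?_⟩
      simpa [Finsupp.single_apply, Ne.symm hi] using h
  · intro h e he
    rw [mul_comm, coeff_mul_X'] at he
    split_ifs at he with hj
    · rcases h _ he with h | ⟨i, hi, h⟩
      · left
        rw [Finsupp.mem_support_iff] at hj
        simp at h; omega
      · right; refine ⟨i, hi, ?_⟩
        simpa [Finsupp.single_apply, Ne.symm hi] using h
    · exact absurd rfl he

/-- The sequence `0 → R/(x_j^m, x_i) → R/(x_j^(m+1), x_i) → R/(x_1, …, x_n) → 0`, whose first map is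
multiplication by `x_j`. -/
theorem exists_fat_shortExact (j : Fin n) (m : ℕ) :
    ∃ (f : ModuleCat.of (MvPolynomial (Fin n) K) (MvPolynomial (Fin n) K ⧸ monI K (fatSet j m)) ⟶
        ModuleCat.of (MvPolynomial (Fin n) K) (MvPolynomial (Fin n) K ⧸ monI K (fatSet j (m + 1))))
      (g : ModuleCat.of (MvPolynomial (Fin n) K)
        (MvPolynomial (Fin n) K ⧸ monI K (fatSet j (m + 1))) ⟶
        ModuleCat.of (MvPolynomial (Fin n) K) (MvPolynomial (Fin n) K ⧸ maxIdeal K (Fin n)))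
      (w : f ≫ g = 0), (ShortComplex.mk f g w).ShortExact := by
  let R := MvPolynomial (Fin n) K
  let f₀ : (R ⧸ monI K (fatSet j m)) →ₗ[R] (R ⧸ monI K (fatSet j (m + 1))) :=
    Submodule.mapQ _ _ (LinearMap.mulLeft R (X j : R))
      fun p hp => (X_mul_mem_fat_iff j m p).2 hp
  have hle : monI K (fatSet j (m + 1)) ≤ maxIdeal K (Fin n) := by
    rw [← fat_one j]; exact fat_anti j (by omega)
  let g₀ : (R ⧸ monI K (fatSet j (m + 1))) →ₗ[R] (R ⧸ maxIdeal K (Fin n)) :=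
    Submodule.mapQ _ _ LinearMap.id fun p hp => hle hp
  have hf₀ : ∀ p : R, f₀ (Submodule.Quotient.mk p) = Submodule.Quotient.mk (X j * p) :=
    fun p => rfl
  have hg₀ : ∀ p : R, g₀ (Submodule.Quotient.mk p) = Submodule.Quotient.mk p := fun p => rfl
  have hfg : Function.Exact f₀ g₀ := by
    intro y
    obtain ⟨p, rfl⟩ := Submodule.Quotient.mk_surjective _ y
    rw [hg₀, Submodule.Quotient.mk_eq_zero]
    constructor
    · intro hp
      have h2 : maxIdeal K (Fin n) ≤ Ideal.span {X j} ⊔ monI K (fatSet j (m + 1)) := by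
        rw [maxIdeal_eq_span, Ideal.span_le]
        rintro _ ⟨i, rfl⟩
        by_cases h : i = j
        · subst h; exact Ideal.mem_sup_left (Ideal.mem_span_singleton_self _)
        · exact Ideal.mem_sup_right (X_mem_fat h _)
      obtain ⟨u, hu, v, hv, huv⟩ := Submodule.mem_sup.1 (h2 hp)
      obtain ⟨q, rfl⟩ := Ideal.mem_span_singleton.1 hu
      refine ⟨Submodule.Quotient.mk q, ?_⟩
      rw [hf₀, Submodule.Quotient.eq, ← huv]
      rw [sub_add_cancel_left]
      exact neg_mem hv
    · rintro ⟨x, hx⟩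
      obtain ⟨q, rfl⟩ := Submodule.Quotient.mk_surjective _ x
      rw [hf₀, Submodule.Quotient.eq] at hx
      have h3 : X j * q ∈ maxIdeal K (Fin n) :=
        Ideal.mul_mem_right _ _ (Ideal.subset_span ⟨j, rfl⟩)
      simpa using sub_mem h3 (hle hx)
  have hinj : Function.Injective f₀ := by
    rw [injective_iff_map_eq_zero]
    intro x hx
    obtain ⟨q, rfl⟩ := Submodule.Quotient.mk_surjective _ x
    rw [hf₀, Submodule.Quotient.mk_eq_zero, X_mul_mem_fat_iff] at hx
    rwa [Submodule.Quotient.mk_eq_zero]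
  have hsurj : Function.Surjective g₀ := by
    intro x
    obtain ⟨q, rfl⟩ := Submodule.Quotient.mk_surjective _ x
    exact ⟨Submodule.Quotient.mk q, rfl⟩
  refine ⟨ModuleCat.ofHom f₀, ModuleCat.ofHom g₀, ?_, ?_⟩
  · refine ModuleCat.hom_ext (LinearMap.ext fun x => ?_)
    exact hfg.apply_apply_eq_zero x
  · exact { exact := (ShortComplex.ShortExact.moduleCat_exact_iff_function_exact _).2 hfg
            mono_f := (ModuleCat.mono_iff_injective _).2 hinj
            epi_g := (ModuleCat.epi_iff_surjective _).2 hsurj }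

/-- `Ext^i(K, R/I) = 0` for `i < k`, i.e. `depth R/I ≥ k`. -/
def DepthGE (k : ℕ) (I : Ideal (MvPolynomial (Fin n) K)) : Prop :=
  ∀ i < k, Subsingleton (Ext (ModuleCat.of (MvPolynomial (Fin n) K)
    (MvPolynomial (Fin n) K ⧸ maxIdeal K (Fin n)))
    (ModuleCat.of (MvPolynomial (Fin n) K) (MvPolynomial (Fin n) K ⧸ I)) i)

/-- Depth of `R/I_A`, for a monomial ideal `I_A`, in terms of the residue classes modulo `a` of the
exponent of `x_j`. -/
theorem depthGE_iff_residue (k : ℕ) (j : Fin n) {a : ℕ} (ha : 0 < a) {A : Set (Fin n →₀ ℕ)}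
    (hA : IsUpperSet A) :
    DepthGE k (monI K A) ↔ ∀ r < a, DepthGE k (monI K (residueSet j a r A)) := by
  have h := ext_vanishing_iff_of_splitting
    (stretchHom K j a : MvPolynomial (Fin n) K →+* MvPolynomial (Fin n) K)
    (fun r : Fin a => (residuePart K j a r).toAddMonoidHom)
    (fun r : Fin a => (AddMonoidHom.mulLeft (X j ^ (r : ℕ))).comp
      (stretchHom K j a : MvPolynomial (Fin n) K →+* MvPolynomial (Fin n) K).toAddMonoidHom)
    (fun r c p => residuePart_stretchHom_mul j ha r c p)
    (fun r c p => show X j ^ (r : ℕ) * stretchHom K j a (c * p) =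
      stretchHom K j a c * (X j ^ (r : ℕ) * stretchHom K j a p) by rw [map_mul, mul_left_comm])
    (fun r p => residuePart_X_pow_mul_stretchHom j r.2 p)
    (fun p => sum_X_pow_mul_stretchHom_residuePart j ha p)
    (Q := monI K A) (Q' := fun r => monI K (residueSet j a r A))
    (fun r p hp => residuePart_mem j hA hp) (fun r p hp => X_pow_mul_stretchHom_mem j hp)
    (fun m => monI K (fatSet j m)) (a - 1)
    (by rw [Nat.sub_add_cancel ha]; exact fat_eq_map j a)
    ((Ideal.eq_top_iff_one _).2 (by simpa using X_pow_mem_fat (K := K) j 0))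
    (exists_fat_shortExact j) k
  exact h.trans ⟨fun h r hr => h ⟨r, hr⟩, fun h r => h r r.2⟩

end Step

/-! ### Changing the weights -/

section Weights

open MvPolynomial

variable {K : Type} [Field K] {n : ℕ}

/-- Exponents of the monomials in `(x_i^{s_i} x_l^{w_l} : (i, l) an edge)`, for a digraph without
loops. -/
def edgeSet (adj : Fin n → Fin n → Prop) (s w : Fin n → ℕ) : Set (Fin n →₀ ℕ) :=
  {e | ∃ i l, adj i l ∧ s i ≤ e i ∧ w l ≤ e l}

theorem isUpperSet_edgeSet (adj : Fin n → Fin n → Prop) (s w : Fin n → ℕ) :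
    IsUpperSet (edgeSet adj s w) := by
  rintro e f hef ⟨i, l, h, hi, hl⟩
  exact ⟨i, l, h, hi.trans (hef i), hl.trans (hef l)⟩

theorem residueSet_edgeSet (adj : Fin n → Fin n → Prop) (s w : Fin n → ℕ) (j : Fin n)
    {a r p q : ℕ} (hs : ∀ t, s j ≤ r + a * t ↔ p ≤ t) (hw : ∀ t, w j ≤ r + a * t ↔ q ≤ t) :
    residueSet j a r (edgeSet adj s w) =
      edgeSet adj (Function.update s j p) (Function.update w j q) := by
  ext e
  have aux : ∀ (u : Fin n → ℕ) (p : ℕ), (∀ t, u j ≤ r + a * t ↔ p ≤ t) → ∀ i,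
      u i ≤ e.update j (r + a * e j) i ↔ Function.update u j p i ≤ e i := by
    intro u p hu i
    by_cases h : i = j
    · subst h; simpa using hu _
    · simp [h]
  exact exists₂_congr fun i l => and_congr_right fun _ => and_congr (aux s p hs i) (aux w q hw l)

/-- Substituting `x_j ↦ x_j^b` in the generators does not change the depth. -/
theorem depthGE_scale (k : ℕ) (adj : Fin n → Fin n → Prop) (s w : Fin n → ℕ) (j : Fin n) {b : ℕ}
    (hb : 0 < b) :
    DepthGE k (monI K (edgeSet adj s w)) ↔ DepthGE k (monI K
      (edgeSet adj (Function.update s j (b * s j)) (Function.update w j (b * w j)))) := by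
  have key : ∀ r < b, ∀ u t : ℕ, b * u ≤ r + b * t ↔ u ≤ t := by
    intro r hr u t
    constructor
    · intro h
      by_contra! hlt
      have := Nat.mul_le_mul_left b (Nat.succ_le_of_lt hlt)
      rw [Nat.mul_succ] at this
      omega
    · intro h
      have := Nat.mul_le_mul_left b h
      omega
  rw [depthGE_iff_residue k j hb (isUpperSet_edgeSet adj (Function.update s j _) _)]
  have : ∀ r < b, residueSet j b r
      (edgeSet adj (Function.update s j (b * s j)) (Function.update w j (b * w j))) =
      edgeSet adj s w := by
    intro r hr
    rw [residueSet_edgeSet (p := s j) (q := w j) _ _ _ _ (by simpa using key r hr _)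
      (by simpa using key r hr _)]
    simp
  exact ⟨fun h r hr => by rwa [this r hr], fun h => by simpa only [this 0 hb] using h 0 hb⟩

/-- Scale the `x_j`-exponents by `b`, then pass to the residue class of `r` modulo `a`: the exponents
`s_j`, `w_j` become `p = ⌈(b s_j - r) / a⌉` and `q = ⌈(b w_j - r) / a⌉`. -/
theorem DepthGE.rescale {k : ℕ} {adj : Fin n → Fin n → Prop} {s w : Fin n → ℕ} (j : Fin n)
    {a b r p q : ℕ} (hr : r < a) (hb : 0 < b)
    (hs : ∀ t, b * s j ≤ r + a * t ↔ p ≤ t) (hw : ∀ t, b * w j ≤ r + a * t ↔ q ≤ t)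
    (h : DepthGE k (monI K (edgeSet adj s w))) :
    DepthGE k (monI K (edgeSet adj (Function.update s j p) (Function.update w j q))) := by
  rw [depthGE_scale k adj s w j hb, depthGE_iff_residue k j (a := a) (by omega)
    (isUpperSet_edgeSet _ _ _)] at h
  have h := h r hr
  rw [residueSet_edgeSet (p := p) (q := q) _ _ _ _ (by simpa using hs) (by simpa using hw)] at h
  simpa using h

theorem depthGE_succ_weight (k : ℕ) (adj : Fin n → Fin n → Prop) (w : Fin n → ℕ) (j : Fin n)
    (hw : 2 ≤ w j) :
    DepthGE k (monI K (edgeSet adj 1 w)) ↔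
      DepthGE k (monI K (edgeSet adj 1 (Function.update w j (w j + 1)))) := by
  have h1 : Function.update (1 : Fin n → ℕ) j 1 = 1 := Function.update_eq_self j 1
  constructor
  · -- `⌈(d (d + 1) - (d - 1)) / d⌉ = d + 1` and `⌈((d + 1) - (d - 1)) / d⌉ = 1` since `d ≥ 2`.
    intro h
    have h := h.rescale (p := 1) (q := w j + 1) j (a := w j) (b := w j + 1) (r := w j - 1)
      (by omega) (by omega) ?_ ?_
    · rwa [h1] at h
    · intro t
      simp only [Pi.one_apply, mul_one]
      rcases t with _ | t
      · simp
      · rw [Nat.mul_succ]; omega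
    · intro t
      constructor
      · intro h
        by_contra! hlt
        have := Nat.mul_le_mul_left (w j) (Nat.le_of_lt_succ hlt)
        have : (w j + 1) * w j = w j * w j + w j := by ring
        omega
      · intro h
        have := Nat.mul_le_mul_left (w j) h
        have : (w j + 1) * w j = w j * (w j + 1) := by ring
        omega
  · -- `⌈d (d + 1) / (d + 1)⌉ = d` and `⌈d / (d + 1)⌉ = 1`.
    intro h
    have h := h.rescale (p := 1) (q := w j) j (a := w j + 1) (b := w j) (r := 0)
      (by omega) (by omega) ?_ ?_
    · rw [h1] at h; simpa using h
    · intro t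
      simp only [Pi.one_apply, mul_one]
      rcases t with _ | t
      · simp; omega
      · rw [Nat.mul_succ]; omega
    · intro t
      simp only [Function.update_self, zero_add]
      rw [mul_comm]
      exact Nat.mul_le_mul_left_iff (by omega)

theorem depthGE_weights (k : ℕ) (adj : Fin n → Fin n → Prop) (w d : Fin n → ℕ)
    (hwd : ∀ i, w i ≤ d i) (h2 : ∀ i, w i = d i ∨ 2 ≤ w i) :
    DepthGE k (monI K (edgeSet adj 1 w)) ↔ DepthGE k (monI K (edgeSet adj 1 d)) := by
  induction hN : ∑ i, (d i - w i) generalizing w with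
  | zero =>
    have : w = d := funext fun i => by
      have := (Finset.sum_eq_zero_iff.1 hN) i (Finset.mem_univ i)
      have := hwd i
      omega
    rw [this]
  | succ N ih =>
    obtain ⟨j, -, hj⟩ : ∃ j ∈ Finset.univ, d j - w j ≠ 0 :=
      Finset.exists_ne_zero_of_sum_ne_zero (by omega)
    have hj2 : 2 ≤ w j := (h2 j).resolve_left (by omega)
    rw [depthGE_succ_weight k adj w j hj2]
    refine ih _ (fun i => ?_) (fun i => ?_) ?_
    · by_cases h : i = j
      · subst h; simp; omega
      · simpa [h] using hwd i
    · by_cases h : i = j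
      · subst h; simp; omega
      · simpa [h] using h2 i
    · have h3 := Finset.add_sum_erase Finset.univ (fun i => d i - w i) (Finset.mem_univ j)
      rw [← Finset.add_sum_erase Finset.univ _ (Finset.mem_univ j)]
      have h4 : ∑ i ∈ Finset.univ.erase j, (d i - Function.update w j (w j + 1) i) =
          ∑ i ∈ Finset.univ.erase j, (d i - w i) :=
        Finset.sum_congr rfl fun i hi => by simp [Finset.ne_of_mem_erase hi]
      rw [h4]
      simp only [Function.update_self] at h3 ⊢
      omega

theorem edgeIdeal_eq_monI (D : VWDigraph n) : D.edgeIdeal K = monI K (edgeSet D.adj 1 D.wt) := by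
  apply le_antisymm
  · rw [VWDigraph.edgeIdeal, Ideal.span_le]
    rintro _ ⟨i, j, hij, rfl⟩
    rw [X_pow_eq_monomial, X, monomial_mul]
    exact monomial_mem_monI (A := edgeSet D.adj 1 D.wt) ⟨i, j, hij, by simp, by simp⟩ _
  · rw [monI, Ideal.span_le]
    rintro _ ⟨e, ⟨i, j, hij, hi, hj⟩, rfl⟩
    have hne : i ≠ j := fun h => D.loopless i (h ▸ hij)
    have hle : Finsupp.single i 1 + Finsupp.single j (D.wt j) ≤ e := by
      intro l
      by_cases h1 : l = i
      · subst h1; simpa [Finsupp.single_apply, hne.symm] using hi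
      · by_cases h2 : l = j
        · subst h2; simpa [Finsupp.single_apply, hne] using hj
        · simp [Ne.symm h1, Ne.symm h2]
    have : monomial e (1 : K) =
        monomial (e - (Finsupp.single i 1 + Finsupp.single j (D.wt j))) 1 *
          (X i * X j ^ D.wt j) := by
      rw [X_pow_eq_monomial, X, monomial_mul, monomial_mul, tsub_add_cancel_of_le hle]
      simp
    change monomial e (1 : K) ∈ D.edgeIdeal K
    rw [this]
    exact Ideal.mul_mem_left _ _ (Ideal.subset_span ⟨i, j, hij, rfl⟩)

theorem natCast_le_depthQ_iff (k : ℕ) (I : Ideal (MvPolynomial (Fin n) K)) :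
    (k : ℕ∞) ≤ depthQ K (Fin n) I ↔ DepthGE k I := by
  rw [depthQ, le_sInf_iff]
  constructor
  · intro h i hi
    rw [← subsingleton_oldExt_iff, ← not_nontrivial_iff_subsingleton]
    intro hnt
    have := h i ⟨i, rfl, hnt⟩
    rw [Nat.cast_le] at this
    omega
  · rintro h _ ⟨i, rfl, hnt⟩
    rw [Nat.cast_le]
    by_contra! hlt
    exact not_subsingleton_iff_nontrivial.2 hnt ((subsingleton_oldExt_iff _ _ i).2 (h i hlt))

theorem depthQ_congr {I J : Ideal (MvPolynomial (Fin n) K)}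
    (h : ∀ k, DepthGE k I ↔ DepthGE k J) : depthQ K (Fin n) I = depthQ K (Fin n) J := by
  refine ENat.eq_of_forall_natCast_le_iff fun k => ?_
  rw [natCast_le_depthQ_iff, natCast_le_depthQ_iff, h]

/-- The minimal primes, hence the dimension, do not see the (positive) weights. -/
theorem ringKrullDim_edgeIdeal_congr (D U : VWDigraph n) (hadj : U.adj = D.adj) :
    ringKrullDim (MvPoly K (Fin n) ⧸ D.edgeIdeal K) =
      ringKrullDim (MvPoly K (Fin n) ⧸ U.edgeIdeal K) := by
  have key : ∀ (D : VWDigraph n) (P : PrimeSpectrum (MvPoly K (Fin n))),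
      P ∈ PrimeSpectrum.zeroLocus (D.edgeIdeal K : Set (MvPoly K (Fin n))) ↔
        ∀ i j, D.adj i j → X i ∈ P.asIdeal ∨ X j ∈ P.asIdeal := by
    intro D P
    rw [PrimeSpectrum.mem_zeroLocus, SetLike.coe_subset_coe, VWDigraph.edgeIdeal, Ideal.span_le]
    constructor
    · intro h i j hij
      have := h ⟨i, j, hij, rfl⟩
      rcases P.isPrime.mem_or_mem this with h | h
      · exact Or.inl h
      · exact Or.inr (P.isPrime.mem_of_pow_mem _ h)
    · rintro h _ ⟨i, j, hij, rfl⟩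
      rcases h i j hij with h | h
      · exact Ideal.mul_mem_right _ _ h
      · exact Ideal.mul_mem_left _ _ (Ideal.pow_mem_of_mem _ h _ (D.wt_pos j))
  have hz : PrimeSpectrum.zeroLocus (D.edgeIdeal K : Set (MvPoly K (Fin n))) =
      PrimeSpectrum.zeroLocus (U.edgeIdeal K : Set (MvPoly K (Fin n))) := by
    ext P
    rw [key, key, hadj]
  rw [ringKrullDim_quotient, ringKrullDim_quotient, hz]

end Weights

/-- the Cohen–Macaulay property of the edge ideal of a vertex-weighted
digraph only depends on which weights are at least `2`. -/
theorem stmt7 (K : Type) [Field K] (n : ℕ) (D U : VWDigraph n)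
    (hadj : U.adj = D.adj)
    (hwt : U.wt = fun i => if 2 ≤ D.wt i then 2 else D.wt i) :
    IsCMQ K (Fin n) (D.edgeIdeal K) ↔ IsCMQ K (Fin n) (U.edgeIdeal K) := by
  have hdepth : depthQ K (Fin n) (U.edgeIdeal K) = depthQ K (Fin n) (D.edgeIdeal K) := by
    refine depthQ_congr fun k => ?_
    rw [edgeIdeal_eq_monI, edgeIdeal_eq_monI, hadj]
    refine depthGE_weights k D.adj U.wt D.wt (fun i => ?_) (fun i => ?_) <;>
    · simp only [hwt]
      split_ifs <;> omega
  rw [IsCMQ, IsCMQ, hdepth, ringKrullDim_edgeIdeal_congr D U hadj]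
end

section
/- If I ⊆ R is a monomial ideal, then depth(R/rad(I)) ≥ depth(R/I), where rad(I) is the radical of I. In particular, if R/I is Cohen–Macaulay, then R/rad(I) is Cohen–Macaulay. -/
/-!
Let `J = rad(I)` and let `k` be a positive bound for the exponents of a finite set of monomial
generators of `I`. The endomorphism `φ : x_i ↦ x_i^k` of `R` maps `J` into `I`. In the other
direction, the `K`-linear contraction `x^(k b) ↦ x^b` (and `x^a ↦ 0` if `k` does not divide `a`)
maps `I` into `J`, is a left inverse of `φ` and is `R`-linear when `R` acts on its source through
`φ`. Hence `R/J` is a direct summand of `R/I` viewed as an `R`-module through `φ`.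

By the Rees theorem, `depth R/I ≥ d` means that `R/I` has a regular sequence of length `d` in `m`.
As `φ(m)R` and `m` have the same radical, `Ext^i(R/φ(m)R, R/I) = 0` for `i < d`, and prime avoidance
then gives `r_1, …, r_d ∈ m` such that `φ(r_1), …, φ(r_d)` is regular on `R/I`
(`exists_isWeaklyRegular_map`). By the direct summand property `r_1, …, r_d` is regular on `R/J`
(`isWeaklyRegular_of_retract`), so `depth R/J ≥ d`.

For the Cohen–Macaulay statement, `R/I` and `R/J` have the same dimension, and depth is at most
dimension because a regular element lowers the dimension of the support (`length_le_supportDim`).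
-/

open MvPolynomial CategoryTheory Opposite

/-! ### Ext vanishing and regular sequences -/

/-- The functor `Ext` obtained by deriving `Hom` in the first variable and the groups `Abelian.Ext` of
the derived category vanish simultaneously: both are computed by a projective resolution. -/
theorem subsingleton_abelianExt_iff {R : Type} [CommRing R] (X Y : ModuleCat.{0} R) (i : ℕ) :
    Subsingleton (Abelian.Ext X Y i) ↔
      Subsingleton (((Ext R (ModuleCat R) i).obj (op X)).obj Y) := by
  let P := ProjectiveResolution.of X
  rw [(P.isoExt (R := R) i Y).toLinearEquiv.toEquiv.subsingleton_congr,
    ← ModuleCat.isZero_iff_subsingleton, ← HomologicalComplex.exactAt_iff_isZero_homology]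
  cases i with
  | zero =>
    rw [HomologicalComplex.exactAt_iff' _ 0 0 1 (by simp) (by simp), ShortComplex.moduleCat_exact_iff]
    rw [Abelian.Ext.addEquiv₀.subsingleton_congr]
    let ε : P.complex.X 0 ⟶ X := P.π.f 0
    have hε : P.complex.d 1 0 ≫ ε = 0 := P.complex_d_comp_π_f_zero
    have hepi : Epi ε := inferInstanceAs (Epi (P.π.f 0))
    have hexact : (ShortComplex.mk _ _ hε).Exact := P.exact₀
    constructor
    · intro h x hx
      have hx' : P.complex.d 1 0 ≫ x = 0 := hx
      have hx0 : x = 0 := by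
        rw [← hexact.g_desc x hx', Subsingleton.elim (hexact.desc x hx') 0]
        exact Limits.comp_zero
      exact ⟨0, by rw [hx0]; exact map_zero _⟩
    · intro h
      refine subsingleton_of_forall_eq 0 fun g => ?_
      obtain ⟨y, hy⟩ := h (ε ≫ g) (show P.complex.d 1 0 ≫ ε ≫ g = 0 by
        rw [← Category.assoc, hε, Limits.zero_comp])
      obtain ⟨y', hy'⟩ : ∃ y' : P.complex.X 0 ⟶ Y, P.complex.d 0 0 ≫ y' = ε ≫ g := ⟨y, hy⟩
      rw [P.complex.shape 0 0 (by simp), Limits.zero_comp] at hy'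
      rw [← cancel_epi ε, ← hy', Limits.comp_zero]
  | succ p =>
    rw [HomologicalComplex.exactAt_iff' _ p (p+1) (p+2) (by simp) (by simp),
      ShortComplex.moduleCat_exact_iff]
    constructor
    · intro h x hx
      exact (P.extMk_eq_zero_iff x (p+2) rfl hx p rfl).1 (Subsingleton.elim _ _)
    · intro h
      refine subsingleton_of_forall_eq 0 fun α => ?_
      obtain ⟨f, hf, rfl⟩ := P.extMk_surjective α (p+2) rfl
      exact (P.extMk_eq_zero_iff f (p+2) rfl hf p rfl).2 (h f hf)

/-- Prime avoidance along a ring homomorphism: if the extended ideal `mS` contains an `M`-regular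
element, then so does the image of `m` itself. The primes to avoid are the contractions of the
associated primes of `M`. -/
theorem exists_mem_map_isSMulRegular {R S : Type*} [CommRing R] [CommRing S] [IsNoetherianRing S]
    (φ : R →+* S) (m : Ideal R) {M : Type*} [AddCommGroup M] [Module S M] [Module.Finite S M]
    {y : S} (hy : y ∈ m.map φ) (hreg : IsSMulRegular M y) :
    ∃ x ∈ m, IsSMulRegular M (φ x) := by
  by_contra! h
  have hsub : (m : Set R) ⊆ ⋃ p ∈ associatedPrimes S M, (p.comap φ : Ideal R) := by
    intro x hx
    have : φ x ∈ ⋃ p ∈ associatedPrimes S M, (p : Set S) := by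
      rw [biUnion_associatedPrimes_eq_compl_regular S M]
      exact h x hx
    simpa using this
  obtain ⟨p, hp, hmp⟩ := (Ideal.subset_union_prime_finite (associatedPrimes.finite S M)
    (f := fun p => p.comap φ) ⊤ ⊤ (fun p hp _ _ => by
      have := IsAssociatedPrime.isPrime hp
      exact Ideal.IsPrime.comap φ)).1 hsub
  have hyp : y ∈ p := Ideal.map_le_iff_le_comap.2 hmp hy
  have : y ∈ ⋃ p ∈ associatedPrimes S M, (p : Set S) := Set.mem_biUnion hp hyp
  rw [biUnion_associatedPrimes_eq_compl_regular S M] at this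
  exact this hreg

/-- If `Ext^i_S(S/mS, M) = 0` for `i < d`, then there is a weakly `M`-regular sequence of length `d`
consisting of images of elements of `m`. -/
theorem exists_isWeaklyRegular_map {R S : Type} [CommRing R] [CommRing S] [IsNoetherianRing S]
    (φ : R →+* S) (m : Ideal R) (d : ℕ) (M : ModuleCat.{0} S) [Module.Finite S M]
    (hext : ∀ i < d, Subsingleton (Abelian.Ext (ModuleCat.of S (S ⧸ m.map φ)) M i)) :
    ∃ rs : List R, rs.length = d ∧ (∀ r ∈ rs, r ∈ m) ∧
      RingTheory.Sequence.IsWeaklyRegular M (rs.map φ) := by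
  induction d generalizing M with
  | zero => exact ⟨[], by simp⟩
  | succ d ih =>
    set N := ModuleCat.of S (S ⧸ m.map φ) with hN
    have : Subsingleton (N ⟶ M) :=
      Abelian.Ext.addEquiv₀.subsingleton_congr.mp (hext 0 d.zero_lt_succ)
    have : Subsingleton ((S ⧸ m.map φ) →ₗ[S] M) := (ModuleCat.homAddEquiv (M := N)).symm.subsingleton
    obtain ⟨y, hy, hreg⟩ := IsSMulRegular.subsingleton_linearMap_iff.mp this
    rw [Ideal.annihilator_quotient] at hy
    obtain ⟨x, hx, hxreg⟩ := exists_mem_map_isSMulRegular φ m hy hreg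
    have hext' : ∀ i < d,
        Subsingleton (Abelian.Ext N (ModuleCat.of S (QuotSMulTop (φ x) M)) i) := by
      intro i hi
      have zero1 := AddCommGrpCat.isZero_of_iff_subsingleton.mpr (hext i (by omega))
      have zero2 := AddCommGrpCat.isZero_of_iff_subsingleton.mpr (hext (i + 1) (by omega))
      exact AddCommGrpCat.subsingleton_of_isZero <| ShortComplex.Exact.isZero_of_both_zeros
        ((Abelian.Ext.covariant_sequence_exact₃' N hxreg.smulShortComplex_shortExact) i (i + 1) rfl)
        (zero1.eq_zero_of_src _) (zero2.eq_zero_of_tgt _)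
    obtain ⟨rs, hlen, hmem, hrs⟩ := ih _ hext'
    exact ⟨x :: rs, by simp [hlen], by simpa [hx] using hmem,
      (RingTheory.Sequence.isWeaklyRegular_cons_iff _ _ _).2 ⟨hxreg, hrs⟩⟩

/-- Let `N` be a direct summand of `M` viewed as an `R`-module through `φ : R → S`. If the image of
`rs` under `φ` is weakly regular on `M`, then `rs` is weakly regular on `N`. The restriction of
scalars is kept implicit: `ι` and `π` are additive maps compatible with `φ`. -/
theorem isWeaklyRegular_of_retract {R S : Type*} [CommRing R] [CommRing S] (φ : R →+* S)
    {N M : Type*} [AddCommGroup N] [Module R N] [AddCommGroup M] [Module S M]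
    (ι : N →+ M) (hι : ∀ r n, ι (r • n) = φ r • ι n)
    (π : M →+ N) (hπ : ∀ r x, π (φ r • x) = r • π x) (hπι : ∀ n, π (ι n) = n)
    {rs : List R} (h : RingTheory.Sequence.IsWeaklyRegular M (rs.map φ)) :
    RingTheory.Sequence.IsWeaklyRegular N rs := by
  have hιmem : ∀ (I : Ideal R) (n : N), n ∈ (I • ⊤ : Submodule R N) →
      ι n ∈ (I.map φ • ⊤ : Submodule S M) := by
    intro I n hn
    induction hn using Submodule.smul_induction_on' with
    | smul r hr n hn =>
      rw [hι]
      exact Submodule.smul_mem_smul (Ideal.mem_map_of_mem φ hr) trivial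
    | add a _ b _ ha hb => rw [map_add]; exact add_mem ha hb
  have hπmem : ∀ (I : Ideal R) (x : M), x ∈ (I.map φ • ⊤ : Submodule S M) →
      π x ∈ (I • ⊤ : Submodule R N) := by
    intro I x hx
    induction hx using Submodule.smul_induction_on' with
    | smul s hs x hx =>
      clear hx
      induction hs using Submodule.span_induction generalizing x with
      | mem s hs =>
        obtain ⟨r, hr, rfl⟩ := hs
        rw [hπ]
        exact Submodule.smul_mem_smul hr trivial
      | zero => simp
      | add s t _ _ hs ht => rw [add_smul, map_add]; exact add_mem (hs x) (ht x)
      | smul a s _ hs => rw [smul_eq_mul, mul_comm, mul_smul]; exact hs (a • x)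
    | add a _ b _ ha hb => rw [map_add]; exact add_mem ha hb
  constructor
  intro i hi
  rw [isSMulRegular_quotient_iff_mem_of_smul_mem]
  intro n hn
  have hreg := h.regular_mod_prev i (by simpa using hi)
  rw [isSMulRegular_quotient_iff_mem_of_smul_mem, ← List.map_take, ← Ideal.map_ofList] at hreg
  have := hιmem _ _ hn
  rw [hι] at this
  rw [← hπι n]
  exact hπmem _ _ (hreg _ (by simpa using this))

theorem length_le_supportDim {R : Type*} [CommRing R] {M : Type*} [AddCommGroup M] [Module R M]
    [Module.Finite R M] (rs : List R) (h : RingTheory.Sequence.IsRegular M rs) :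
    ((rs.length : ℕ∞) : WithBot ℕ∞) ≤ Module.supportDim R M := by
  induction rs generalizing M with
  | nil =>
    have := h.nontrivial
    have := (Module.nonempty_support_of_nontrivial (R := R) (M := M)).to_subtype
    simpa [Module.supportDim] using Order.krullDim_nonneg (α := Module.support R M)
  | cons x rs ih =>
    obtain ⟨hx, hrs⟩ := (RingTheory.Sequence.isRegular_cons_iff M _ _).1 h
    refine le_trans ?_ (Module.supportDim_quotSMulTop_succ_le_of_notMem_minimalPrimes
      (fun _ => hx.notMem_of_mem_minimalPrimes))
    have := ih hrs
    simpa using add_le_add_left this 1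

/-! ### Expansion and contraction of exponents for monomial ideals -/

section Poly
variable {K : Type} [Field K] {n : ℕ}

/-- The `K`-linear map `x^(k b) ↦ x^b` that sends every monomial whose exponent vector is not divisible
by `k` to `0`; it is a left inverse of `expand k : x_i ↦ x_i^k`. -/
noncomputable def contractK (K : Type) [Field K] (n k : ℕ) : MvPoly K (Fin n) →ₗ[K] MvPoly K (Fin n) :=
  (basisMonomials (Fin n) K).constr K fun a =>
    open Classical in if ∃ b, a = k • b then monomial (a.mapRange (· / k) (Nat.zero_div k)) 1 else 0

theorem contractK_smul {k : ℕ} (hk : 0 < k) (b : Fin n →₀ ℕ) (r : K) :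
    contractK K n k (monomial (k • b) r) = monomial b r := by
  have h1 : monomial (k • b) r = r • basisMonomials (Fin n) K (k • b) := by
    simp [smul_monomial]
  rw [h1, map_smul, contractK, Module.Basis.constr_basis, if_pos ⟨b, rfl⟩, smul_monomial]
  have : (k • b).mapRange (· / k) (Nat.zero_div k) = b := by
    ext i; simp [hk]
  simp [this]

theorem contractK_of_not {k : ℕ} (a : Fin n →₀ ℕ) (ha : ¬ ∃ b, a = k • b) (r : K) :
    contractK K n k (monomial a r) = 0 := by
  have h1 : monomial a r = r • basisMonomials (Fin n) K a := by
    simp [smul_monomial]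
  rw [h1, map_smul, contractK, Module.Basis.constr_basis, if_neg ha, smul_zero]

/-- `contractK` is linear over the polynomial ring acting on its source through `expand k`. -/
theorem contractK_expand_mul {k : ℕ} (hk : 0 < k) (f g : MvPoly K (Fin n)) :
    contractK K n k (expand k f * g) = f * contractK K n k g := by
  induction f using MvPolynomial.induction_on' with
  | add f₁ f₂ h₁ h₂ => simp only [map_add, add_mul, h₁, h₂]
  | monomial b r =>
    induction g using MvPolynomial.induction_on' with
    | add g₁ g₂ h₁ h₂ => simp only [map_add, mul_add, h₁, h₂]
    | monomial a s =>
      rw [expand_monomial, monomial_mul]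
      by_cases ha : ∃ c, a = k • c
      · obtain ⟨c, rfl⟩ := ha
        rw [← smul_add, contractK_smul hk, contractK_smul hk, monomial_mul]
      · rw [contractK_of_not a ha, mul_zero, contractK_of_not]
        rintro ⟨c, hc⟩
        refine ha ⟨c - b, ?_⟩
        ext i
        have := DFunLike.congr_fun hc i
        simp only [Finsupp.coe_add, Finsupp.coe_smul, Pi.add_apply, Pi.smul_apply, smul_eq_mul,
          Finsupp.coe_tsub, Pi.sub_apply] at this ⊢
        rw [Nat.mul_sub]
        omega

theorem contractK_expand {k : ℕ} (hk : 0 < k) (f : MvPoly K (Fin n)) :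
    contractK K n k (expand k f) = f := by
  have h := contractK_expand_mul hk f 1
  have h1 : contractK K n k 1 = 1 := by
    simpa using contractK_smul (K := K) (n := n) hk 0 1
  rwa [mul_one, h1, mul_one] at h

theorem isPrime_span_X_image (T : Set (Fin n)) :
    (Ideal.span (X '' T) : Ideal (MvPoly K (Fin n))).IsPrime := by
  classical
  let ψ : MvPoly K (Fin n) →ₐ[K] MvPoly K (Fin n) := aeval fun i => if i ∈ T then 0 else X i
  have : Ideal.span (X '' T) = RingHom.ker ψ := by
    apply le_antisymm
    · rw [Ideal.span_le]
      rintro _ ⟨i, hi, rfl⟩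
      simp [RingHom.mem_ker, ψ, hi]
    · intro f hf
      have hψ : (Ideal.Quotient.mkₐ K (Ideal.span (X '' T))).comp ψ =
          Ideal.Quotient.mkₐ K (Ideal.span (X '' T)) := by
        ext i
        by_cases hi : i ∈ T
        · have : (Ideal.Quotient.mkₐ K (Ideal.span (X '' T))) (X i : MvPoly K (Fin n)) = 0 :=
            Ideal.Quotient.eq_zero_iff_mem.2 (Ideal.subset_span ⟨i, hi, rfl⟩)
          simp [ψ, hi, this]
        · simp [ψ, hi]
      have h := DFunLike.congr_fun hψ f
      rw [AlgHom.comp_apply, (RingHom.mem_ker).1 hf, map_zero] at h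
      exact Ideal.Quotient.eq_zero_iff_mem.1 h.symm
  rw [this]
  exact RingHom.ker_isPrime _

/-- The monomials of an element of the radical are divisible by the squarefree part of some
generator: otherwise the ideal lies in the prime generated by the variables not dividing `x^a`. -/
theorem exists_support_subset_of_mem_radical (S : Set (Fin n →₀ ℕ)) (f : MvPoly K (Fin n))
    (hf : f ∈ (Ideal.span (mono K '' S)).radical) (a : Fin n →₀ ℕ) (ha : a ∈ f.support) :
    ∃ s ∈ S, s.support ⊆ a.support := by
  by_contra! h
  have hle : Ideal.span (mono K '' S) ≤
      Ideal.span (X '' {i | a i = 0} : Set (MvPoly K (Fin n))) := by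
    rw [Ideal.span_le]
    rintro _ ⟨s, hs, rfl⟩
    obtain ⟨i, hi, hia⟩ := Finset.not_subset.1 (h s hs)
    rw [SetLike.mem_coe, mem_ideal_span_X_image]
    intro m hm
    obtain rfl : m = s := by
      simpa using support_monomial_subset hm
    exact ⟨i, by simpa using hia, by simpa using hi⟩
  have hmem := (isPrime_span_X_image (K := K) {i | a i = 0}).radical_le_iff.2 hle hf
  obtain ⟨i, hi, hi'⟩ := mem_ideal_span_X_image.1 hmem a ha
  exact hi' hi

theorem expand_mem_of_mem_radical (S : Set (Fin n →₀ ℕ)) (k : ℕ) (hk : ∀ s ∈ S, ∀ i, s i ≤ k)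
    (f : MvPoly K (Fin n)) (hf : f ∈ (Ideal.span (mono K '' S)).radical) :
    expand k f ∈ Ideal.span (mono K '' S) := by
  rw [f.as_sum, map_sum]
  refine Ideal.sum_mem _ fun a ha => ?_
  obtain ⟨s, hs, hsa⟩ := exists_support_subset_of_mem_radical S f hf a ha
  rw [expand_monomial]
  refine (mem_ideal_span_monomial_image (s := S)).2 fun m hm => ⟨s, hs, ?_⟩
  obtain rfl : m = k • a := by simpa using support_monomial_subset hm
  intro i
  by_cases hi : s i = 0
  · simp [hi]
  · have hai : a i ≠ 0 := by simpa using hsa (by simpa using hi)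
    exact (hk s hs i).trans (Nat.le_mul_of_pos_right k (Nat.pos_of_ne_zero hai))

/-- For large `k`, `expand k` induces a map `R/rad(I) → R/I`. By noetherianity finitely many monomials
generate `I`, and any positive `k` bounding their exponents works. -/
theorem exists_expand_mem (I : Ideal (MvPoly K (Fin n))) (hI : IsMonomialIdeal K I) :
    ∃ k, 0 < k ∧ ∀ f ∈ I.radical, expand k f ∈ I := by
  classical
  obtain ⟨S, rfl⟩ := hI
  obtain ⟨t, htS, ht⟩ := (Submodule.fg_span_iff_fg_span_finset_subset _).1
    (IsNoetherian.noetherian (Ideal.span (mono K '' S)))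
  obtain ⟨S', -, rfl⟩ := Finset.subset_set_image_iff.1 htS
  have ht' : Ideal.span (mono K '' S) = Ideal.span (mono K '' (S' : Set (Fin n →₀ ℕ))) := by
    rw [← Finset.coe_image]
    exact ht
  obtain ⟨b, hb⟩ := S'.bddAbove
  refine ⟨(∑ i, b i) + 1, Nat.succ_pos _, fun f hf => ?_⟩
  rw [ht'] at hf ⊢
  refine expand_mem_of_mem_radical _ _ (fun s hs i => ?_) f hf
  have h1 : s i ≤ b i := hb hs i
  have h2 : b i ≤ ∑ i, b i := Finset.single_le_sum (fun _ _ => Nat.zero_le _) (Finset.mem_univ i)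
  omega

/-- `contractK` induces a map `R/I → R/rad(I)`, since `x^(k b) = (x^b)^k`. -/
theorem contractK_mem_radical (I : Ideal (MvPoly K (Fin n))) (hI : IsMonomialIdeal K I)
    {k : ℕ} (hk : 0 < k) (f : MvPoly K (Fin n)) (hf : f ∈ I) : contractK K n k f ∈ I.radical := by
  obtain ⟨S, rfl⟩ := hI
  rw [f.as_sum, map_sum]
  refine Ideal.sum_mem _ fun a ha => ?_
  by_cases hb : ∃ b, a = k • b
  · obtain ⟨b, rfl⟩ := hb
    rw [contractK_smul hk]
    refine ⟨k, (mem_ideal_span_monomial_image (s := S)).2 fun m hm => ?_⟩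
    rw [monomial_pow] at hm
    obtain rfl : m = k • b := by simpa using support_monomial_subset hm
    exact (mem_ideal_span_monomial_image (s := S)).1 hf _ ha
  · rw [contractK_of_not a hb]
    exact zero_mem _

theorem maxIdeal_isPrime : (maxIdeal K (Fin n)).IsPrime := by
  rw [maxIdeal, ← Set.image_univ]
  exact isPrime_span_X_image _

theorem le_maxIdeal (I : Ideal (MvPoly K (Fin n))) (hI : IsMonomialIdeal K I) (h : I ≠ ⊤) :
    I ≤ maxIdeal K (Fin n) := by
  obtain ⟨S, rfl⟩ := hI
  rw [Ideal.span_le]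
  rintro _ ⟨s, hs, rfl⟩
  rw [maxIdeal, ← Set.image_univ, SetLike.mem_coe, mem_ideal_span_X_image]
  intro m hm
  obtain rfl : m = s := by simpa using support_monomial_subset hm
  by_contra! h0
  apply h
  rw [Ideal.eq_top_iff_one]
  refine Ideal.subset_span ⟨m, hs, ?_⟩
  have : m = 0 := by ext i; simpa using h0 i
  rw [this]; rfl
end Poly

/-! ### Depth of quotients of the polynomial ring -/

section Depth
variable {K : Type} [Field K] {n : ℕ}

theorem natCast_le_depthQ_iff_s8 (I : Ideal (MvPoly K (Fin n))) (d : ℕ) :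
    (d : ℕ∞) ≤ depthQ K (Fin n) I ↔ ∀ i < d, Subsingleton (Abelian.Ext
      (ModuleCat.of (MvPoly K (Fin n)) (MvPoly K (Fin n) ⧸ maxIdeal K (Fin n)))
      (ModuleCat.of (MvPoly K (Fin n)) (MvPoly K (Fin n) ⧸ I)) i) := by
  simp only [subsingleton_abelianExt_iff, depthQ, le_sInf_iff, Set.mem_ofPred_eq]
  constructor
  · intro h i hi
    by_contra hns
    have := h i ⟨i, rfl, not_subsingleton_iff_nontrivial.1 hns⟩
    exact absurd (Nat.cast_le.1 this) (by omega)
  · rintro h _ ⟨i, rfl, hi⟩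
    by_contra hlt
    have := h i (by simpa using hlt)
    exact not_subsingleton_iff_nontrivial.2 hi this

theorem maxIdeal_smul_top_lt (I : Ideal (MvPoly K (Fin n))) (hI : I ≤ maxIdeal K (Fin n)) :
    maxIdeal K (Fin n) • (⊤ : Submodule (MvPoly K (Fin n)) (MvPoly K (Fin n) ⧸ I)) < ⊤ := by
  rw [lt_top_iff_ne_top]
  intro h
  have hle : maxIdeal K (Fin n) • (⊤ : Submodule (MvPoly K (Fin n)) (MvPoly K (Fin n) ⧸ I)) ≤
      Submodule.map I.mkQ (maxIdeal K (Fin n)) := by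
    rw [Submodule.smul_le]
    intro r hr x _
    obtain ⟨y, rfl⟩ := I.mkQ_surjective x
    exact ⟨r * y, Ideal.mul_mem_right _ _ hr, map_smul I.mkQ r y⟩
  have h1 : I.mkQ 1 ∈ Submodule.map I.mkQ (maxIdeal K (Fin n)) := hle (by rw [h]; trivial)
  obtain ⟨y, hy, hy1⟩ := h1
  have h2 : y - 1 ∈ maxIdeal K (Fin n) := hI ((Submodule.Quotient.eq I).1 hy1)
  have : (1 : MvPoly K (Fin n)) ∈ maxIdeal K (Fin n) := by
    simpa using sub_mem hy h2
  exact maxIdeal_isPrime.ne_top ((Ideal.eq_top_iff_one _).2 this)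

/-- The Rees theorem for `depthQ`. -/
theorem natCast_le_depthQ_iff_exists_isRegular (I : Ideal (MvPoly K (Fin n)))
    (hI : I ≤ maxIdeal K (Fin n)) (d : ℕ) :
    (d : ℕ∞) ≤ depthQ K (Fin n) I ↔ ∃ rs : List (MvPoly K (Fin n)), rs.length = d ∧
      (∀ r ∈ rs, r ∈ maxIdeal K (Fin n)) ∧
      RingTheory.Sequence.IsRegular (MvPoly K (Fin n) ⧸ I) rs := by
  rw [natCast_le_depthQ_iff_s8]
  have hsupp : Module.support (MvPoly K (Fin n)) (MvPoly K (Fin n) ⧸ maxIdeal K (Fin n)) =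
      PrimeSpectrum.zeroLocus (maxIdeal K (Fin n)) := by
    rw [Module.support_eq_zeroLocus, Ideal.annihilator_quotient]
  constructor
  · exact ModuleCat.exists_isRegular_of_exists_subsingleton_ext _ d _
      (maxIdeal_smul_top_lt I hI) _ hsupp
  · rintro ⟨rs, rfl, hmem, hreg⟩
    exact ModuleCat.subsingleton_ext_of_exists_isRegular _ _ hsupp.subset _
      (maxIdeal_smul_top_lt I hI) rs hmem hreg

theorem isRegular_of_isWeaklyRegular (I : Ideal (MvPoly K (Fin n))) (hI : I ≤ maxIdeal K (Fin n))
    {rs : List (MvPoly K (Fin n))} (hmem : ∀ r ∈ rs, r ∈ maxIdeal K (Fin n))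
    (h : RingTheory.Sequence.IsWeaklyRegular (MvPoly K (Fin n) ⧸ I) rs) :
    RingTheory.Sequence.IsRegular (MvPoly K (Fin n) ⧸ I) rs := by
  refine ⟨h, fun htop => (maxIdeal_smul_top_lt I hI).ne (top_le_iff.1 ?_)⟩
  have hle : Ideal.ofList rs ≤ maxIdeal K (Fin n) := Ideal.span_le.2 fun r hr => hmem r hr
  exact htop.le.trans (Submodule.smul_mono_left hle)

theorem depthQ_le_depthQ_radical (I : Ideal (MvPoly K (Fin n))) (hI : IsMonomialIdeal K I)
    (hIm : I ≤ maxIdeal K (Fin n)) :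
    depthQ K (Fin n) I ≤ depthQ K (Fin n) I.radical := by
  have hJm : I.radical ≤ maxIdeal K (Fin n) :=
    maxIdeal_isPrime.radical_le_iff.2 hIm
  rw [← ENat.forall_natCast_le_iff_le]
  intro d hd
  obtain ⟨rs₀, rfl, hmem₀, hreg₀⟩ := (natCast_le_depthQ_iff_exists_isRegular I hIm d).1 hd
  obtain ⟨k, hk, hexp⟩ := exists_expand_mem I hI
  let φ : MvPoly K (Fin n) →+* MvPoly K (Fin n) := (expand k).toRingHom
  have hrad : maxIdeal K (Fin n) ≤ ((maxIdeal K (Fin n)).map φ).radical := by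
    conv_lhs => rw [maxIdeal]
    rw [Ideal.span_le]
    rintro _ ⟨i, rfl⟩
    refine ⟨k, ?_⟩
    have : φ (X i) = X i ^ k := expand_X k i
    rw [← this]
    exact Ideal.mem_map_of_mem _ (Ideal.subset_span ⟨i, rfl⟩)
  have hsupp : Module.support (MvPoly K (Fin n))
      (MvPoly K (Fin n) ⧸ (maxIdeal K (Fin n)).map φ) ⊆
      PrimeSpectrum.zeroLocus (maxIdeal K (Fin n)) := by
    rw [Module.support_eq_zeroLocus, Ideal.annihilator_quotient,
      PrimeSpectrum.zeroLocus_subset_zeroLocus_iff]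
    exact hrad
  have hext := ModuleCat.subsingleton_ext_of_exists_isRegular (maxIdeal K (Fin n))
    (ModuleCat.of _ (MvPoly K (Fin n) ⧸ (maxIdeal K (Fin n)).map φ)) hsupp
    (ModuleCat.of _ (MvPoly K (Fin n) ⧸ I)) (maxIdeal_smul_top_lt I hIm) rs₀ hmem₀ hreg₀
  obtain ⟨rs, hlen, hmem, hreg⟩ := exists_isWeaklyRegular_map φ (maxIdeal K (Fin n)) _ _ hext
  refine (natCast_le_depthQ_iff_exists_isRegular _ hJm _).2
    ⟨rs, hlen, hmem, isRegular_of_isWeaklyRegular _ hJm hmem ?_⟩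
  let ι : (MvPoly K (Fin n) ⧸ I.radical) →+ (MvPoly K (Fin n) ⧸ I) :=
    (Ideal.quotientMap I φ (fun f hf => hexp f hf)).toAddMonoidHom
  let π : (MvPoly K (Fin n) ⧸ I) →+ (MvPoly K (Fin n) ⧸ I.radical) :=
    QuotientAddGroup.map I.toAddSubgroup I.radical.toAddSubgroup
      (contractK K n k).toAddMonoidHom (fun f hf => contractK_mem_radical I hI hk f hf)
  refine isWeaklyRegular_of_retract φ ι ?_ π ?_ ?_ hreg
  · intro r x
    obtain ⟨x, rfl⟩ := Ideal.Quotient.mk_surjective x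
    exact congrArg (Ideal.Quotient.mk I) (map_mul φ r x)
  · intro r x
    obtain ⟨x, rfl⟩ := Ideal.Quotient.mk_surjective x
    exact congrArg (Ideal.Quotient.mk I.radical) (contractK_expand_mul hk r x)
  · intro x
    obtain ⟨x, rfl⟩ := Ideal.Quotient.mk_surjective x
    exact congrArg (Ideal.Quotient.mk I.radical) (contractK_expand hk x)

theorem depthQ_le_ringKrullDim (I : Ideal (MvPoly K (Fin n))) (hI : I ≤ maxIdeal K (Fin n)) :
    ((depthQ K (Fin n) I : ℕ∞) : WithBot ℕ∞) ≤ ringKrullDim (MvPoly K (Fin n) ⧸ I) := by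
  have key : ∀ d : ℕ, (d : ℕ∞) ≤ depthQ K (Fin n) I →
      ((d : ℕ∞) : WithBot ℕ∞) ≤ ringKrullDim (MvPoly K (Fin n) ⧸ I) := by
    intro d hd
    obtain ⟨rs, rfl, -, hreg⟩ := (natCast_le_depthQ_iff_exists_isRegular I hI d).1 hd
    rw [← Module.supportDim_quotient_eq_ringKrullDim]
    exact length_le_supportDim rs hreg
  generalize ringKrullDim (MvPoly K (Fin n) ⧸ I) = D at key
  induction D with
  | bot => simpa using key 0 (by simp)
  | coe D =>
    rw [WithBot.coe_le_coe, ← ENat.forall_natCast_le_iff_le]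
    exact fun d hd => WithBot.coe_le_coe.1 (key d hd)

end Depth

/-- `depth R/rad(I) ≥ depth R/I` for a monomial ideal `I`; in particular
the radical of a Cohen–Macaulay monomial ideal is Cohen–Macaulay. -/
theorem stmt8 (K : Type) [Field K] (n : ℕ) (I : Ideal (MvPoly K (Fin n)))
    (hI : IsMonomialIdeal K I) :
    depthQ K (Fin n) I.radical ≥ depthQ K (Fin n) I ∧
    (IsCMQ K (Fin n) I → IsCMQ K (Fin n) I.radical) := by
  have hdim : ringKrullDim (MvPoly K (Fin n) ⧸ I.radical) = ringKrullDim (MvPoly K (Fin n) ⧸ I) := by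
    rw [ringKrullDim_quotient, ringKrullDim_quotient, PrimeSpectrum.zeroLocus_radical]
  by_cases hI1 : I = ⊤
  · subst hI1
    rw [Ideal.radical_top]
    exact ⟨le_rfl, id⟩
  · have hIm := le_maxIdeal I hI hI1
    have hJm : I.radical ≤ maxIdeal K (Fin n) :=
      maxIdeal_isPrime.radical_le_iff.2 hIm
    have hdepth := depthQ_le_depthQ_radical I hI hIm
    refine ⟨hdepth, fun hCM => ?_⟩
    apply le_antisymm (depthQ_le_ringKrullDim _ hJm)
    rw [hdim, ← show _ = _ from hCM]
    exact WithBot.coe_le_coe.2 hdepth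
end

section
/- Let I and J be monomial ideals of R and let x_i be a variable. If (I : x_i) = J and I + (x_i) = J + (x_i), then: (i) reg(R/J) ≤ reg(R/I) ≤ reg(R/J) + 1; (ii) depth(R/J) − 1 ≤ depth(R/I) ≤ depth(R/J). -/
/-!
Write `x = x_i`. The hypotheses say that `J` is `(I : x)` and that `I` and `J` agree modulo `x`.
For monomial ideals this means that `R/I` is obtained from `R/J` by a relabelling of
`x`-degrees: `R/I = R/(J + (x)) ⊕ x · R/J` as modules over the polynomial ring in the other
variables, so the layer of `x`-degree `0` is repeated once more.

*Depth.* In fact `depth R/I = depth R/J`. `Ext` out of `R/m` is computed by the Koszul complex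
on the variables, and this complex is the cone of multiplication by `x` on a complex whose
differentials have entries free of `x`. Vanishing of its cohomology with coefficients in `R/I` is
compared with that for `R/J` through the decomposition above (`depthQ_eq`).

*Regularity.* A graded free resolution of `R/I` with twists bounded by `r` is first refined to one
which is bigraded by total degree and `x`-degree and satisfies the same bound: this is done one
step at a time, carrying chain maps to and from the given resolution together with a homotopy, so
that the new syzygies have generators of controlled degree (`Stage`, `exists_next`). In a bigraded
resolution the `x`-degrees can be relabelled along a monotone map of `ℕ`. Lowering the positive
`x`-degrees by one turns a resolution of `R/I` into one of `R/J` without raising any twist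
(`resBound_colon`); raising them by one turns a resolution of `R/J` into one of `R/I` with twists
raised by at most one (`resBound_of_colon`). Since the regularity is the least bound, both
inequalities follow (`cmreg_le`).
-/

open MvPolynomial CategoryTheory Opposite

noncomputable section

variable (K : Type) [Field K] (σ : Type)

/-- The degree-`e` homogeneous component condition, for an integer `e`
(for `e < 0` the component is zero). -/
def HomogComp (e : ℤ) (p : MvPoly K σ) : Prop :=
  if 0 ≤ e then p ∈ homogeneousSubmodule σ K e.toNat else p = 0

/-- `v` is a homogeneous element of degree `e` of the graded free module
`⊕_j R(-dg j)`. -/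
def IsHomogVec {m : ℕ} (dg : Fin m → ℤ) (e : ℤ) (v : Fin m → MvPoly K σ) : Prop :=
  ∀ j, HomogComp K σ (e - dg j) (v j)

/-- The degree-`e` homogeneous component of `R/I`. -/
def QuotComp (I : Ideal (MvPoly K σ)) (e : ℤ) : Submodule K (MvPoly K σ ⧸ I) :=
  if 0 ≤ e then
    Submodule.map (Ideal.Quotient.mkₐ K I).toLinearMap (homogeneousSubmodule σ K e.toNat)
  else ⊥

/-- A graded free resolution of `R/I` by finitely generated graded free modules
`F i = ⊕_{j < rk i} R(-dg i j)`, with degree preserving (degree zero) maps. -/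
structure GradedFreeRes (I : Ideal (MvPoly K σ)) where
  rk : ℕ → ℕ
  dg : (i : ℕ) → Fin (rk i) → ℤ
  dmap : (i : ℕ) → ((Fin (rk (i + 1)) → MvPoly K σ) →ₗ[MvPoly K σ] (Fin (rk i) → MvPoly K σ))
  aug : (Fin (rk 0) → MvPoly K σ) →ₗ[MvPoly K σ] (MvPoly K σ ⧸ I)
  aug_surj : Function.Surjective aug
  exact0 : Function.Exact (dmap 0) aug
  exactS : ∀ i, Function.Exact (dmap (i + 1)) (dmap i)
  graded : ∀ i (e : ℤ) v, IsHomogVec K σ (dg (i + 1)) e v → IsHomogVec K σ (dg i) e (dmap i v)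
  aug_graded : ∀ (e : ℤ) v, IsHomogVec K σ (dg 0) e v → aug v ∈ QuotComp K σ I e

/-- `R/I` admits a graded free resolution all of whose twists `dg i j` satisfy
`dg i j - i ≤ r`. -/
def ResBound (I : Ideal (MvPoly K σ)) (r : ℤ) : Prop :=
  ∃ F : GradedFreeRes K σ I, ∀ i j, F.dg i j - i ≤ r

open Classical in
/-- The Castelnuovo–Mumford regularity of `R/I`: the least `r` bounding the twists of
a graded free resolution of `R/I` (with the convention `⊥ = -∞` for the zero module). -/
def CMreg (I : Ideal (MvPoly K σ)) : WithBot ℤ :=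
  if h : ∃ r : ℤ, ResBound K σ I r ∧ ∀ s : ℤ, ResBound K σ I s → r ≤ s
  then ((h.choose : ℤ) : WithBot ℤ) else ⊥

variable {n : ℕ}

end

namespace Stmt9

noncomputable section

/-! ### Expansion in powers of one variable -/

section Expansion

variable {K : Type} [Field K] {n : ℕ}

/-- `K[x_1,…,x_n] → K[x_1,…,x_n][T]` sending `x_i` to `T` and fixing the other variables; the
coefficients of the image of `p` are the coefficients of `p` as a polynomial in `x_i`. -/
def tau (i : Fin n) : MvPoly K (Fin n) →ₐ[K] Polynomial (MvPoly K (Fin n)) :=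
  MvPolynomial.aeval (fun j => if j = i then Polynomial.X else Polynomial.C (X j))

/-- The coefficient of `x_i ^ a` in `p`, a polynomial in the variables other than `x_i`. -/
def cf (i : Fin n) (a : ℕ) : MvPoly K (Fin n) →ₗ[K] MvPoly K (Fin n) :=
  ((Polynomial.lcoeff (MvPoly K (Fin n)) a).restrictScalars K) ∘ₗ (tau i).toLinearMap

/-- The polynomials that do not involve `x_i`. -/
def Free (i : Fin n) (s : MvPoly K (Fin n)) : Prop := tau i s = Polynomial.C s

variable (i : Fin n)

theorem cf_apply (a : ℕ) (p : MvPoly K (Fin n)) : cf i a p = (tau i p).coeff a := rfl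

theorem tau_X_self : tau (K := K) i (X i) = Polynomial.X := by simp [tau]

theorem free_X {j : Fin n} (h : j ≠ i) : Free (K := K) i (X j) := by simp [Free, tau, h]

theorem free_zero : Free (K := K) i 0 := by simp [Free]

theorem free_one : Free (K := K) i 1 := by simp [Free]

theorem Free.neg {i : Fin n} {s : MvPoly K (Fin n)} (h : Free i s) : Free i (-s) := by
  unfold Free at *; simp [h]

theorem cf_free_mul {s : MvPoly K (Fin n)} (hs : Free i s) (a : ℕ) (p : MvPoly K (Fin n)) :
    cf i a (s * p) = s * cf i a p := by
  rw [cf_apply, cf_apply, map_mul, hs, Polynomial.coeff_C_mul]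

theorem cf_X_pow_mul (a b : ℕ) (p : MvPoly K (Fin n)) :
    cf i a (X i ^ b * p) = if b ≤ a then cf i (a - b) p else 0 := by
  rw [cf_apply, cf_apply, map_mul, map_pow, tau_X_self, Polynomial.coeff_X_pow_mul']

theorem free_cf (a : ℕ) (p : MvPoly K (Fin n)) : Free i (cf i a p) := by
  have h : (Polynomial.mapAlgHom (tau (K := K) i)).comp (tau i) =
      (Polynomial.mapAlgHom (Polynomial.CAlgHom (R := K) (A := MvPoly K (Fin n)))).comp
        (tau i) := by
    apply MvPolynomial.algHom_ext
    intro j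
    by_cases hj : j = i
    · subst hj; simp [tau_X_self]
    · have h1 : tau (K := K) i (X j) = Polynomial.C (X j) := free_X i hj
      simp [h1]
  have h2 := congrArg (fun q => Polynomial.coeff q a) (DFunLike.congr_fun h p)
  simpa [Polynomial.coeff_map] using! h2

theorem eval_tau (p : MvPoly K (Fin n)) : (tau i p).eval (X i) = p := by
  have h : ((Polynomial.aeval (R := MvPoly K (Fin n)) (X i : MvPoly K (Fin n))).restrictScalars
      K).comp (tau (K := K) i) = AlgHom.id K _ := by
    apply MvPolynomial.algHom_ext
    intro j
    by_cases hj : j = i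
    · subst hj; simp [tau_X_self]
    · have h1 : tau (K := K) i (X j) = Polynomial.C (X j) := free_X i hj
      simp [h1]
  have h2 := DFunLike.congr_fun h p
  simpa [Polynomial.aeval_def, Polynomial.eval₂_eq_eval_map] using h2

theorem sum_cf (p : MvPoly K (Fin n)) {T : ℕ} (hT : (tau i p).natDegree < T) :
    ∑ a ∈ Finset.range T, X i ^ a * cf i a p = p := by
  conv_rhs => rw [← eval_tau i p, Polynomial.eval_eq_sum_range' hT]
  exact Finset.sum_congr rfl fun a _ => mul_comm _ _

theorem cf_eq_zero (p : MvPoly K (Fin n)) {a : ℕ} (h : (tau i p).natDegree < a) :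
    cf i a p = 0 := Polynomial.coeff_eq_zero_of_natDegree_lt h

theorem cf_free {s : MvPoly K (Fin n)} (hs : Free i s) (a : ℕ) :
    cf i a s = if a = 0 then s else 0 := by
  rw [cf_apply, hs, Polynomial.coeff_C]

theorem cf_monomial (a : ℕ) (m : Fin n →₀ ℕ) (c : K) :
    cf i a (monomial m c) = if a = m i then monomial (m.erase i) c else 0 := by
  have hfree : Free i (monomial (m.erase i) c : MvPoly K (Fin n)) := by
    unfold Free tau
    rw [MvPolynomial.aeval_monomial, monomial_eq, map_mul]
    congr 1
    rw [Finsupp.prod, Finsupp.prod, map_prod]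
    refine Finset.prod_congr rfl fun j hj => ?_
    have hj : j ≠ i := by
      rintro rfl
      simp at hj
    simp [hj]
  have h : (monomial m c : MvPoly K (Fin n)) = X i ^ (m i) * monomial (m.erase i) c := by
    rw [X_pow_eq_monomial, monomial_mul, one_mul, Finsupp.single_add_erase]
  rw [h, cf_X_pow_mul, cf_free i hfree]
  rcases lt_trichotomy a (m i) with h | h | h
  · rw [if_neg (by omega), if_neg (by omega)]
  · subst h; simp
  · rw [if_pos (by omega), if_neg (by omega), if_neg (by omega)]

/-- Setting `x_i = 0`. -/
def eps (i : Fin n) : MvPoly K (Fin n) →+* MvPoly K (Fin n) :=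
  Polynomial.constantCoeff.comp (tau i).toRingHom

theorem eps_eq (p : MvPoly K (Fin n)) : eps i p = cf i 0 p := rfl

theorem eps_X : eps (K := K) i (X i) = 0 := by
  rw [eps_eq, cf_apply, tau_X_self, Polynomial.coeff_X_zero]

theorem eps_free {s : MvPoly K (Fin n)} (hs : Free i s) : eps i s = s := by
  rw [eps_eq, cf_free i hs, if_pos rfl]

theorem exists_eq_eps_add (p : MvPoly K (Fin n)) : ∃ q, p = eps i p + X i * q := by
  have h := sum_cf i p (T := (tau i p).natDegree + 1) (by omega)
  rw [Finset.sum_range_succ'] at h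
  refine ⟨∑ a ∈ Finset.range (tau i p).natDegree, X i ^ a * cf i (a + 1) p, ?_⟩
  rw [Finset.mul_sum, eps_eq]
  conv_lhs => rw [← h]
  rw [add_comm]
  congr 1
  · simp
  · exact Finset.sum_congr rfl fun a _ => by ring

/-- A monomial ideal is stable under every linear operator that sends each term to itself or
to zero, such as the projections to graded components. -/
theorem IsMonomialIdeal.map_mem {I : Ideal (MvPoly K (Fin n))} (hI : IsMonomialIdeal K I)
    (L : MvPoly K (Fin n) →ₗ[K] MvPoly K (Fin n))
    (hL : ∀ m c, L (monomial m c) = monomial m c ∨ L (monomial m c) = 0)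
    {p : MvPoly K (Fin n)} (hp : p ∈ I) : L p ∈ I := by
  obtain ⟨S, rfl⟩ := hI
  have hp' := MvPolynomial.mem_ideal_span_monomial_image.1 hp
  rw [p.as_sum, map_sum]
  refine Ideal.sum_mem _ fun m hm => ?_
  rcases hL m (coeff m p) with h | h
  · rw [h]
    refine MvPolynomial.mem_ideal_span_monomial_image.2 fun m' hm' => ?_
    have := MvPolynomial.support_monomial_subset hm'
    rw [Finset.mem_singleton] at this
    subst this
    exact hp' m' hm
  · rw [h]; exact Ideal.zero_mem _

theorem IsMonomialIdeal.X_pow_mul_cf_mem {I : Ideal (MvPoly K (Fin n))}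
    (hI : IsMonomialIdeal K I) (a : ℕ) {p : MvPoly K (Fin n)} (hp : p ∈ I) :
    X i ^ a * cf i a p ∈ I := by
  refine IsMonomialIdeal.map_mem hI (LinearMap.mulLeft K (X i ^ a) ∘ₗ cf i a) (fun m c => ?_) hp
  rw [LinearMap.comp_apply, cf_monomial]
  split_ifs with h
  · left
    rw [h, LinearMap.mulLeft_apply, X_pow_eq_monomial, monomial_mul, one_mul,
      Finsupp.single_add_erase]
  · right; simp

theorem IsMonomialIdeal.eps_mem {I : Ideal (MvPoly K (Fin n))}
    (hI : IsMonomialIdeal K I) {p : MvPoly K (Fin n)} (hp : p ∈ I) : eps i p ∈ I := by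
  simpa [eps_eq] using IsMonomialIdeal.X_pow_mul_cf_mem i hI 0 hp

end Expansion

/-! ### Koszul-type resolutions and `Ext` -/

section Koszul

/-- `Ext` of a module with an explicit projective resolution, in terms of linear maps. -/
theorem ext_trivial_iff {R : Type} [CommRing R] (P : ℕ → Type) [∀ j, AddCommGroup (P j)]
    [∀ j, Module R (P j)] [∀ j, Module.Projective R (P j)]
    (d : ∀ j, P (j + 1) →ₗ[R] P j) (M N : Type) [AddCommGroup M] [Module R M]
    [AddCommGroup N] [Module R N] (aug : P 0 →ₗ[R] M) (hs : Function.Surjective aug)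
    (h0 : Function.Exact (d 0) aug) (hS : ∀ j, Function.Exact (d (j + 1)) (d j)) (i : ℕ) :
    ¬ Nontrivial (((Ext R (ModuleCat R) i).obj (op (ModuleCat.of R M))).obj (ModuleCat.of R N)) ↔
      ∀ φ : P i →ₗ[R] N, φ ∘ₗ d i = 0 →
        match i, φ with
        | 0, φ => φ = 0
        | (k + 1), φ => ∃ ψ : P k →ₗ[R] N, φ = ψ ∘ₗ d k := by
  let C : ChainComplex (ModuleCat R) ℕ := ChainComplex.of (fun j => ModuleCat.of R (P j))
    (fun j => ModuleCat.ofHom (d j)) (fun j => by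
      ext v
      exact (hS j).apply_apply_eq_zero v)
  have hd : ∀ j, C.d (j + 1) j = ModuleCat.ofHom (d j) := fun j => by
    dsimp only [C, ChainComplex.of]
    exact ChainComplex.of_d _ _ _
  have hw : C.d 1 0 ≫ (ModuleCat.ofHom aug : C.X 0 ⟶ ModuleCat.of R M) = 0 := by
    rw [hd]
    ext v
    exact h0.apply_apply_eq_zero v
  let Q : ProjectiveResolution (ModuleCat.of R M) :=
    { complex := C
      projective := fun j => by
        change Projective (ModuleCat.of R (P j))
        infer_instance
      π := (ChainComplex.toSingle₀Equiv _ _).symm ⟨ModuleCat.ofHom aug, hw⟩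
      quasiIso := ⟨fun n => by
        cases n with
        | zero => 
          rw [ChainComplex.quasiIsoAt₀_iff, ShortComplex.quasiIso_iff_of_zeros']
          · constructor
            · rw [ShortComplex.moduleCat_exact_iff]
              intro v hv
              have hv' : aug v = 0 := by
                simpa using! hv
              obtain ⟨w, hw⟩ := (h0 v).1 hv'
              refine ⟨w, ?_⟩
              change (C.d 1 0) w = v
              rw [hd]
              exact hw
            · rw [ModuleCat.epi_iff_surjective]
              intro x
              obtain ⟨v, hv⟩ := hs x
              refine ⟨v, ?_⟩
              simpa using! hv
          all_goals rfl
        | succ n => 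
          rw [quasiIsoAt_iff_exactAt']
          · rw [HomologicalComplex.exactAt_iff' _ (n + 1 + 1) (n + 1) n (by simp) (by simp)]
            rw [ShortComplex.moduleCat_exact_iff]
            intro v hv
            change (C.d (n + 1) n) v = 0 at hv
            rw [hd] at hv
            obtain ⟨w, hw⟩ := (hS n v).1 hv
            refine ⟨w, ?_⟩
            change (C.d (n + 1 + 1) (n + 1)) w = v
            rw [hd]
            exact hw
          · exact ChainComplex.exactAt_succ_single_obj _ _⟩ }
  rw [not_nontrivial_iff_subsingleton]
  let e := Q.isoExt (R := R) i (ModuleCat.of R N)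
  rw [e.toLinearEquiv.toEquiv.subsingleton_congr, ← ModuleCat.isZero_iff_subsingleton,  ← HomologicalComplex.exactAt_iff_isZero_homology]
  have hdY : ∀ (j : ℕ) (φ : P j →ₗ[R] N),
      ((C.linearYonedaObj R (ModuleCat.of R N)).d j (j + 1)).hom (ModuleCat.ofHom φ) =
        ModuleCat.ofHom (φ ∘ₗ d j) := by
    intro j φ
    change C.d (j + 1) j ≫ ModuleCat.ofHom φ = _
    rw [hd]
    rfl
  cases i with
  | zero =>
    rw [HomologicalComplex.exactAt_iff' _ 0 0 1 (by simp) (by simp),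
      ShortComplex.moduleCat_exact_iff]
    constructor
    · intro h φ hφ
      obtain ⟨ψ, hψ⟩ := h (ModuleCat.ofHom φ) ((hdY 0 φ).trans (by rw [hφ]; rfl))
      have hz : (C.linearYonedaObj R (ModuleCat.of R N)).d 0 0 = 0 :=
        HomologicalComplex.shape _ _ _ (by simp)
      change ((C.linearYonedaObj R (ModuleCat.of R N)).d 0 0).hom ψ = _ at hψ
      rw [hz] at hψ
      exact (congrArg ModuleCat.Hom.hom hψ).symm
    · intro h φ hφ
      refine ⟨0, ?_⟩
      have := h (ModuleCat.Hom.hom φ) (congrArg ModuleCat.Hom.hom ((hdY 0 φ.hom).symm.trans hφ))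
      rw [map_zero]
      exact (congrArg ModuleCat.ofHom this).symm
  | succ k =>
    rw [HomologicalComplex.exactAt_iff' _ k (k + 1) (k + 2) (by simp) (by simp),
      ShortComplex.moduleCat_exact_iff]
    constructor
    · intro h φ hφ
      obtain ⟨ψ, hψ⟩ := h (ModuleCat.ofHom φ) ((hdY (k + 1) φ).trans (by rw [hφ]; rfl))
      exact ⟨ModuleCat.Hom.hom ψ, congrArg ModuleCat.Hom.hom (hψ.symm.trans (hdY k ψ.hom))⟩
    · intro h φ hφ
      obtain ⟨ψ, hψ⟩ := h (ModuleCat.Hom.hom φ)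
        (congrArg ModuleCat.Hom.hom ((hdY (k + 1) φ.hom).symm.trans hφ))
      exact ⟨ModuleCat.ofHom ψ, (hdY k ψ).trans (congrArg ModuleCat.ofHom hψ.symm)⟩

open Matrix

/-- A free resolution of `R/𝔞` given by matrices with entries in a set `S`. The module in
homological degree `j` is `R ^ ι (j + 1)`; the index type `ι 0` is empty, so that degree zero
needs no special treatment. Chain maps act on row vectors. -/
structure MatRes {R : Type} [CommRing R] (S : Set R) (𝔞 : Ideal R) where
  ι : ℕ → Type
  fin : ∀ j, Fintype (ι j)
  empty : IsEmpty (ι 0)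
  D : ∀ j, Matrix (ι (j + 1)) (ι j) R
  mem : ∀ j b a, D j b a ∈ S
  aug : (ι 1 → R) →ₗ[R] (R ⧸ 𝔞)
  surj : Function.Surjective aug
  exact0 : ∀ v, aug v = 0 ↔ ∃ w, v = w ᵥ* D 1
  exactS : ∀ j v, v ᵥ* D (j + 1) = 0 ↔ ∃ w, v = w ᵥ* D (j + 2)

attribute [instance] MatRes.fin MatRes.empty

/-- The action of a matrix over `R` on column vectors with entries in an `R`-module. -/
def cod {R N : Type} [CommRing R] [AddCommGroup N] [Module R N] {β α : Type} [Fintype α]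
    (D : Matrix β α R) (w : α → N) : β → N := fun b => ∑ a, D b a • w a

/-- `Ext^i(R/𝔞, N) = 0` means that the cochain complex `N ^ ι (• + 1)` is exact at `i`. -/
theorem MatRes.ext_iff {R : Type} [CommRing R] {S : Set R} {𝔞 : Ideal R} (Q : MatRes S 𝔞)
    (N : Type) [AddCommGroup N] [Module R N] (i : ℕ) :
    ¬ Nontrivial (((Ext R (ModuleCat R) i).obj (op (ModuleCat.of R (R ⧸ 𝔞)))).obj
      (ModuleCat.of R N)) ↔
      ∀ u : Q.ι (i + 1) → N, cod (Q.D (i + 1)) u = 0 → ∃ w : Q.ι i → N, u = cod (Q.D i) w := by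
  classical
  rw [ext_trivial_iff (fun j => Q.ι (j + 1) → R) (fun j => (Q.D (j + 1)).vecMulLinear) (R ⧸ 𝔞) N
    Q.aug Q.surj (fun v => by
      rw [Q.exact0]
      exact ⟨fun ⟨w, h⟩ => ⟨w, h.symm⟩, fun ⟨w, h⟩ => ⟨w, h.symm⟩⟩)
    (fun j v => by
      rw [Matrix.vecMulLinear_apply, Q.exactS]
      exact ⟨fun ⟨w, h⟩ => ⟨w, h.symm⟩, fun ⟨w, h⟩ => ⟨w, h.symm⟩⟩) i]
  -- A linear map out of a free module is the family of its values on the basis.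
  let T : ∀ j, (Q.ι j → N) → ((Q.ι j → R) →ₗ[R] N) := fun j u => Fintype.linearCombination R u
  have hT : ∀ j u b, T j u (Pi.single b 1) = u b := fun j u b => by
    simp [T, Fintype.linearCombination_apply_single]
  have hext : ∀ j (φ ψ : (Q.ι j → R) →ₗ[R] N),
      (∀ b, φ (Pi.single b 1) = ψ (Pi.single b 1)) → φ = ψ := fun j φ ψ h =>
    (Pi.basisFun R (Q.ι j)).ext fun b => by simpa using h b
  have hTcod : ∀ j u b, (T j u ∘ₗ (Q.D j).vecMulLinear) (Pi.single b 1) = cod (Q.D j) u b := by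
    intro j u b
    simp [T, Fintype.linearCombination_apply, cod]
  have hTsurj : ∀ j (φ : (Q.ι j → R) →ₗ[R] N), T j (fun b => φ (Pi.single b 1)) = φ :=
    fun j φ => hext j _ _ fun b => hT _ _ _
  have hzero : ∀ u : Q.ι (i + 1) → N,
      T (i + 1) u ∘ₗ (Q.D (i + 1)).vecMulLinear = 0 ↔ cod (Q.D (i + 1)) u = 0 := by
    intro u
    constructor
    · intro h
      funext b
      rw [← hTcod, h]; rfl
    · intro h
      refine hext _ _ _ fun b => ?_
      rw [hTcod, h]; rfl
  constructor
  · intro h u hu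
    have h1 := h (T (i + 1) u) ((hzero u).2 hu)
    cases i with
    | zero =>
      refine ⟨fun _ => 0, ?_⟩
      funext b
      have h1 : T 1 u = 0 := h1
      rw [← hT _ u b, h1]
      simp [cod]
    | succ k =>
      obtain ⟨ψ, hψ⟩ := h1
      refine ⟨fun b => ψ (Pi.single b 1), ?_⟩
      funext b
      rw [← hT _ u b, hψ, ← hTcod, hTsurj]
  · intro h φ hφ
    rw [← hTsurj _ φ] at hφ
    obtain ⟨w, hw⟩ := h _ ((hzero _).1 hφ)
    cases i with
    | zero =>
      refine hext 1 _ _ fun b => ?_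
      refine (congrFun hw b).trans ?_
      simp [cod]
    | succ k =>
      refine ⟨T (k + 1) w, hext _ _ _ fun b => ?_⟩
      rw [hTcod]
      exact congrFun hw b

/-- The index types of the trivial resolution of `R`. -/
def baseIdx : ℕ → Type
  | 1 => Unit
  | _ => Empty

instance baseIdxFintype : ∀ j, Fintype (baseIdx j)
  | 0 => inferInstanceAs (Fintype Empty)
  | 1 => inferInstanceAs (Fintype Unit)
  | (_ + 2) => inferInstanceAs (Fintype Empty)

/-- The trivial resolution of `R/0`. -/
def MatRes.base {R : Type} [CommRing R] (S : Set R) (h0 : (0 : R) ∈ S) :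
    MatRes S (⊥ : Ideal R) where
  ι := baseIdx
  fin := baseIdxFintype
  empty := inferInstanceAs (IsEmpty Empty)
  D _ := 0
  mem _ _ _ := h0
  aug := (Ideal.Quotient.mkₐ R ⊥).toLinearMap ∘ₗ LinearMap.proj ()
  surj x := by
    obtain ⟨r, rfl⟩ := Ideal.Quotient.mk_surjective x
    exact ⟨fun _ => r, rfl⟩
  exact0 v := by
    have h : ((Ideal.Quotient.mkₐ R ⊥).toLinearMap ∘ₗ
      LinearMap.proj (R := R) (φ := fun _ : Unit => R) ()) v = 0 ↔ v () = 0 :=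
      Ideal.Quotient.eq_zero_iff_mem.trans Ideal.mem_bot
    refine h.trans ?_
    constructor
    · intro h
      refine ⟨0, ?_⟩
      rw [Matrix.zero_vecMul]
      funext b
      exact h
    · rintro ⟨w, rfl⟩
      rw [Matrix.vecMul_zero]; rfl
  exactS j v := by
    constructor
    · intro _
      exact ⟨0, funext fun b => (show Empty from b).elim⟩
    · intro _
      rw [Matrix.vecMul_zero]

theorem vecMul_coneBlocks {R α β κ : Type} [CommRing R] [Fintype κ] [Fintype β] [DecidableEq β]
    (A : Matrix κ β R) (B : Matrix β α R) (y : R) (v : κ ⊕ β → R) :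
    v ᵥ* Matrix.fromBlocks A 0 (y • (1 : Matrix β β R)) (-B) =
      Sum.elim ((v ∘ Sum.inl) ᵥ* A + y • (v ∘ Sum.inr)) (-((v ∘ Sum.inr) ᵥ* B)) := by
  rw [Matrix.vecMul_fromBlocks]
  simp [Matrix.vecMul_smul, Matrix.vecMul_neg]

theorem MatRes.cone_exact0 {R : Type} [CommRing R] {S : Set R} {𝔞 : Ideal R} (Q : MatRes S 𝔞)
    (y : R) [DecidableEq (Q.ι 1)] (v : Q.ι 1 ⊕ Q.ι 0 → R) :
    (Submodule.factor (le_sup_left : 𝔞 ≤ 𝔞 ⊔ Ideal.span {y}) : R ⧸ 𝔞 →ₗ[R] _)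
      (Q.aug (v ∘ Sum.inl)) = 0 ↔
      ∃ w : Q.ι 2 ⊕ Q.ι 1 → R,
        v = w ᵥ* Matrix.fromBlocks (Q.D 1) 0 (y • (1 : Matrix _ _ R)) (-(Q.D 0)) := by
  have hfac : ∀ r : R, (Submodule.factor (le_sup_left : 𝔞 ≤ 𝔞 ⊔ Ideal.span {y}) : R ⧸ 𝔞 →ₗ[R] _)
      (Ideal.Quotient.mk 𝔞 r) = Ideal.Quotient.mk _ r := fun r => rfl
  constructor
  · intro h
    obtain ⟨r, hr⟩ := Ideal.Quotient.mk_surjective (Q.aug (v ∘ Sum.inl))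
    rw [← hr, hfac, Ideal.Quotient.eq_zero_iff_mem] at h
    obtain ⟨p, hp, q, hq, hpq⟩ := Submodule.mem_sup.1 h
    obtain ⟨t, rfl⟩ := Ideal.mem_span_singleton'.1 hq
    obtain ⟨b, hb⟩ := Q.surj (Ideal.Quotient.mk _ t)
    have h1 : Q.aug (v ∘ Sum.inl - y • b) = 0 := by
      rw [map_sub, map_smul, hb, ← hr]
      refine Ideal.Quotient.eq_zero_iff_mem.2 (?_ : r - y * t ∈ 𝔞)
      rwa [← hpq, mul_comm y t, add_sub_cancel_right]
    obtain ⟨a, ha⟩ := (Q.exact0 _).1 h1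
    refine ⟨Sum.elim a b, ?_⟩
    rw [vecMul_coneBlocks]
    funext c
    rcases c with c | c
    · simpa [sub_eq_iff_eq_add] using congrFun ha c
    · exact isEmptyElim c
  · rintro ⟨w, rfl⟩
    rw [vecMul_coneBlocks, Sum.elim_comp_inl, map_add, (Q.exact0 _).2 ⟨_, rfl⟩, zero_add, map_smul]
    obtain ⟨r, hr⟩ := Ideal.Quotient.mk_surjective (Q.aug (w ∘ Sum.inr))
    rw [← hr]
    refine Ideal.Quotient.eq_zero_iff_mem.2 ?_
    exact Ideal.mul_mem_right _ _ (Ideal.mem_sup_right (Ideal.mem_span_singleton_self y))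

theorem MatRes.cone_exactS {R : Type} [CommRing R] {S : Set R} {𝔞 : Ideal R} (Q : MatRes S 𝔞)
    (y : R) (hreg : ∀ r, y * r ∈ 𝔞 → r ∈ 𝔞) (j : ℕ) [DecidableEq (Q.ι (j + 1))]
    [DecidableEq (Q.ι (j + 2))] (v : Q.ι (j + 2) ⊕ Q.ι (j + 1) → R) :
    v ᵥ* Matrix.fromBlocks (Q.D (j + 1)) 0 (y • (1 : Matrix _ _ R)) (-(Q.D j)) = 0 ↔
      ∃ w : Q.ι (j + 3) ⊕ Q.ι (j + 2) → R,
        v = w ᵥ* Matrix.fromBlocks (Q.D (j + 2)) 0 (y • (1 : Matrix _ _ R)) (-(Q.D (j + 1))) := by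
  rw [vecMul_coneBlocks]
  constructor
  · intro h
    have h1 : (v ∘ Sum.inl) ᵥ* Q.D (j + 1) + y • (v ∘ Sum.inr) = 0 :=
      funext fun b => congrFun h (Sum.inl b)
    have h2 : (v ∘ Sum.inr) ᵥ* Q.D j = 0 := by
      funext b
      have := congrFun h (Sum.inr b)
      simpa using this
    -- the second component is a boundary: for `j = 0` because `y` is regular on `R/𝔞`
    have h3 : ∃ b', v ∘ Sum.inr = b' ᵥ* Q.D (j + 1) := by
      cases j with
      | zero =>
        rw [← Q.exact0]
        have h4 := congrArg Q.aug h1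
        rw [map_add, (Q.exact0 _).2 ⟨_, rfl⟩, zero_add, map_smul, map_zero] at h4
        obtain ⟨r, hr⟩ := Ideal.Quotient.mk_surjective (Q.aug (v ∘ Sum.inr))
        rw [← hr] at h4 ⊢
        exact Ideal.Quotient.eq_zero_iff_mem.2 (hreg r (Ideal.Quotient.eq_zero_iff_mem.1 h4))
      | succ k => exact (Q.exactS k _).1 h2
    obtain ⟨b', hb'⟩ := h3
    have h5 : (v ∘ Sum.inl + y • b') ᵥ* Q.D (j + 1) = 0 := by
      rw [Matrix.add_vecMul, Matrix.smul_vecMul, ← hb', h1]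
    obtain ⟨a', ha'⟩ := (Q.exactS j _).1 h5
    refine ⟨Sum.elim a' (-b'), ?_⟩
    rw [vecMul_coneBlocks, Sum.elim_comp_inl, Sum.elim_comp_inr, ← ha', Matrix.neg_vecMul, neg_neg,
      ← hb', smul_neg, add_neg_cancel_right, Sum.elim_comp_inl_inr]
  · rintro ⟨w, rfl⟩
    rw [vecMul_coneBlocks, Sum.elim_comp_inl, Sum.elim_comp_inr]
    have e1 : (w ∘ Sum.inl) ᵥ* Q.D (j + 2) ᵥ* Q.D (j + 1) = 0 := (Q.exactS j _).2 ⟨_, rfl⟩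
    have e2 : (w ∘ Sum.inr) ᵥ* Q.D (j + 1) ᵥ* Q.D j = 0 := by
      cases j with
      | zero => funext b; exact isEmptyElim b
      | succ k => exact (Q.exactS k _).2 ⟨_, rfl⟩
    rw [Matrix.add_vecMul, e1, Matrix.neg_vecMul, e2, Matrix.smul_vecMul]
    funext b
    rcases b with b | b <;> simp

/-- The mapping cone of multiplication by `y` resolves `R/(𝔞 + (y))` if `y` is regular modulo
`𝔞`. -/
def MatRes.cone {R : Type} [CommRing R] {S : Set R} {𝔞 : Ideal R} (Q : MatRes S 𝔞) {S' : Set R}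
    (hS' : S ⊆ S') (hneg : ∀ s ∈ S, -s ∈ S') (h0 : (0 : R) ∈ S') (y : R) (hy : y ∈ S')
    (hreg : ∀ r, y * r ∈ 𝔞 → r ∈ 𝔞) : MatRes S' (𝔞 ⊔ Ideal.span {y}) := by
  classical
  exact
  { ι := fun j => match j with
      | 0 => Q.ι 0
      | (j + 1) => Q.ι (j + 1) ⊕ Q.ι j
    fin := fun j => match j with
      | 0 => Q.fin 0
      | (j + 1) => inferInstanceAs (Fintype (Q.ι (j + 1) ⊕ Q.ι j))
    empty := Q.empty
    D := fun j => match j with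
      | 0 => 0
      | (j + 1) => Matrix.fromBlocks (Q.D (j + 1)) 0 (y • (1 : Matrix _ _ R)) (-(Q.D j))
    mem := fun j b a => by
      cases j with
      | zero => exact h0
      | succ j =>
        rcases b with b | b <;> rcases a with a | a
        · exact hS' (Q.mem _ _ _)
        · exact h0
        · by_cases h : b = a
          · subst h; simpa using hy
          · simpa [h] using h0
        · exact hneg _ (Q.mem _ _ _)
    aug := (Submodule.factor le_sup_left : R ⧸ 𝔞 →ₗ[R] _) ∘ₗ Q.aug ∘ₗ
      LinearMap.funLeft R R (Sum.inl : Q.ι 1 → Q.ι 1 ⊕ Q.ι 0)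
    surj := by
      intro x
      obtain ⟨r, rfl⟩ := Ideal.Quotient.mk_surjective x
      obtain ⟨v, hv⟩ := Q.surj (Ideal.Quotient.mk _ r)
      refine ⟨Sum.elim v 0, ?_⟩
      have : LinearMap.funLeft R R (Sum.inl : Q.ι 1 → Q.ι 1 ⊕ Q.ι 0) (Sum.elim v 0) = v := by
        funext b; rfl
      rw [LinearMap.comp_apply, LinearMap.comp_apply, this, hv]
      rfl
    exact0 := by
      exact fun v => Q.cone_exact0 y v
    exactS := by
      exact fun j v => Q.cone_exactS y hreg j v }

end Koszul

/-! ### Depth -/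

section Depth

/-- Exactness, at one spot, of the cochain complex obtained from the mapping cone of
multiplication by `x` on a complex with matrices `D₁`, `D₂`, `D₃`. -/
def ConeExact {R : Type} [CommRing R] (x : R) {α β γ κ : Type} [Fintype α] [Fintype β] [Fintype γ]
    (D₁ : Matrix β α R) (D₂ : Matrix γ β R) (D₃ : Matrix κ γ R) (N : Type) [AddCommGroup N]
    [Module R N] : Prop :=
  ∀ (u : γ → N) (v : β → N), cod D₃ u = 0 → x • u = cod D₂ v →
    ∃ (u' : β → N) (v' : α → N), u = cod D₂ u' ∧ v = x • u' - cod D₁ v'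

section

variable {R : Type} [CommRing R]

theorem cod_add {N : Type} [AddCommGroup N] [Module R N] {β α : Type} [Fintype α]
    (D : Matrix β α R) (u v : α → N) : cod D (u + v) = cod D u + cod D v := by
  funext b
  simp [cod, Finset.sum_add_distrib]

theorem cod_neg {N : Type} [AddCommGroup N] [Module R N] {β α : Type} [Fintype α]
    (D : Matrix β α R) (u : α → N) : cod D (-u) = -cod D u := by
  funext b
  simp [cod]

theorem cod_zero {N : Type} [AddCommGroup N] [Module R N] {β α : Type} [Fintype α]
    (D : Matrix β α R) : cod D (0 : α → N) = 0 := by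
  funext b
  simp [cod]

theorem cod_comp {N M : Type} [AddCommGroup N] [Module R N] [AddCommGroup M] [Module R M]
    {β α : Type} [Fintype α] {S : Set R} (D : Matrix β α R) (hD : ∀ b a, D b a ∈ S)
    (f : N →+ M) (hf : ∀ s ∈ S, ∀ y, f (s • y) = s • f y) (u : α → N) :
    cod D (f ∘ u) = f ∘ cod D u := by
  funext b
  simp only [cod, Function.comp_apply, map_sum]
  exact Finset.sum_congr rfl fun a _ => (hf _ (hD b a) _).symm

/-- `A` is, over the scalars in `S`, the direct sum of `C` and `B`; the element `x` maps `C ⊕ B`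
to the summand `B`, through the given maps `ι : C → B` and `x : B → B`. If `C` is a retract of `B`
killed by `x`, then the cone complexes with coefficients in `A` and `B` are exact simultaneously. -/
theorem coneExact_iff {S : Set R} (x : R) {α β γ κ : Type} [Fintype α] [Fintype β] [Fintype γ]
    (D₁ : Matrix β α R) (D₂ : Matrix γ β R) (D₃ : Matrix κ γ R)
    (h₁ : ∀ b a, D₁ b a ∈ S) (h₂ : ∀ b a, D₂ b a ∈ S) (h₃ : ∀ b a, D₃ b a ∈ S)
    {A B C : Type} [AddCommGroup A] [Module R A] [AddCommGroup B] [Module R B]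
    [AddCommGroup C] [Module R C]
    (ι : C →+ B) (hι : ∀ s ∈ S, ∀ y, ι (s • y) = s • ι y)
    (π : B →+ C) (hπ : ∀ s ∈ S, ∀ y, π (s • y) = s • π y)
    (hπι : ∀ c, π (ι c) = c) (hπx : ∀ b, π (x • b) = 0)
    (k : C →+ A) (hk : ∀ s ∈ S, ∀ y, k (s • y) = s • k y)
    (j : B →+ A) (hj : ∀ s ∈ S, ∀ y, j (s • y) = s • j y)
    (hsurj : ∀ a, ∃ c b, a = k c + j b)
    (hinj : ∀ c b, k c + j b = 0 → c = 0 ∧ b = 0)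
    (hx : ∀ c b, x • (k c + j b) = j (ι c + x • b)) :
    ConeExact x D₁ D₂ D₃ A ↔ ConeExact x D₁ D₂ D₃ B := by
  have split : ∀ {ω : Type} (u : ω → A), ∃ (c : ω → C) (b : ω → B), u = k ∘ c + j ∘ b := by
    intro ω u
    choose c b h using fun w => hsurj (u w)
    exact ⟨c, b, funext h⟩
  have inj : ∀ {ω : Type} (c c' : ω → C) (b b' : ω → B),
      k ∘ c + j ∘ b = k ∘ c' + j ∘ b' → c = c' ∧ b = b' := by
    intro ω c c' b b' h
    have h' : ∀ w, c w - c' w = 0 ∧ b w - b' w = 0 := fun w => by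
      refine hinj _ _ ?_
      have := congrFun h w
      simp only [Pi.add_apply, Function.comp_apply] at this
      rw [map_sub, map_sub, sub_add_sub_comm, this, sub_self]
    exact ⟨funext fun w => sub_eq_zero.1 (h' w).1, funext fun w => sub_eq_zero.1 (h' w).2⟩
  have xsplit : ∀ {ω : Type} (c : ω → C) (b : ω → B),
      x • (k ∘ c + j ∘ b) = k ∘ (0 : ω → C) + j ∘ (ι ∘ c + x • b) := by
    intro ω c b
    funext w
    simpa using hx (c w) (b w)
  have codsplit : ∀ {ω ω' : Type} [Fintype ω] (D : Matrix ω' ω R), (∀ b a, D b a ∈ S) →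
      ∀ (c : ω → C) (b : ω → B), cod D (k ∘ c + j ∘ b) = k ∘ cod D c + j ∘ cod D b := by
    intro ω ω' _ D hD c b
    rw [cod_add, cod_comp D hD k hk, cod_comp D hD j hj]
  have zsplit : ∀ {ω : Type}, (0 : ω → A) = k ∘ (0 : ω → C) + j ∘ (0 : ω → B) := by
    intro ω
    funext w; simp
  have hπι' : ∀ {ω : Type} (c : ω → C), π ∘ (ι ∘ c) = c := fun c => funext fun w => hπι _
  have hπx' : ∀ {ω : Type} (b : ω → B), π ∘ (x • b) = 0 := fun b => funext fun w => hπx _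
  have πadd : ∀ {ω : Type} (b b' : ω → B), π ∘ (b + b') = π ∘ b + π ∘ b' :=
    fun b b' => funext fun w => map_add _ _ _
  have πsub : ∀ {ω : Type} (b b' : ω → B), π ∘ (b - b') = π ∘ b - π ∘ b' :=
    fun b b' => funext fun w => map_sub _ _ _
  have ιneg : ∀ {ω : Type} (b : ω → C), ι ∘ (-b) = -(ι ∘ b) :=
    fun b => funext fun w => map_neg _ _
  have ιz : ∀ {ω : Type}, ι ∘ (0 : ω → C) = 0 := funext fun w => map_zero _
  constructor
  · intro hA u v hu hv
    obtain ⟨u', v', e1, e2⟩ := hA (k ∘ (0 : γ → C) + j ∘ u) (k ∘ (0 : β → C) + j ∘ v)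
      (by rw [codsplit D₃ h₃, hu, cod_zero, ← zsplit])
      (by rw [codsplit D₂ h₂, xsplit, cod_zero, ← hv, ιz, zero_add])
    obtain ⟨c, b, rfl⟩ := split u'
    obtain ⟨c', b', rfl⟩ := split v'
    rw [codsplit D₂ h₂] at e1
    obtain ⟨e3, e4⟩ := inj _ _ _ _ e1
    rw [codsplit D₁ h₁, xsplit, eq_sub_iff_add_eq] at e2
    have e5 : k ∘ (0 + cod D₁ c') + j ∘ (v + cod D₁ b') = k ∘ (0 : β → C) + j ∘ (ι ∘ c + x • b) := by
      rw [← e2]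
      funext w; simp; abel
    obtain ⟨_, e6⟩ := inj _ _ _ _ e5
    -- the cocycle `c` has to be shown to be a coboundary
    obtain ⟨u'', v'', f1, f2⟩ := hA (k ∘ (0 : γ → C) + j ∘ (0 : γ → B)) (k ∘ c + j ∘ (0 : β → B))
      (by rw [← zsplit, cod_zero])
      (by rw [codsplit D₂ h₂, xsplit, cod_zero, ← e3, ιz, smul_zero, zero_add])
    obtain ⟨c₁, b₁, rfl⟩ := split u''
    obtain ⟨c₂, b₂, rfl⟩ := split v''
    rw [codsplit D₁ h₁, xsplit, eq_sub_iff_add_eq] at f2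
    have f2' : k ∘ (c + cod D₁ c₂) + j ∘ (0 + cod D₁ b₂) =
        k ∘ (0 : β → C) + j ∘ (ι ∘ c₁ + x • b₁) := by
      rw [← f2]
      funext w; simp; abel
    obtain ⟨f3, _⟩ := inj _ _ _ _ f2'
    refine ⟨b, b' + ι ∘ c₂, e4, ?_⟩
    rw [cod_add, cod_comp D₁ h₁ ι hι, eq_sub_iff_add_eq, ← add_assoc, e6,
      eq_neg_of_add_eq_zero_left f3, ιneg]
    abel
  · intro hB u v hu hv
    obtain ⟨c, b, rfl⟩ := split u
    obtain ⟨c', b', rfl⟩ := split v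
    rw [codsplit D₃ h₃, zsplit] at hu
    obtain ⟨-, hb⟩ := inj _ _ _ _ hu
    rw [codsplit D₂ h₂, xsplit] at hv
    obtain ⟨hc', hb'⟩ := inj _ _ _ _ hv
    have hc : c = cod D₂ (π ∘ b') := by
      rw [cod_comp D₂ h₂ π hπ, ← hb', πadd, hπι', hπx', add_zero]
    obtain ⟨u', v', e1, e2⟩ := hB b (b' - ι ∘ (π ∘ b')) hb (by
      rw [sub_eq_add_neg, cod_add, cod_neg, cod_comp D₂ h₂ ι hι, ← hc, ← hb']
      abel)
    obtain ⟨u'', v'', f1, f2⟩ := hB 0 (ι ∘ c') (by rw [cod_zero]) (by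
      rw [cod_comp D₂ h₂ ι hι, ← hc', ιz, smul_zero])
    have f3 : c' = - cod D₁ (π ∘ v'') := by
      rw [cod_comp D₁ h₁ π hπ, ← hπι' c', f2, πsub, hπx', zero_sub]
    refine ⟨k ∘ (π ∘ b') + j ∘ u', k ∘ (π ∘ v'') + j ∘ v', ?_, ?_⟩
    · rw [codsplit D₂ h₂, ← e1, ← hc]
    · rw [codsplit D₁ h₁, xsplit, eq_sub_iff_add_eq]
      have e3 : b' + cod D₁ v' = x • u' + ι ∘ (π ∘ b') := by
        rw [sub_eq_iff_eq_add] at e2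
        nth_rw 1 [e2]
        abel
      have e4 : k ∘ c' + j ∘ b' + (k ∘ cod D₁ (π ∘ v'') + j ∘ cod D₁ v') =
          k ∘ (c' + cod D₁ (π ∘ v'')) + j ∘ (b' + cod D₁ v') := by
        funext w
        simp only [Pi.add_apply, Function.comp_apply, map_add]
        abel
      rw [e4, e3, f3, neg_add_cancel, add_comm (x • u')]

end

variable {K : Type} [Field K] {n : ℕ}

theorem exists_matRes (i : Fin n) (T : Finset (Fin n)) (hT : i ∉ T) :
    Nonempty (MatRes {s : MvPoly K (Fin n) | Free i s}
      (Ideal.span ((X : Fin n → MvPoly K (Fin n)) '' (T : Set (Fin n))))) := by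
  classical
  induction T using Finset.induction_on with
  | empty =>
    simp only [Finset.coe_empty, Set.image_empty, Ideal.span_empty]
    exact ⟨MatRes.base _ (free_zero i)⟩
  | insert t T ht ih =>
    simp only [Finset.mem_insert, not_or] at hT
    obtain ⟨Q⟩ := ih hT.2
    have h := Q.cone (S' := {s : MvPoly K (Fin n) | Free i s}) subset_rfl
      (fun s hs => Free.neg hs) (free_zero i) (X t) (free_X i (Ne.symm hT.1)) (fun r hr => by
        rw [MvPolynomial.mem_ideal_span_X_image] at hr ⊢
        intro m hm
        obtain ⟨a, ha, hma⟩ := hr (Finsupp.single t 1 + m) (by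
          rw [mem_support_iff, coeff_X_mul]
          exact mem_support_iff.1 hm)
        refine ⟨a, ha, ?_⟩
        have : t ≠ a := by rintro rfl; exact ht ha
        simpa [this] using hma)
    rw [Finset.coe_insert, Set.image_insert_eq, Ideal.span_insert, sup_comm]
    exact ⟨h⟩

/-- The vanishing of `Ext^k(R/m, N)` as exactness of a mapping cone whose matrices do not
involve `x_i`. -/
theorem exists_ext_iff (i : Fin n) (k : ℕ) : ∃ (α β γ κ : Type) (_ : Fintype α) (_ : Fintype β)
    (_ : Fintype γ) (D₁ : Matrix β α (MvPoly K (Fin n))) (D₂ : Matrix γ β (MvPoly K (Fin n)))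
    (D₃ : Matrix κ γ (MvPoly K (Fin n))), (∀ b a, Free i (D₁ b a)) ∧ (∀ b a, Free i (D₂ b a)) ∧
    (∀ b a, Free i (D₃ b a)) ∧ ∀ (N : Type) [AddCommGroup N] [Module (MvPoly K (Fin n)) N],
      ¬ Nontrivial (((Ext (MvPoly K (Fin n)) (ModuleCat (MvPoly K (Fin n))) k).obj
        (op (ModuleCat.of (MvPoly K (Fin n)) (MvPoly K (Fin n) ⧸ maxIdeal K (Fin n))))).obj
        (ModuleCat.of (MvPoly K (Fin n)) N)) ↔ ConeExact (X i) D₁ D₂ D₃ N := by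
  classical
  obtain ⟨Q⟩ := exists_matRes (K := K) i (Finset.univ.erase i) (by simp)
  have hmax : maxIdeal K (Fin n) = Ideal.span ((X : Fin n → MvPoly K (Fin n)) ''
      ((Finset.univ.erase i : Finset (Fin n)) : Set (Fin n))) ⊔ Ideal.span {X i} := by
    rw [sup_comm, ← Ideal.span_insert, ← Set.image_insert_eq, ← Finset.coe_insert,
      Finset.insert_erase (Finset.mem_univ i), Finset.coe_univ, Set.image_univ]
    rfl
  have hreg : ∀ r : MvPoly K (Fin n), X i * r ∈ Ideal.span ((X : Fin n → MvPoly K (Fin n)) ''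
      ((Finset.univ.erase i : Finset (Fin n)) : Set (Fin n))) → r ∈ Ideal.span
      ((X : Fin n → MvPoly K (Fin n)) '' ((Finset.univ.erase i : Finset (Fin n)) : Set (Fin n))) := by
    intro r hr
    rw [MvPolynomial.mem_ideal_span_X_image] at hr ⊢
    intro m hm
    obtain ⟨a, ha, hma⟩ := hr (Finsupp.single i 1 + m) (by
      rw [mem_support_iff, coeff_X_mul]
      exact mem_support_iff.1 hm)
    refine ⟨a, ha, ?_⟩
    have : i ≠ a := by rintro rfl; simp at ha
    simpa [this] using hma
  rw [hmax]
  let Q' := Q.cone (S' := Set.univ) (Set.subset_univ _) (fun _ _ => trivial) trivial (X i) trivial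
    hreg
  have hcod : ∀ (j : ℕ) (N : Type) [AddCommGroup N] [Module (MvPoly K (Fin n)) N]
      (u : Q.ι (j + 1) → N) (v : Q.ι j → N),
      cod (Matrix.fromBlocks (Q.D (j + 1)) 0 ((X i : MvPoly K (Fin n)) • (1 : Matrix _ _ _))
        (-(Q.D j))) (Sum.elim u v) = Sum.elim (cod (Q.D (j + 1)) u)
          ((X i : MvPoly K (Fin n)) • u - cod (Q.D j) v) := by
    intro j N _ _ u v
    funext b
    rcases b with b | b
    · simp [cod]
    · simp [cod, Matrix.one_apply, ite_smul, sub_eq_add_neg]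
  have hzero : ∀ (j : ℕ) (N : Type) [AddCommGroup N] [Module (MvPoly K (Fin n)) N]
      (u : Q.ι (j + 1) → N) (v : Q.ι j → N),
      cod (Q'.D (j + 1)) (Sum.elim u v) = 0 ↔
        (cod (Q.D (j + 1)) u = 0 ∧ (X i : MvPoly K (Fin n)) • u = cod (Q.D j) v) := by
    intro j N _ _ u v
    refine Iff.trans (Eq.congr_left (hcod j N u v)) ?_
    refine ⟨fun h => ⟨funext fun b => congrFun h (Sum.inl b),
      sub_eq_zero.1 (funext fun b => congrFun h (Sum.inr b))⟩, fun h => funext fun b => ?_⟩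
    rcases b with b | b
    · exact congrFun h.1 b
    · exact congrFun (sub_eq_zero.2 h.2) b
  cases k with
  | zero =>
    refine ⟨Empty, Q.ι 0, Q.ι 1, Q.ι 2, inferInstance, inferInstance, inferInstance, 0, Q.D 0,
      Q.D 1, fun _ _ => free_zero i, fun b a => Q.mem _ _ _, fun b a => Q.mem _ _ _, ?_⟩
    intro N _ _
    rw [Q'.ext_iff N 0]
    constructor
    · intro h u v hu hv
      obtain ⟨w, hw⟩ := h (Sum.elim u v) ((hzero 0 N u v).2 ⟨hu, hv⟩)
      refine ⟨fun _ => 0, fun _ => 0, ?_, ?_⟩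
      · funext b
        refine (congrFun hw (Sum.inl b)).trans ?_
        have h1 : IsEmpty (Q'.ι 0) := inferInstance
        simp [cod]
      · funext b
        exact isEmptyElim b
    · intro h u hu
      obtain ⟨u, v, rfl⟩ : ∃ (a : Q.ι 1 → N) (b : Q.ι 0 → N), u = Sum.elim a b :=
        ⟨u ∘ Sum.inl, u ∘ Sum.inr, (Sum.elim_comp_inl_inr u).symm⟩
      obtain ⟨hu1, hu2⟩ := (hzero 0 N u v).1 hu
      obtain ⟨u', v', e1, e2⟩ := h u v hu1 hu2
      refine ⟨fun _ => 0, ?_⟩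
      funext b
      rcases b with b | b
      · refine (congrFun e1 b).trans ?_
        simp [cod]
      · exact isEmptyElim b
  | succ k =>
    refine ⟨Q.ι k, Q.ι (k + 1), Q.ι (k + 2), Q.ι (k + 3), inferInstance, inferInstance,
      inferInstance, Q.D k, Q.D (k + 1), Q.D (k + 2), fun b a => Q.mem _ _ _,
      fun b a => Q.mem _ _ _, fun b a => Q.mem _ _ _, ?_⟩
    intro N _ _
    rw [Q'.ext_iff N (k + 1)]
    constructor
    · intro h u v hu hv
      obtain ⟨w, hw⟩ := h (Sum.elim u v) ((hzero (k + 1) N u v).2 ⟨hu, hv⟩)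
      obtain ⟨u', v', rfl⟩ : ∃ (a : Q.ι (k + 1) → N) (b : Q.ι k → N), w = Sum.elim a b :=
        ⟨w ∘ Sum.inl, w ∘ Sum.inr, (Sum.elim_comp_inl_inr w).symm⟩
      have hw' := hw.trans (hcod k N u' v')
      exact ⟨u', v', funext fun b => congrFun hw' (Sum.inl b),
        funext fun b => congrFun hw' (Sum.inr b)⟩
    · intro h u hu
      obtain ⟨u, v, rfl⟩ : ∃ (a : Q.ι (k + 2) → N) (b : Q.ι (k + 1) → N), u = Sum.elim a b :=
        ⟨u ∘ Sum.inl, u ∘ Sum.inr, (Sum.elim_comp_inl_inr u).symm⟩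
      obtain ⟨hu1, hu2⟩ := (hzero (k + 1) N u v).1 hu
      obtain ⟨u', v', e1, e2⟩ := h u v hu1 hu2
      refine ⟨Sum.elim u' v', Eq.trans ?_ (hcod k N u' v').symm⟩
      rw [← e1, ← e2]

/-- The decomposition `R/I = R/(J + (x_i)) ⊕ x_i · R/J` shows that the `Ext` modules of `R/m` with
values in `R/I` and in `R/J` vanish simultaneously. -/
theorem depthQ_eq {I J : Ideal (MvPoly K (Fin n))} (i : Fin n)
    (hcol : ∀ p, p ∈ J ↔ X i * p ∈ I) (hIJ : I ≤ J) (hepsI : ∀ p ∈ I, eps i p ∈ I)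
    (heps : ∀ p ∈ J, eps i p ∈ I) : depthQ K (Fin n) I = depthQ K (Fin n) J := by
  have hext : ∀ k : ℕ, Nontrivial (((Ext (MvPoly K (Fin n)) (ModuleCat (MvPoly K (Fin n))) k).obj
        (op (ModuleCat.of (MvPoly K (Fin n)) (MvPoly K (Fin n) ⧸ maxIdeal K (Fin n))))).obj
        (ModuleCat.of (MvPoly K (Fin n)) (MvPoly K (Fin n) ⧸ I))) ↔
      Nontrivial (((Ext (MvPoly K (Fin n)) (ModuleCat (MvPoly K (Fin n))) k).obj
        (op (ModuleCat.of (MvPoly K (Fin n)) (MvPoly K (Fin n) ⧸ maxIdeal K (Fin n))))).obj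
        (ModuleCat.of (MvPoly K (Fin n)) (MvPoly K (Fin n) ⧸ J))) := by
    intro k
    obtain ⟨α, β, γ, κ, _, _, _, D₁, D₂, D₃, h₁, h₂, h₃, h⟩ := exists_ext_iff (K := K) i k
    rw [← not_iff_not, h, h]
    have hL : ∀ p ∈ J ⊔ Ideal.span {X i}, eps i p ∈ I := by
      intro p hp
      obtain ⟨q, hq, r, hr, rfl⟩ := Submodule.mem_sup.1 hp
      obtain ⟨t, rfl⟩ := Ideal.mem_span_singleton'.1 hr
      rw [map_add, map_mul, eps_X, mul_zero, add_zero]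
      exact heps q hq
    refine coneExact_iff (S := {s | Free i s}) (X i) D₁ D₂ D₃ h₁ h₂ h₃
      (C := MvPoly K (Fin n) ⧸ (J ⊔ Ideal.span {X i}))
      (Ideal.Quotient.lift _ ((Ideal.Quotient.mk J).comp (eps i)) fun p hp =>
        Ideal.Quotient.eq_zero_iff_mem.2 (hIJ (hL p hp))).toAddMonoidHom ?_
      (Ideal.Quotient.factor (le_sup_left : J ≤ J ⊔ Ideal.span {X i})).toAddMonoidHom ?_ ?_ ?_
      (Ideal.Quotient.lift _ ((Ideal.Quotient.mk I).comp (eps i)) fun p hp =>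
        Ideal.Quotient.eq_zero_iff_mem.2 (hL p hp)).toAddMonoidHom ?_
      (Submodule.mapQ J I (LinearMap.mulLeft (MvPoly K (Fin n)) (X i))
        fun p hp => (hcol p).1 hp).toAddMonoidHom ?_ ?_ ?_ ?_
    · intro s hs y
      obtain ⟨r, rfl⟩ := Ideal.Quotient.mk_surjective y
      change Ideal.Quotient.mk J (eps i (s * r)) = Ideal.Quotient.mk J (s * eps i r)
      rw [map_mul, eps_free i hs]
    · intro s hs y
      obtain ⟨r, rfl⟩ := Ideal.Quotient.mk_surjective y
      rfl
    · intro c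
      obtain ⟨r, rfl⟩ := Ideal.Quotient.mk_surjective c
      change Ideal.Quotient.mk _ (eps i r) = Ideal.Quotient.mk _ r
      obtain ⟨q, hq⟩ := exists_eq_eps_add i r
      refine Ideal.Quotient.eq.2 (Ideal.mem_sup_right ?_)
      nth_rw 2 [hq]
      rw [sub_add_cancel_left]
      exact neg_mem (Ideal.mul_mem_right _ _ (Ideal.mem_span_singleton_self _))
    · intro b
      obtain ⟨r, rfl⟩ := Ideal.Quotient.mk_surjective b
      exact Ideal.Quotient.eq_zero_iff_mem.2 (Ideal.mem_sup_right
        (Ideal.mul_mem_right _ _ (Ideal.mem_span_singleton_self _)))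
    · intro s hs y
      obtain ⟨r, rfl⟩ := Ideal.Quotient.mk_surjective y
      change Ideal.Quotient.mk I (eps i (s * r)) = Ideal.Quotient.mk I (s * eps i r)
      rw [map_mul, eps_free i hs]
    · intro s hs y
      exact map_smul (Submodule.mapQ J I (LinearMap.mulLeft (MvPoly K (Fin n)) (X i))
        fun p hp => (hcol p).1 hp) s y
    · intro a
      obtain ⟨r, rfl⟩ := Ideal.Quotient.mk_surjective a
      obtain ⟨q, hq⟩ := exists_eq_eps_add i r
      refine ⟨Ideal.Quotient.mk _ r, Ideal.Quotient.mk _ q, ?_⟩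
      change Ideal.Quotient.mk I r = Ideal.Quotient.mk I (eps i r + X i * q)
      rw [← hq]
    · intro c b h
      obtain ⟨r, rfl⟩ := Ideal.Quotient.mk_surjective c
      obtain ⟨t, rfl⟩ := Ideal.Quotient.mk_surjective b
      have h' : eps i r + X i * t ∈ I := Ideal.Quotient.eq_zero_iff_mem.1 h
      have h1 : eps i r ∈ I := by
        have := hepsI _ h'
        rwa [map_add, map_mul, eps_X, zero_mul, add_zero, eps_free (s := eps i r) i (free_cf i 0 r)] at this
      have h2 : t ∈ J := (hcol t).2 ((Ideal.add_mem_iff_right _ h1).1 h')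
      obtain ⟨q, hq⟩ := exists_eq_eps_add i r
      refine ⟨Ideal.Quotient.eq_zero_iff_mem.2 ?_, Ideal.Quotient.eq_zero_iff_mem.2 h2⟩
      rw [hq]
      exact add_mem (Ideal.mem_sup_left (hIJ h1)) (Ideal.mem_sup_right
        (Ideal.mul_mem_right _ _ (Ideal.mem_span_singleton_self _)))
    · intro c b
      obtain ⟨r, rfl⟩ := Ideal.Quotient.mk_surjective c
      obtain ⟨t, rfl⟩ := Ideal.Quotient.mk_surjective b
      rfl
  unfold depthQ
  simp only [hext]

end Depth

/-! ### Homogeneous vectors and graded maps -/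

section Graded

variable {K : Type} [Field K] {n : ℕ}

theorem homogComp_iff (e : ℤ) (p : MvPoly K (Fin n)) :
    HomogComp K (Fin n) e p ↔ ∀ m, coeff m p ≠ 0 → (m.degree : ℤ) = e := by
  unfold HomogComp
  split_ifs with h
  · rw [mem_homogeneousSubmodule]
    refine forall_congr' fun m => imp_congr_right fun _ => ?_
    rw [show Finsupp.weight (1 : Fin n → ℕ) m = m.degree from
      (DFunLike.congr_fun Finsupp.degree_eq_weight_one m).symm]
    omega
  · constructor
    · rintro rfl m hm
      simp at hm
    · intro h'
      ext m
      by_contra hm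
      have := h' m (by simpa using hm)
      omega

theorem HomogComp.eq_zero {e : ℤ} {p : MvPoly K (Fin n)} (h : HomogComp K (Fin n) e p)
    (he : e < 0) : p = 0 := by
  unfold HomogComp at h
  rwa [if_neg (by omega)] at h

theorem homogComp_zero (e : ℤ) : HomogComp K (Fin n) e 0 :=
  (homogComp_iff e 0).2 fun m hm => by simp at hm

theorem homogComp_one : HomogComp K (Fin n) 0 1 := by
  classical
  refine (homogComp_iff _ _).2 fun m hm => ?_
  rw [coeff_one] at hm
  have : m = 0 := by
    by_contra h
    exact hm (if_neg fun h' => h h'.symm)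
  simp [this]

theorem HomogComp.mul {a b : ℤ} {p q : MvPoly K (Fin n)} (hp : HomogComp K (Fin n) a p)
    (hq : HomogComp K (Fin n) b q) : HomogComp K (Fin n) (a + b) (p * q) := by
  classical
  rw [homogComp_iff] at *
  intro m hm
  rw [coeff_mul] at hm
  obtain ⟨⟨x, y⟩, hxy, hne⟩ := Finset.exists_ne_zero_of_sum_ne_zero hm
  rw [Finset.HasAntidiagonal.mem_antidiagonal] at hxy
  dsimp only at hxy hne
  rw [← hxy, map_add, Nat.cast_add, hp x (left_ne_zero_of_mul hne), hq y (right_ne_zero_of_mul hne)]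

theorem homogComp_sum {ι : Type} (s : Finset ι) (e : ℤ) (p : ι → MvPoly K (Fin n))
    (h : ∀ b ∈ s, HomogComp K (Fin n) e (p b)) : HomogComp K (Fin n) e (∑ b ∈ s, p b) := by
  rw [homogComp_iff]
  intro m hm
  rw [coeff_sum] at hm
  obtain ⟨b, hb, hne⟩ := Finset.exists_ne_zero_of_sum_ne_zero hm
  exact (homogComp_iff _ _).1 (h b hb) m hne

theorem homogComp_sub {e : ℤ} {p q : MvPoly K (Fin n)} (hp : HomogComp K (Fin n) e p)
    (hq : HomogComp K (Fin n) e q) : HomogComp K (Fin n) e (p - q) := by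
  rw [homogComp_iff] at *
  intro m hm
  by_cases h : coeff m p = 0
  · refine hq m fun h' => hm ?_
    rw [coeff_sub, h, h', sub_zero]
  · exact hp m h

theorem homogComp_X_pow (i : Fin n) (a : ℕ) : HomogComp K (Fin n) a (X i ^ a) := by
  classical
  refine (homogComp_iff _ _).2 fun m hm => ?_
  rw [coeff_X_pow] at hm
  have : Finsupp.single i a = m := by
    by_contra h
    exact hm (if_neg h)
  rw [← this, Finsupp.degree_single]

theorem HomogComp.cf (i : Fin n) {e : ℤ} {p : MvPoly K (Fin n)} (hp : HomogComp K (Fin n) e p)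
    (a : ℕ) : HomogComp K (Fin n) (e - a) (cf i a p) := by
  rw [homogComp_iff] at hp
  rw [p.as_sum, map_sum]
  refine homogComp_sum _ _ _ fun m hm => ?_
  rw [cf_monomial]
  split_ifs with h
  · refine (homogComp_iff _ _).2 fun m' hm' => ?_
    have h1 : m.erase i = m' := by
      by_contra h'
      exact hm' (by rw [coeff_monomial, if_neg h'])
    have h2 := hp m (mem_support_iff.1 hm)
    have h3 : m.degree = m i + (m.erase i).degree := by
      conv_lhs => rw [← Finsupp.single_add_erase i m]
      rw [map_add, Finsupp.degree_single]
    rw [← h1]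
    omega
  · exact homogComp_zero _

/-- The homogeneous component of integral degree `e`; it is zero for `e < 0`. -/
def hc (e : ℤ) : MvPoly K (Fin n) →ₗ[K] MvPoly K (Fin n) :=
  if 0 ≤ e then homogeneousComponent e.toNat else 0

theorem coeff_hc (e : ℤ) (p : MvPoly K (Fin n)) (m : Fin n →₀ ℕ) :
    coeff m (hc e p) = if (m.degree : ℤ) = e then coeff m p else 0 := by
  unfold hc
  by_cases h : 0 ≤ e
  · rw [if_pos h, coeff_homogeneousComponent]
    have : m.degree = e.toNat ↔ (m.degree : ℤ) = e := by omega
    simp only [this]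
  · rw [if_neg h, if_neg (by omega)]
    simp

theorem homogComp_hc (e : ℤ) (p : MvPoly K (Fin n)) : HomogComp K (Fin n) e (hc e p) :=
  (homogComp_iff _ _).2 fun m hm => by
    by_contra h
    exact hm (by rw [coeff_hc, if_neg h])

theorem HomogComp.hc_eq {e : ℤ} {p : MvPoly K (Fin n)} (hp : HomogComp K (Fin n) e p) :
    hc e p = p := by
  ext m
  rw [coeff_hc]
  split_ifs with h
  · rfl
  · by_contra h'
    exact h ((homogComp_iff _ _).1 hp m fun h'' => h' h''.symm)

theorem hc_mul (e a : ℤ) (p : MvPoly K (Fin n)) {q : MvPoly K (Fin n)}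
    (hq : HomogComp K (Fin n) a q) : hc e (p * q) = hc (e - a) p * q := by
  classical
  ext m
  rw [coeff_hc, coeff_mul, coeff_mul]
  have key : ∀ x ∈ Finset.HasAntidiagonal.antidiagonal m,
      coeff x.1 (hc (e - a) p) * coeff x.2 q =
        if (m.degree : ℤ) = e then coeff x.1 p * coeff x.2 q else 0 := by
    rintro ⟨x, y⟩ hxy
    rw [Finset.HasAntidiagonal.mem_antidiagonal] at hxy
    dsimp only at hxy ⊢
    by_cases h0 : coeff y q = 0
    · simp [h0]
    · have h1 := (homogComp_iff _ _).1 hq y h0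
      have h2 : (x.degree : ℤ) = e - a ↔ (m.degree : ℤ) = e := by
        rw [← hxy, map_add, Nat.cast_add, h1, eq_sub_iff_add_eq]
      rw [coeff_hc, ite_mul, zero_mul]
      simp only [h2]
  rw [Finset.sum_congr rfl key]
  split_ifs with h
  · rfl
  · rw [Finset.sum_const_zero]

theorem IsMonomialIdeal.hc_mem {I : Ideal (MvPoly K (Fin n))} (hI : IsMonomialIdeal K I) (e : ℤ)
    {p : MvPoly K (Fin n)} (hp : p ∈ I) : hc e p ∈ I := by
  refine IsMonomialIdeal.map_mem hI (hc e) (fun m c => ?_) hp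
  by_cases h : (m.degree : ℤ) = e
  · left
    refine HomogComp.hc_eq ((homogComp_iff _ _).2 fun m' hm' => ?_)
    have h1 : m = m' := by
      by_contra h'
      exact hm' (by rw [coeff_monomial, if_neg h'])
    rw [← h1, h]
  · right
    ext m'
    rw [coeff_hc, coeff_monomial, coeff_zero]
    by_cases h1 : m = m'
    · subst h1; rw [if_neg h]
    · simp [h1]

variable {α β γ : Type}

/-- `v` is homogeneous of degree `e` in the graded free module `⊕_b R(-dg b)`. -/
def HV (dg : β → ℤ) (e : ℤ) (v : β → MvPoly K (Fin n)) : Prop :=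
  ∀ b, HomogComp K (Fin n) (e - dg b) (v b)

/-- A degree-preserving map between graded free modules. -/
def Graded (dg' : β → ℤ) (dg : α → ℤ)
    (L : (β → MvPoly K (Fin n)) →ₗ[MvPoly K (Fin n)] (α → MvPoly K (Fin n))) : Prop :=
  ∀ e v, HV dg' e v → HV dg e (L v)

theorem Graded.comp {dγ : γ → ℤ} {dβ : β → ℤ} {dα : α → ℤ}
    {L : (β → MvPoly K (Fin n)) →ₗ[MvPoly K (Fin n)] (α → MvPoly K (Fin n))}
    {L' : (γ → MvPoly K (Fin n)) →ₗ[MvPoly K (Fin n)] (β → MvPoly K (Fin n))}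
    (hL : Graded dβ dα L) (hL' : Graded dγ dβ L') : Graded dγ dα (L ∘ₗ L') :=
  fun e v hv => hL e _ (hL' e v hv)

theorem Graded.sub {dβ : β → ℤ} {dα : α → ℤ}
    {L L' : (β → MvPoly K (Fin n)) →ₗ[MvPoly K (Fin n)] (α → MvPoly K (Fin n))}
    (hL : Graded dβ dα L) (hL' : Graded dβ dα L') : Graded dβ dα (L - L') :=
  fun e v hv a => homogComp_sub (hL e v hv a) (hL' e v hv a)

theorem graded_id {dβ : β → ℤ} : Graded (K := K) (n := n) dβ dβ LinearMap.id := fun _ _ h => h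

theorem hv_single [DecidableEq β] (dg : β → ℤ) (b : β) :
    HV (K := K) (n := n) dg (dg b) (Pi.single b 1) := by
  intro a
  by_cases h : a = b
  · subst h
    rw [Pi.single_eq_same, sub_self]
    exact homogComp_one
  · rw [Pi.single_eq_of_ne h]
    exact homogComp_zero _

theorem apply_eq_sum [Fintype β] [DecidableEq β]
    (L : (β → MvPoly K (Fin n)) →ₗ[MvPoly K (Fin n)] (α → MvPoly K (Fin n)))
    (v : β → MvPoly K (Fin n)) : L v = ∑ b, v b • L (Pi.single b 1) := by
  conv_lhs => rw [pi_eq_sum_univ' v]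
  rw [map_sum]
  refine Finset.sum_congr rfl fun b _ => ?_
  rw [map_smul]

theorem graded_of_single [Fintype β] [DecidableEq β] {dβ : β → ℤ} {dα : α → ℤ}
    (L : (β → MvPoly K (Fin n)) →ₗ[MvPoly K (Fin n)] (α → MvPoly K (Fin n)))
    (h : ∀ b, HV dα (dβ b) (L (Pi.single b 1))) : Graded dβ dα L := by
  intro e v hv a
  rw [apply_eq_sum L v, Finset.sum_apply]
  refine homogComp_sum _ _ _ fun b _ => ?_
  have := HomogComp.mul (hv b) (h b a)
  rwa [sub_add_sub_cancel] at this

theorem Graded.hc_apply [Fintype β] {dβ : β → ℤ} {dα : α → ℤ}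
    {L : (β → MvPoly K (Fin n)) →ₗ[MvPoly K (Fin n)] (α → MvPoly K (Fin n))}
    (h : Graded dβ dα L) (e : ℤ) (v : β → MvPoly K (Fin n)) (a : α) :
    hc (e - dα a) (L v a) = L (fun b => hc (e - dβ b) (v b)) a := by
  classical
  rw [apply_eq_sum L v, apply_eq_sum L (fun b => hc (e - dβ b) (v b)), Finset.sum_apply,
    Finset.sum_apply, map_sum]
  refine Finset.sum_congr rfl fun b _ => ?_
  rw [Pi.smul_apply, Pi.smul_apply, smul_eq_mul, smul_eq_mul,
    hc_mul _ _ _ (h _ _ (hv_single dβ b) a)]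
  congr 2
  ring_nf

/-- Graded lifting: a graded map from a free module lifts through a graded map whose range
contains its values on the basis. -/
theorem exists_graded_lift [Fintype β] [DecidableEq β] [Fintype γ] {dγ : γ → ℤ} {dβ : β → ℤ}
    {dα : α → ℤ} (L : (β → MvPoly K (Fin n)) →ₗ[MvPoly K (Fin n)] (α → MvPoly K (Fin n)))
    (hL : Graded dβ dα L)
    (M : (γ → MvPoly K (Fin n)) →ₗ[MvPoly K (Fin n)] (α → MvPoly K (Fin n)))
    (hM : Graded dγ dα M) (h : ∀ v, ∃ w, M w = L v) :
    ∃ N : (β → MvPoly K (Fin n)) →ₗ[MvPoly K (Fin n)] (γ → MvPoly K (Fin n)),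
      Graded dβ dγ N ∧ ∀ v, M (N v) = L v := by
  choose w hw using fun b : β => h (Pi.single b 1)
  let u : β → γ → MvPoly K (Fin n) := fun b c => hc (dβ b - dγ c) (w b c)
  have hu : ∀ b, M (u b) = L (Pi.single b 1) := by
    intro b
    funext a
    rw [← hM.hc_apply (dβ b) (w b) a, hw]
    exact HomogComp.hc_eq (hL _ _ (hv_single dβ b) a)
  have hN : ∀ b, Fintype.linearCombination (MvPoly K (Fin n)) u (Pi.single b 1) = u b := fun b => by
    rw [Fintype.linearCombination_apply_single, one_smul]
  refine ⟨Fintype.linearCombination _ u, graded_of_single _ fun b c => ?_, fun v => ?_⟩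
  · rw [hN]
    exact homogComp_hc _ _
  · have : M ∘ₗ Fintype.linearCombination _ u = L := by
      refine (Pi.basisFun (MvPoly K (Fin n)) β).ext fun b => ?_
      rw [Pi.basisFun_apply, LinearMap.comp_apply, hN, hu]
    exact DFunLike.congr_fun this v

end Graded

/-! ### Maps graded with respect to one variable -/

section Fine

variable {K : Type} [Field K] {n : ℕ} {α β γ : Type}

/-- The map `R ^ β → R ^ α` with matrix `x_i ^ (c' b - c a) * s b a`. If the entries of `s` do not
involve `x_i` and `s b a = 0` unless `c a ≤ c' b`, it preserves the `x_i`-degree when the basis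
elements are put in the `x_i`-degrees `c'` and `c`. -/
def mat [Fintype β] (i : Fin n) (c' : β → ℕ) (c : α → ℕ) (s : β → α → MvPoly K (Fin n)) :
    (β → MvPoly K (Fin n)) →ₗ[MvPoly K (Fin n)] (α → MvPoly K (Fin n)) :=
  Matrix.vecMulLinear (Matrix.of fun b a => X i ^ (c' b - c a) * s b a)

theorem mat_apply [Fintype β] (i : Fin n) (c' : β → ℕ) (c : α → ℕ)
    (s : β → α → MvPoly K (Fin n)) (v : β → MvPoly K (Fin n)) (a : α) :
    mat i c' c s v a = ∑ b, v b * (X i ^ (c' b - c a) * s b a) := rfl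

theorem mat_single [Fintype β] [DecidableEq β] (i : Fin n) (c' : β → ℕ) (c : α → ℕ)
    (s : β → α → MvPoly K (Fin n)) (b : β) (a : α) :
    mat i c' c s (Pi.single b 1) a = X i ^ (c' b - c a) * s b a := by
  rw [mat_apply, Finset.sum_eq_single b]
  · simp
  · intro b' _ h
    simp [h]
  · simp

theorem graded_mat [Fintype β] (i : Fin n) {c' : β → ℕ} {c : α → ℕ}
    {s : β → α → MvPoly K (Fin n)} {dg' : β → ℤ} {dg : α → ℤ}
    (hle : ∀ b a, s b a ≠ 0 → c a ≤ c' b)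
    (hs : ∀ b a, HomogComp K (Fin n) ((dg' b - c' b) - (dg a - c a)) (s b a)) :
    Graded dg' dg (mat i c' c s) := by
  classical
  refine graded_of_single _ fun b a => ?_
  rw [mat_single]
  by_cases h : s b a = 0
  · rw [h, mul_zero]
    exact homogComp_zero _
  · have h1 := hle b a h
    have h2 := HomogComp.mul (homogComp_X_pow i (c' b - c a)) (hs b a)
    rw [Nat.cast_sub h1] at h2
    convert h2 using 1
    ring

/-- Take the component of `x_i`-degree `k`, the basis being in the `x_i`-degrees `c`, and shift it
to `x_i`-degree `k'` with respect to the basis degrees `c'`. -/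
def shf (i : Fin n) (c c' : β → ℕ) (k k' : ℕ) (v : β → MvPoly K (Fin n)) : β → MvPoly K (Fin n) :=
  fun b => if c b ≤ k then X i ^ (k' - c' b) * cf i (k - c b) (v b) else 0

theorem shf_zero (i : Fin n) (c c' : β → ℕ) (k k' : ℕ) :
    shf (K := K) i c c' k k' 0 = 0 := by
  funext b
  simp [shf]

theorem shf_mat [Fintype β] (i : Fin n) {b₁ b₂ : β → ℕ} {a₁ a₂ : α → ℕ} {k₁ k₂ : ℕ}
    {s : β → α → MvPoly K (Fin n)} (hs : ∀ b a, Free i (s b a))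
    (h₁ : ∀ b a, s b a ≠ 0 → a₁ a ≤ b₁ b) (h₂ : ∀ b a, s b a ≠ 0 → a₂ a ≤ b₂ b)
    (hk : ∀ b, b₁ b ≤ k₁ → b₂ b ≤ k₂) (v : β → MvPoly K (Fin n)) :
    shf i a₁ a₂ k₁ k₂ (mat i b₁ a₁ s v) = mat i b₂ a₂ s (shf i b₁ b₂ k₁ k₂ v) := by
  funext a
  rw [mat_apply, shf, mat_apply, map_sum]
  split_ifs with h
  · rw [Finset.mul_sum]
    refine Finset.sum_congr rfl fun b _ => ?_
    by_cases hz : s b a = 0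
    · simp [hz]
    · have e1 := h₁ b a hz
      have e2 := h₂ b a hz
      rw [show v b * (X i ^ (b₁ b - a₁ a) * s b a) = X i ^ (b₁ b - a₁ a) * (s b a * v b) by ring,
        cf_X_pow_mul, shf]
      by_cases hb : b₁ b ≤ k₁
      · have e3 := hk b hb
        rw [if_pos (by omega), if_pos hb, cf_free_mul i (hs b a),
          show k₁ - a₁ a - (b₁ b - a₁ a) = k₁ - b₁ b by omega,
          show k₂ - a₂ a = (k₂ - b₂ b) + (b₂ b - a₂ a) by omega, pow_add]
        ring
      · rw [if_neg (by omega), if_neg hb, mul_zero, zero_mul]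
  · symm
    refine Finset.sum_eq_zero fun b _ => ?_
    by_cases hz : s b a = 0
    · simp [hz]
    · have e1 := h₁ b a hz
      rw [shf, if_neg (by omega), zero_mul]

theorem shf_shf (i : Fin n) {c c' : β → ℕ} {k k' : ℕ} (h : ∀ b, c' b ≤ k' ↔ c b ≤ k)
    (v : β → MvPoly K (Fin n)) :
    shf i c' c k' k (shf i c c' k k' v) = shf i c c k k v := by
  funext b
  unfold shf
  by_cases hb : c b ≤ k
  · have hb' := (h b).2 hb
    rw [if_pos hb, if_pos hb', if_pos hb, cf_X_pow_mul, if_pos le_rfl, tsub_self,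
      cf_free i (free_cf i _ _), if_pos rfl]
  · have hb' : ¬ c' b ≤ k' := fun h' => hb ((h b).1 h')
    rw [if_neg hb, if_neg hb', if_neg hb]

/-- A vector is the sum of its components with respect to the `x_i`-degree. -/
theorem exists_sum_shf [Finite β] (i : Fin n) (c : β → ℕ) (v : β → MvPoly K (Fin n)) :
    ∃ T₀ : ℕ, ∀ T ≥ T₀, ∑ t ∈ Finset.range T, shf i c c t t v = v := by
  have := Fintype.ofFinite β
  refine ⟨∑ b, (c b + ((tau i (v b)).natDegree + 1)), fun T hT => ?_⟩
  funext b
  have hb : c b + ((tau i (v b)).natDegree + 1) ≤ T := le_trans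
    (Finset.single_le_sum (f := fun b => c b + ((tau i (v b)).natDegree + 1))
      (fun _ _ => Nat.zero_le _) (Finset.mem_univ b)) hT
  obtain ⟨T', rfl⟩ := Nat.exists_eq_add_of_le (show c b ≤ T by omega)
  rw [Finset.sum_apply, Finset.sum_range_add, Finset.sum_eq_zero, zero_add]
  · have h := sum_cf i (v b) (T := T') (by omega)
    conv_rhs => rw [← h]
    refine Finset.sum_congr rfl fun t _ => ?_
    simp [shf]
  · intro t ht
    rw [shf, if_neg (by simpa using ht)]

/-- A free resolution of `R/I` graded both by the total degree `dg` and by the `x_i`-degree `c`,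
with `dg ≤ r + k` in homological degree `k`. -/
structure BiRes (i : Fin n) (I : Ideal (MvPoly K (Fin n))) (r : ℤ) where
  ι : ℕ → Type
  fin : ∀ k, Fintype (ι k)
  c : ∀ k, ι k → ℕ
  dg : ∀ k, ι k → ℤ
  bound : ∀ k b, dg k b ≤ r + k
  s : ∀ k, ι (k + 1) → ι k → MvPoly K (Fin n)
  free : ∀ k b a, Free i (s k b a)
  le : ∀ k b a, s k b a ≠ 0 → c k a ≤ c (k + 1) b
  homog : ∀ k b a, HomogComp K (Fin n)
    ((dg (k + 1) b - c (k + 1) b) - (dg k a - c k a)) (s k b a)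
  o : ι 0
  c_o : c 0 o = 0
  dg_o : dg 0 o = 0
  exact0 : ∀ v, v o ∈ I ↔ ∃ w, v = mat i (c 1) (c 0) (s 0) w
  exactS : ∀ k v, mat i (c (k + 1)) (c k) (s k) v = 0 ↔
    ∃ w, v = mat i (c (k + 2)) (c (k + 1)) (s (k + 1)) w

attribute [instance] BiRes.fin

/-- Exactness is checked on components of fixed `x_i`-degree, where changing the `x_i`-degrees of
the basis from `c` to `φ ∘ c` changes nothing but the names of the degrees. -/
theorem exact_transfer [Fintype α] [Fintype β] (i : Fin n) {φ θ : ℕ → ℕ} (hgc : GaloisConnection φ θ)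
    {c' : β → ℕ} {c : α → ℕ} {s : β → α → MvPoly K (Fin n)} (hs : ∀ b a, Free i (s b a))
    (hle : ∀ b a, s b a ≠ 0 → c a ≤ c' b) (Z : Set (α → MvPoly K (Fin n)))
    (Z' : AddSubgroup (α → MvPoly K (Fin n)))
    (hT : ∀ k, ∀ z ∈ Z, shf i c (φ ∘ c) (θ k) k z ∈ Z')
    (hU : ∀ k, ∀ z ∈ Z', shf i (φ ∘ c) c k (θ k) z ∈ Z)
    (hex : ∀ v, v ∈ Z ↔ ∃ w, v = mat i c' c s w) (v : α → MvPoly K (Fin n)) :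
    v ∈ Z' ↔ ∃ w, v = mat i (φ ∘ c') (φ ∘ c) s w := by
  have hle' : ∀ b a, s b a ≠ 0 → (φ ∘ c) a ≤ (φ ∘ c') b :=
    fun b a h => hgc.monotone_l (hle b a h)
  constructor
  · intro hv
    obtain ⟨T, hsum⟩ := exists_sum_shf i (φ ∘ c) v
    have h1 : ∀ k, ∃ w, shf i (φ ∘ c) (φ ∘ c) k k v = mat i (φ ∘ c') (φ ∘ c) s w := by
      intro k
      obtain ⟨w, hw⟩ := (hex _).1 (hU k v hv)
      refine ⟨shf i c' (φ ∘ c') (θ k) k w, ?_⟩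
      rw [← shf_mat i hs hle hle' (fun b h => (hgc _ _).2 h), ← hw,
        shf_shf (c := φ ∘ c) i (fun b => (hgc _ _).symm)]
    choose w hw using h1
    refine ⟨∑ k ∈ Finset.range T, w k, ?_⟩
    rw [map_sum, ← Finset.sum_congr rfl fun k _ => hw k, hsum T le_rfl]
  · rintro ⟨w, rfl⟩
    obtain ⟨T, hsum⟩ := exists_sum_shf i (φ ∘ c) (mat i (φ ∘ c') (φ ∘ c) s w)
    rw [← hsum T le_rfl]
    refine sum_mem fun k _ => ?_
    rw [← shf_shf i (k' := θ k) (c := φ ∘ c) (c' := c) (fun b => (hgc _ _).symm),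
      shf_mat i hs hle' hle (fun b h => (hgc _ _).1 h)]
    exact hT k _ ((hex _).2 ⟨_, rfl⟩)

theorem exists_resBound_of_family {I : Ideal (MvPoly K (Fin n))} {r : ℤ}
    (ι : ℕ → Type) [∀ k, Fintype (ι k)] (dg : ∀ k, ι k → ℤ) (hb : ∀ k b, dg k b ≤ r + k)
    (D : ∀ k, (ι (k + 1) → MvPoly K (Fin n)) →ₗ[MvPoly K (Fin n)] (ι k → MvPoly K (Fin n)))
    (hD : ∀ k, Graded (dg (k + 1)) (dg k) (D k)) (o : ι 0) (hdg : dg 0 o = 0)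
    (h0 : ∀ v : ι 0 → MvPoly K (Fin n), v o ∈ I ↔ ∃ w, v = D 0 w)
    (hS : ∀ k v, D k v = 0 ↔ ∃ w, v = D (k + 1) w) : ResBound K (Fin n) I r := by
  let e : ∀ k, ι k ≃ Fin (Fintype.card (ι k)) := fun k => Fintype.equivFin _
  let E : ∀ k, (Fin (Fintype.card (ι k)) → MvPoly K (Fin n)) ≃ₗ[MvPoly K (Fin n)]
    (ι k → MvPoly K (Fin n)) := fun k => LinearEquiv.funCongrLeft _ _ (e k)
  refine ⟨{
    rk := fun k => Fintype.card (ι k)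
    dg := fun k j => dg k ((e k).symm j)
    dmap := fun k => ((E k).symm.toLinearMap ∘ₗ D k) ∘ₗ (E (k + 1)).toLinearMap
    aug := (Ideal.Quotient.mkₐ (MvPoly K (Fin n)) I).toLinearMap ∘ₗ LinearMap.proj (e 0 o)
    aug_surj := ?_
    exact0 := ?_
    exactS := ?_
    graded := ?_
    aug_graded := ?_ }, ?_⟩
  · intro x
    obtain ⟨p, rfl⟩ := Ideal.Quotient.mk_surjective x
    exact ⟨fun _ => p, rfl⟩
  · intro v
    have h1 : ((Ideal.Quotient.mkₐ (MvPoly K (Fin n)) I).toLinearMap ∘ₗ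
        LinearMap.proj (φ := fun _ => MvPoly K (Fin n)) (e 0 o)) v = 0 ↔ E 0 v o ∈ I :=
      Ideal.Quotient.eq_zero_iff_mem
    rw [h1, h0]
    constructor
    · rintro ⟨w, hw⟩
      refine ⟨(E 1).symm w, ?_⟩
      simp [← hw]
    · rintro ⟨w, rfl⟩
      exact ⟨E 1 w, by simp⟩
  · intro k v
    have h1 : (((E k).symm.toLinearMap ∘ₗ D k) ∘ₗ (E (k + 1)).toLinearMap) v = 0 ↔
        D k (E (k + 1) v) = 0 := by simp
    rw [h1, hS]
    constructor
    · rintro ⟨w, hw⟩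
      refine ⟨(E (k + 2)).symm w, ?_⟩
      simp [← hw]
    · rintro ⟨w, rfl⟩
      exact ⟨E (k + 2) w, by simp⟩
  · intro k d v hv j
    have h1 : HV (dg (k + 1)) d (E (k + 1) v) := fun b => by
      have := hv (e (k + 1) b)
      dsimp only at this
      rwa [Equiv.symm_apply_apply] at this
    exact hD k d _ h1 _
  · intro d v hv
    have h1 := hv (e 0 o)
    dsimp only at h1
    rw [Equiv.symm_apply_apply, hdg, sub_zero] at h1
    unfold QuotComp
    unfold HomogComp at h1
    split_ifs with h
    · rw [if_pos h] at h1
      exact ⟨v (e 0 o), h1, rfl⟩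
    · rw [if_neg h] at h1
      refine (Submodule.mem_bot K).2 ?_
      change Ideal.Quotient.mk I (v (e 0 o)) = 0
      rw [h1, map_zero]
  · intro k j
    have := hb k ((e k).symm j)
    dsimp only
    omega

/-- Relabelling the `x_i`-degrees of a bigraded resolution by `φ`. -/
theorem BiRes.transfer {i : Fin n} {I I' : Ideal (MvPoly K (Fin n))} {r : ℤ} (M : BiRes i I r)
    {φ θ : ℕ → ℕ} (hgc : GaloisConnection φ θ) (hφ0 : φ 0 = 0) (δ : ℕ) (hδ : ∀ c, φ c ≤ c + δ)
    (hT : ∀ k, ∀ p ∈ I, X i ^ k * cf i (θ k) p ∈ I')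
    (hU : ∀ k, ∀ p ∈ I', X i ^ (θ k) * cf i k p ∈ I) : ResBound K (Fin n) I' (r + δ) := by
  have hle' : ∀ k b a, M.s k b a ≠ 0 → (φ ∘ M.c k) a ≤ (φ ∘ M.c (k + 1)) b :=
    fun k b a h => hgc.monotone_l (M.le k b a h)
  refine exists_resBound_of_family M.ι (fun k b => M.dg k b - M.c k b + φ (M.c k b)) ?_
    (fun k => mat i (φ ∘ M.c (k + 1)) (φ ∘ M.c k) (M.s k)) ?_ M.o ?_ ?_ ?_
  · intro k b
    have h1 := M.bound k b
    have h2 : (φ (M.c k b) : ℤ) ≤ M.c k b + δ := by exact_mod_cast hδ (M.c k b)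
    omega
  · intro k
    refine graded_mat i (hle' k) fun b a => ?_
    convert M.homog k b a using 1
    simp only [Function.comp_apply]
    ring
  · simp [M.c_o, M.dg_o, hφ0]
  · let Z' : AddSubgroup (M.ι 0 → MvPoly K (Fin n)) :=
      { carrier := {v | v M.o ∈ I'}
        zero_mem' := I'.zero_mem
        add_mem' := fun h h' => I'.add_mem h h'
        neg_mem' := fun h => I'.neg_mem h }
    refine exact_transfer i hgc (M.free 0) (M.le 0) {v | v M.o ∈ I} Z' ?_ ?_ M.exact0
    · intro k z hz
      have := hT k _ hz
      simpa [Z', shf, M.c_o, hφ0] using this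
    · intro k z hz
      have := hU k _ hz
      simpa [Z', shf, M.c_o, hφ0] using this
  · intro k
    refine exact_transfer i hgc (M.free (k + 1)) (M.le (k + 1))
      {v | mat i (M.c (k + 1)) (M.c k) (M.s k) v = 0}
      (LinearMap.ker (mat i (φ ∘ M.c (k + 1)) (φ ∘ M.c k) (M.s k))).toAddSubgroup ?_ ?_ (M.exactS k)
    · intro l z hz
      have hz : mat i (M.c (k + 1)) (M.c k) (M.s k) z = 0 := hz
      change mat i _ _ (M.s k) _ = 0
      rw [← shf_mat (b₂ := φ ∘ M.c (k + 1)) i (M.free k) (M.le k) (hle' k) (fun b h => (hgc _ _).2 h), hz, shf_zero]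
    · intro l z hz
      have hz : mat i (φ ∘ M.c (k + 1)) (φ ∘ M.c k) (M.s k) z = 0 := hz
      change mat i _ _ (M.s k) _ = 0
      rw [← shf_mat (b₁ := φ ∘ M.c (k + 1)) i (M.free k) (hle' k) (M.le k) (fun b h => (hgc _ _).1 h), hz, shf_zero]

end Fine

/-! ### Refining a graded resolution to a bigraded one -/

section Refine

variable {K : Type} [Field K] {n : ℕ}

/-- Homological degree `k` of a bigraded resolution under construction, compared with the given
graded resolution `F`: a bigraded free module, its submodule `Z` of cycles, and graded maps `f`,
`g`, `h` exhibiting the cycles as being generated by the images of the basis of `F_{k+1}` under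
`g ∘ ∂` and of the basis of the module itself under `h`. This controls the degrees of generators
of `Z`. -/
structure Stage (i : Fin n) {I : Ideal (MvPoly K (Fin n))} (F : GradedFreeRes K (Fin n) I) (r : ℤ)
    (k : ℕ) where
  ι : Type
  fin : Fintype ι
  c : ι → ℕ
  dg : ι → ℤ
  bound : ∀ b, dg b ≤ r + k
  Z : Submodule (MvPoly K (Fin n)) (ι → MvPoly K (Fin n))
  stable : ∀ t, ∀ z ∈ Z, shf i c c t t z ∈ Z
  f : (ι → MvPoly K (Fin n)) →ₗ[MvPoly K (Fin n)] (Fin (F.rk k) → MvPoly K (Fin n))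
  g : (Fin (F.rk k) → MvPoly K (Fin n)) →ₗ[MvPoly K (Fin n)] (ι → MvPoly K (Fin n))
  h : (ι → MvPoly K (Fin n)) →ₗ[MvPoly K (Fin n)] (ι → MvPoly K (Fin n))
  gf : Graded dg (F.dg k) f
  gg : Graded (F.dg k) dg g
  gh : Graded dg dg h
  f_mem : ∀ z ∈ Z, ∃ w, F.dmap k w = f z
  g_mem : ∀ w, g (F.dmap k w) ∈ Z
  h_mem : ∀ m, h m ∈ Z
  eq : ∀ z ∈ Z, z = g (f z) + h z

attribute [instance] Stage.fin

/-- `S'`, with the matrix `s`, is the next module of the resolution. -/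
structure Next {i : Fin n} {I : Ideal (MvPoly K (Fin n))} {F : GradedFreeRes K (Fin n) I} {r : ℤ}
    {k : ℕ} (S : Stage i F r k) (S' : Stage i F r (k + 1))
    (s : S'.ι → S.ι → MvPoly K (Fin n)) : Prop where
  free : ∀ b a, Free i (s b a)
  le : ∀ b a, s b a ≠ 0 → S.c a ≤ S'.c b
  homog : ∀ b a, HomogComp K (Fin n) ((S'.dg b - S'.c b) - (S.dg a - S.c a)) (s b a)
  range : ∀ v, v ∈ S.Z ↔ ∃ w, v = mat i S'.c S.c s w
  ker : ∀ v, v ∈ S'.Z ↔ mat i S'.c S.c s v = 0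

/-- Degree zero: the module is `R` itself and the cycles are `I`. The bound holds because a nonzero
`R/I` has a generator of degree zero, which forces `0 ≤ r`. -/
theorem exists_base (i : Fin n) {I : Ideal (MvPoly K (Fin n))} (hI : IsMonomialIdeal K I)
    (hne : I ≠ ⊤) (F : GradedFreeRes K (Fin n) I) {r : ℤ} (hF : ∀ k j, F.dg k j - k ≤ r) :
    ∃ (S : Stage i F r 0) (o : S.ι), S.c o = 0 ∧ S.dg o = 0 ∧ ∀ v, v ∈ S.Z ↔ v o ∈ I := by
  classical
  -- homogeneous representatives of the images of the basis elements in `R/I`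
  have hG : ∀ j, ∃ G : MvPoly K (Fin n), HomogComp K (Fin n) (F.dg 0 j) G ∧
      Ideal.Quotient.mk I G = F.aug (Pi.single j 1) := by
    intro j
    have h := F.aug_graded (F.dg 0 j) (Pi.single j 1) (hv_single (F.dg 0) j)
    unfold QuotComp at h
    unfold HomogComp
    split_ifs at h ⊢ with h0
    · obtain ⟨G, h1, h2⟩ := h
      exact ⟨G, h1, h2⟩
    · refine ⟨0, rfl, ?_⟩
      rw [(Submodule.mem_bot K).1 h, map_zero]
  choose G hGh hGa using hG
  let g : (Fin (F.rk 0) → MvPoly K (Fin n)) →ₗ[MvPoly K (Fin n)] (Unit → MvPoly K (Fin n)) :=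
    Fintype.linearCombination _ (fun j (_ : Unit) => G j)
  have hg1 : ∀ j u, g (Pi.single j 1) u = G j := fun j u => by
    rw [Fintype.linearCombination_apply_single, one_smul]
  have gg : Graded (F.dg 0) (fun _ : Unit => (0 : ℤ)) g := by
    refine graded_of_single _ fun j u => ?_
    rw [hg1, sub_zero]
    exact hGh j
  have hga : ∀ w, Ideal.Quotient.mk I (g w ()) = F.aug w := by
    have : ((Ideal.Quotient.mkₐ (MvPoly K (Fin n)) I).toLinearMap ∘ₗ LinearMap.proj ()) ∘ₗ g =
        F.aug := by
      refine (Pi.basisFun (MvPoly K (Fin n)) _).ext fun j => ?_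
      rw [Pi.basisFun_apply, ← hGa j, ← hg1 j ()]
      rfl
    exact fun w => DFunLike.congr_fun this w
  -- a homogeneous preimage of `1`
  obtain ⟨u₀, hu₀⟩ := F.aug_surj 1
  let u : Fin (F.rk 0) → MvPoly K (Fin n) := fun j => hc (0 - F.dg 0 j) (u₀ j)
  have hu : HV (F.dg 0) 0 u := fun j => homogComp_hc _ _
  have hgu : 1 - g u () ∈ I := by
    have h1 : 1 - g u₀ () ∈ I := by
      rw [← Ideal.Quotient.eq_zero_iff_mem, map_sub, hga, hu₀, map_one, sub_self]
    have h2 := IsMonomialIdeal.hc_mem hI 0 h1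
    rw [map_sub, HomogComp.hc_eq homogComp_one] at h2
    have h3 := gg.hc_apply 0 u₀ ()
    rw [sub_zero] at h3
    rwa [h3] at h2
  have haug : F.aug u = 1 := by
    rw [← hga]
    have := Ideal.Quotient.eq_zero_iff_mem.2 hgu
    rw [map_sub, map_one, sub_eq_zero] at this
    exact this.symm
  -- some basis element of `F_0` has degree `0`
  have hr : 0 ≤ r := by
    have h1 : g u () ≠ 0 := by
      intro h
      rw [h, sub_zero] at hgu
      exact hne ((Ideal.eq_top_iff_one I).2 hgu)
    rw [apply_eq_sum g u, Finset.sum_apply] at h1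
    obtain ⟨j, -, hj⟩ := Finset.exists_ne_zero_of_sum_ne_zero h1
    rw [Pi.smul_apply, smul_eq_mul, hg1] at hj
    have h2 : ¬ (0 - F.dg 0 j < 0) := fun h => left_ne_zero_of_mul hj (HomogComp.eq_zero (hu j) h)
    have h3 : ¬ (F.dg 0 j < 0) := fun h => right_ne_zero_of_mul hj (HomogComp.eq_zero (hGh j) h)
    have h4 := hF 0 j
    simp only [Nat.cast_zero] at h4
    omega
  let f : (Unit → MvPoly K (Fin n)) →ₗ[MvPoly K (Fin n)] (Fin (F.rk 0) → MvPoly K (Fin n)) :=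
    Fintype.linearCombination _ (fun _ : Unit => u)
  have hf : ∀ m, f m = m () • u := fun m => by
    simp [f, Fintype.linearCombination_apply]
  let Z : Submodule (MvPoly K (Fin n)) (Unit → MvPoly K (Fin n)) := Submodule.comap
    (LinearMap.proj (R := MvPoly K (Fin n)) (φ := fun _ : Unit => MvPoly K (Fin n)) ()) I
  have hZ : ∀ v, v ∈ Z ↔ v () ∈ I := fun v => Iff.rfl
  have gf : Graded (fun _ : Unit => (0 : ℤ)) (F.dg 0) f := by
    refine graded_of_single _ fun _ => ?_
    rw [hf, Pi.single_eq_same, one_smul]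
    exact hu
  let S : Stage i F r 0 :=
    { ι := Unit
      fin := inferInstance
      c := fun _ => 0
      dg := fun _ => 0
      bound := fun _ => by simpa using hr
      Z := Z
      stable := fun t z hz => by
        rw [hZ] at hz ⊢
        simpa [shf] using IsMonomialIdeal.X_pow_mul_cf_mem i hI t hz
      f := f
      g := g
      h := LinearMap.id - g ∘ₗ f
      gf := gf
      gg := gg
      gh := graded_id.sub (gg.comp gf)
      f_mem := fun z hz => by
        refine (F.exact0 (f z)).1 ?_
        rw [hf, map_smul, haug]
        refine Ideal.Quotient.eq_zero_iff_mem.2 (?_ : z () * 1 ∈ I)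
        rwa [mul_one]
      g_mem := fun w => by
        rw [hZ, ← Ideal.Quotient.eq_zero_iff_mem, hga]
        exact F.exact0.apply_apply_eq_zero w
      h_mem := fun m => by
        rw [hZ]
        have : m () - g (f m) () = m () * (1 - g u ()) := by
          rw [hf, map_smul, Pi.smul_apply, smul_eq_mul, mul_sub, mul_one]
        change m () - g (f m) () ∈ I
        rw [this]
        exact Ideal.mul_mem_left _ _ hgu
      eq := fun z _ => by simp }
  exact ⟨S, (), rfl, rfl, hZ⟩

/-- The generators of the cycles provided by `S` are split into their components of fixed
`x_i`-degree; these components generate the cycles because `S.Z` is stable under taking them.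
The comparison maps and the homotopy are then lifted to the new module. -/
theorem exists_next {i : Fin n} {I : Ideal (MvPoly K (Fin n))} {F : GradedFreeRes K (Fin n) I}
    {r : ℤ} (hF : ∀ k j, F.dg k j - k ≤ r) {k : ℕ} (S : Stage i F r k) :
    ∃ (S' : Stage i F r (k + 1)) (s : S'.ι → S.ι → MvPoly K (Fin n)), Next S S' s := by
  classical
  -- homogeneous generators of the cycles
  let y : Fin (F.rk (k + 1)) ⊕ S.ι → (S.ι → MvPoly K (Fin n)) :=
    Sum.elim (fun j => S.g (F.dmap k (Pi.single j 1))) (fun l => S.h (Pi.single l 1))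
  let dy : Fin (F.rk (k + 1)) ⊕ S.ι → ℤ := Sum.elim (F.dg (k + 1)) S.dg
  have hFg : ∀ k, Graded (F.dg (k + 1)) (F.dg k) (F.dmap k) := fun k e v h => F.graded k e v h
  have hyZ : ∀ j, y j ∈ S.Z := by
    rintro (j | l)
    · exact S.g_mem _
    · exact S.h_mem _
  have hyd : ∀ j, HV S.dg (dy j) (y j) := by
    rintro (j | l)
    · exact (S.gg.comp (hFg k)) _ _ (hv_single _ _)
    · exact S.gh _ _ (hv_single _ _)
  have hbd : ∀ j, dy j ≤ r + (k + 1 : ℕ) := by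
    rintro (j | l)
    · have := hF (k + 1) j
      change F.dg (k + 1) j ≤ _
      omega
    · have := S.bound l
      change S.dg l ≤ _
      push_cast
      omega
  -- all of them are sums of their components of `x_i`-degree less than `T`
  choose T₀ hT₀ using fun j => exists_sum_shf i S.c (y j)
  obtain ⟨T, hT⟩ : ∃ T, ∀ j, T₀ j ≤ T := ⟨∑ j, T₀ j, fun j =>
    Finset.single_le_sum (fun _ _ => Nat.zero_le _) (Finset.mem_univ j)⟩
  let c' : (Fin (F.rk (k + 1)) ⊕ S.ι) × Fin T → ℕ := fun b => b.2
  let dg' : (Fin (F.rk (k + 1)) ⊕ S.ι) × Fin T → ℤ := fun b => dy b.1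
  let s : (Fin (F.rk (k + 1)) ⊕ S.ι) × Fin T → S.ι → MvPoly K (Fin n) := fun b a =>
    if S.c a ≤ c' b then cf i (c' b - S.c a) (y b.1 a) else 0
  have hfree : ∀ b a, Free i (s b a) := by
    intro b a
    dsimp only [s]
    split_ifs
    · exact free_cf i _ _
    · exact free_zero i
  have hle : ∀ b a, s b a ≠ 0 → S.c a ≤ c' b := by
    intro b a h
    by_contra h'
    exact h (if_neg h')
  have hhom : ∀ b a, HomogComp K (Fin n) ((dg' b - c' b) - (S.dg a - S.c a)) (s b a) := by
    intro b a
    dsimp only [s]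
    split_ifs with h
    · have := HomogComp.cf i (hyd b.1 a) (c' b - S.c a)
      rw [Nat.cast_sub h] at this
      convert this using 1
      ring
    · exact homogComp_zero _
  let D := mat i c' S.c s
  have gD : Graded dg' S.dg D := graded_mat i hle hhom
  have hDs : ∀ b, D (Pi.single b 1) = shf i S.c S.c (c' b) (c' b) (y b.1) := by
    intro b
    funext a
    rw [mat_single, shf]
    dsimp only [s]
    split_ifs <;> simp
  have hyr : ∀ j, y j ∈ LinearMap.range D := by
    intro j
    rw [← hT₀ j T (hT j)]
    refine sum_mem fun t ht => ?_
    exact ⟨Pi.single (j, ⟨t, Finset.mem_range.1 ht⟩) 1, hDs _⟩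
  have hrange : ∀ v, v ∈ S.Z ↔ ∃ w, v = D w := by
    intro v
    constructor
    · intro hv
      have h1 : v ∈ LinearMap.range D := by
        rw [S.eq v hv]
        refine add_mem ?_ ?_
        · obtain ⟨w, hw⟩ := S.f_mem v hv
          rw [← hw, ← LinearMap.comp_apply, apply_eq_sum]
          exact sum_mem fun j _ => Submodule.smul_mem _ _ (hyr (Sum.inl j))
        · rw [apply_eq_sum]
          exact sum_mem fun l _ => Submodule.smul_mem _ _ (hyr (Sum.inr l))
      obtain ⟨w, hw⟩ := h1
      exact ⟨w, hw.symm⟩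
    · rintro ⟨w, rfl⟩
      rw [apply_eq_sum]
      refine sum_mem fun b _ => Submodule.smul_mem _ _ ?_
      rw [hDs]
      exact S.stable _ _ (hyZ _)
  have hDZ : ∀ w, D w ∈ S.Z := fun w => (hrange _).2 ⟨w, rfl⟩
  -- comparison maps in the next degree
  obtain ⟨f', gf', hf'⟩ := exists_graded_lift (S.f ∘ₗ D) (S.gf.comp gD) (F.dmap k) (hFg k)
    (fun v => S.f_mem _ (hDZ v))
  obtain ⟨g', gg', hg'⟩ := exists_graded_lift (S.g ∘ₗ F.dmap k) (S.gg.comp (hFg k)) D gD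
    (fun v => by
      obtain ⟨w, hw⟩ := (hrange _).1 (S.g_mem v)
      exact ⟨w, hw.symm⟩)
  obtain ⟨h₀, gh₀, hh₀⟩ := exists_graded_lift S.h S.gh D gD
    (fun v => by
      obtain ⟨w, hw⟩ := (hrange _).1 (S.h_mem v)
      exact ⟨w, hw.symm⟩)
  refine ⟨{
    ι := (Fin (F.rk (k + 1)) ⊕ S.ι) × Fin T
    fin := inferInstance
    c := c'
    dg := dg'
    bound := fun b => hbd b.1
    Z := LinearMap.ker D
    stable := fun t z hz => by
      rw [LinearMap.mem_ker] at hz ⊢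
      dsimp only [D] at hz ⊢
      rw [← shf_mat i hfree hle hle (fun _ h => h), hz, shf_zero]
    f := f'
    g := g'
    h := LinearMap.id - g' ∘ₗ f' - h₀ ∘ₗ D
    gf := gf'
    gg := gg'
    gh := (graded_id.sub (gg'.comp gf')).sub (gh₀.comp gD)
    f_mem := fun z hz => by
      refine (F.exactS k (f' z)).1 ?_
      rw [hf', LinearMap.comp_apply, LinearMap.mem_ker.1 hz, map_zero]
    g_mem := fun w => by
      rw [LinearMap.mem_ker, hg', LinearMap.comp_apply, (F.exactS k).apply_apply_eq_zero, map_zero]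
    h_mem := fun m => by
      rw [LinearMap.mem_ker, LinearMap.sub_apply, LinearMap.sub_apply, LinearMap.comp_apply,
        LinearMap.comp_apply, map_sub, map_sub, hg', hh₀, LinearMap.comp_apply, hf', sub_sub,
        LinearMap.comp_apply, ← S.eq _ (hDZ m), LinearMap.id_apply, sub_self]
    eq := fun z hz => by
      rw [LinearMap.sub_apply, LinearMap.sub_apply, LinearMap.comp_apply, LinearMap.comp_apply,
        LinearMap.mem_ker.1 hz, map_zero, sub_zero, LinearMap.id_apply, add_sub_cancel] },
    s, hfree, hle, hhom, hrange, fun v => Iff.rfl⟩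

theorem exists_biRes (i : Fin n) {I : Ideal (MvPoly K (Fin n))} (hI : IsMonomialIdeal K I)
    (hne : I ≠ ⊤) {r : ℤ} (h : ResBound K (Fin n) I r) : Nonempty (BiRes i I r) := by
  obtain ⟨F, hF⟩ := h
  obtain ⟨S₀, o, hc, hd, hZ⟩ := exists_base i hI hne F hF
  choose nxt s hs using fun k (S : Stage i F r k) => exists_next hF S
  let S : ∀ k, Stage i F r k := fun k => Nat.rec S₀ nxt k
  have hS : ∀ k, Next (S k) (S (k + 1)) (s k (S k)) := fun k => hs k (S k)
  exact ⟨{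
    ι := fun k => (S k).ι
    fin := fun k => (S k).fin
    c := fun k => (S k).c
    dg := fun k => (S k).dg
    bound := fun k => (S k).bound
    s := fun k => s k (S k)
    free := fun k => (hS k).free
    le := fun k => (hS k).le
    homog := fun k => (hS k).homog
    o := o
    c_o := hc
    dg_o := hd
    exact0 := fun v => (hZ v).symm.trans ((hS 0).range v)
    exactS := fun k v => ((hS k).ker v).symm.trans ((hS (k + 1)).range v) }⟩

end Refine

/-! ### Regularity -/

section Regularity

variable {K : Type} [Field K] {n : ℕ}

theorem resBound_top (r : ℤ) : ResBound K (Fin n) ⊤ r := by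
  have : Subsingleton (MvPoly K (Fin n) ⧸ (⊤ : Ideal (MvPoly K (Fin n)))) :=
    Ideal.Quotient.subsingleton_iff.2 rfl
  exact ⟨{
    rk := fun _ => 0
    dg := fun _ j => j.elim0
    dmap := fun _ => 0
    aug := 0
    aug_surj := fun x => ⟨0, Subsingleton.elim _ _⟩
    exact0 := fun v => ⟨fun _ => ⟨0, Subsingleton.elim _ _⟩, fun _ => rfl⟩
    exactS := fun _ v => ⟨fun _ => ⟨0, Subsingleton.elim _ _⟩, fun _ => rfl⟩
    graded := fun _ _ _ _ j => j.elim0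
    aug_graded := fun e v _ => by
      rw [LinearMap.zero_apply]
      exact zero_mem _ }, fun _ j => j.elim0⟩

/-- Relabelling by `c ↦ c - 1` turns a bigraded resolution of `R/I` into one of `R/J`. -/
theorem resBound_colon {I J : Ideal (MvPoly K (Fin n))} (i : Fin n) (hI : IsMonomialIdeal K I)
    (hcol : ∀ p, p ∈ J ↔ X i * p ∈ I) (hJs : ∀ a, ∀ p ∈ J, X i ^ a * cf i a p ∈ J)
    {r : ℤ} (h : ResBound K (Fin n) I r) : ResBound K (Fin n) J r := by
  by_cases htop : I = ⊤
  · have : J = ⊤ := by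
      rw [Ideal.eq_top_iff_one, hcol, htop]
      trivial
    rw [this]
    exact resBound_top r
  · obtain ⟨M⟩ := exists_biRes i hI htop h
    have := M.transfer (I' := J) (φ := Nat.pred) (θ := Nat.succ) (fun a b => by
      simp only [Nat.pred_eq_sub_one, Nat.succ_eq_add_one]; omega) rfl 0
      (fun c => by simp) (fun k p hp => by
        rw [hcol, ← mul_assoc, ← pow_succ']
        exact IsMonomialIdeal.X_pow_mul_cf_mem i hI (k + 1) hp)
      (fun k p hp => by
        rw [Nat.succ_eq_add_one, pow_succ', mul_assoc, ← hcol]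
        exact hJs k p hp)
    simpa using this

/-- Relabelling by `0 ↦ 0` and `c ↦ c + 1` for `c > 0` turns a bigraded resolution of `R/J` into
one of `R/I`. -/
theorem resBound_of_colon {I J : Ideal (MvPoly K (Fin n))} (i : Fin n) (hI : IsMonomialIdeal K I)
    (hJ : IsMonomialIdeal K J) (hcol : ∀ p, p ∈ J ↔ X i * p ∈ I) (hIJ : I ≤ J)
    (heps : ∀ p ∈ J, eps i p ∈ I) {r : ℤ} (h : ResBound K (Fin n) J r) :
    ResBound K (Fin n) I (r + 1) := by
  by_cases htop : J = ⊤
  · have : I = ⊤ := by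
      rw [Ideal.eq_top_iff_one]
      have := heps 1 (by rw [htop]; trivial)
      rwa [map_one] at this
    rw [this]
    exact resBound_top _
  · obtain ⟨M⟩ := exists_biRes i hJ htop h
    have := M.transfer (I' := I) (φ := fun c => if c = 0 then 0 else c + 1) (θ := Nat.pred)
      (fun a b => by
        simp only [Nat.pred_eq_sub_one]
        split_ifs <;> omega) rfl 1
      (fun c => by split_ifs <;> omega) (fun k p hp => by
        cases k with
        | zero => simpa [eps_eq] using heps p hp
        | succ k =>
          rw [pow_succ', mul_assoc, ← hcol]
          exact IsMonomialIdeal.X_pow_mul_cf_mem i hJ k hp)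
      (fun k p hp => by
        cases k with
        | zero => exact IsMonomialIdeal.X_pow_mul_cf_mem i hJ 0 (hIJ hp)
        | succ k =>
          rw [hcol, ← mul_assoc, ← pow_succ']
          exact IsMonomialIdeal.X_pow_mul_cf_mem i hI (k + 1) hp)
    simpa using this

theorem cmreg_eq {I : Ideal (MvPoly K (Fin n))} {r : ℤ} (h : ResBound K (Fin n) I r)
    (h' : ∀ s, ResBound K (Fin n) I s → r ≤ s) : CMreg K (Fin n) I = r := by
  have hex : ∃ r : ℤ, ResBound K (Fin n) I r ∧ ∀ s : ℤ, ResBound K (Fin n) I s → r ≤ s := ⟨r, h, h'⟩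
  unfold CMreg
  rw [dif_pos hex]
  congr 1
  exact le_antisymm (hex.choose_spec.2 r h) (h' _ hex.choose_spec.1)

/-- A bound on the shifts of `I` that carries over, up to `d`, to `I'` bounds the regularity. The
converse bound guarantees that the regularity of `I` is finite if that of `I'` is. -/
theorem cmreg_le {I I' : Ideal (MvPoly K (Fin n))} (d d' : ℤ)
    (h : ∀ r, ResBound K (Fin n) I r → ResBound K (Fin n) I' (r + d))
    (h' : ∀ r, ResBound K (Fin n) I' r → ResBound K (Fin n) I (r + d')) :
    CMreg K (Fin n) I' ≤ CMreg K (Fin n) I + (d : WithBot ℤ) := by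
  by_cases hex : ∃ r : ℤ, ResBound K (Fin n) I' r ∧ ∀ s : ℤ, ResBound K (Fin n) I' s → r ≤ s
  · obtain ⟨r', hr', hmin'⟩ := hex
    rw [cmreg_eq hr' hmin']
    obtain ⟨r, hr, hmin⟩ : ∃ r : ℤ, ResBound K (Fin n) I r ∧
        ∀ s : ℤ, ResBound K (Fin n) I s → r ≤ s :=
      Int.exists_least_of_bdd ⟨r' - d, fun z hz => by
        have := hmin' _ (h z hz)
        omega⟩ ⟨_, h' _ hr'⟩
    rw [cmreg_eq hr hmin, ← WithBot.coe_add]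
    exact WithBot.coe_le_coe.2 (hmin' _ (h r hr))
  · have : CMreg K (Fin n) I' = ⊥ := by
      unfold CMreg
      rw [dif_neg hex]
    rw [this]
    exact bot_le

end Regularity

end

end Stmt9

/-- if `(I : x_i) = J` and `(I, x_i) = (J, x_i)` for monomial ideals
`I, J`, then `reg` and `depth` of `R/I` are sandwiched by those of `R/J`. -/
theorem stmt9 (K : Type) [Field K] (n : ℕ) (I J : Ideal (MvPoly K (Fin n)))
    (hI : IsMonomialIdeal K I) (hJ : IsMonomialIdeal K J) (i : Fin n)
    (hcolon : I.colon (Ideal.span {(MvPolynomial.X i : MvPoly K (Fin n))}) = J)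
    (hsum : I + Ideal.span {(MvPolynomial.X i : MvPoly K (Fin n))} =
      J + Ideal.span {(MvPolynomial.X i : MvPoly K (Fin n))}) :
    (CMreg K (Fin n) J ≤ CMreg K (Fin n) I ∧
      CMreg K (Fin n) I ≤ CMreg K (Fin n) J + 1) ∧
    (depthQ K (Fin n) J - 1 ≤ depthQ K (Fin n) I ∧
      depthQ K (Fin n) I ≤ depthQ K (Fin n) J) := by
  have hcol : ∀ p, p ∈ J ↔ MvPolynomial.X i * p ∈ I := fun p => by
    rw [← hcolon, mul_comm]
    exact Ideal.mem_colon_span_singleton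
  have hIJ : I ≤ J := fun p hp => (hcol p).2 (I.mul_mem_left _ hp)
  have hepsI : ∀ p ∈ I, Stmt9.eps i p ∈ I := fun p hp => Stmt9.IsMonomialIdeal.eps_mem i hI hp
  have heps : ∀ p ∈ J, Stmt9.eps i p ∈ I := fun p hp => by
    have h : p ∈ I + Ideal.span {(MvPolynomial.X i : MvPoly K (Fin n))} :=
      hsum ▸ Ideal.mem_sup_left hp
    obtain ⟨q, hq, t, ht, rfl⟩ := Submodule.mem_sup.1 h
    obtain ⟨t, rfl⟩ := Ideal.mem_span_singleton'.1 ht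
    rw [map_add, map_mul, Stmt9.eps_X, mul_zero, add_zero]
    exact hepsI q hq
  have h1 : ∀ r, ResBound K (Fin n) I r → ResBound K (Fin n) J r := fun r h =>
    Stmt9.resBound_colon i hI hcol (fun a p hp => Stmt9.IsMonomialIdeal.X_pow_mul_cf_mem i hJ a hp) h
  have h2 : ∀ r, ResBound K (Fin n) J r → ResBound K (Fin n) I (r + 1) := fun r h =>
    Stmt9.resBound_of_colon i hI hJ hcol hIJ heps h
  refine ⟨⟨?_, ?_⟩, ?_, ?_⟩
  · simpa using Stmt9.cmreg_le 0 1 (fun r h => by simpa using h1 r h) h2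
  · exact Stmt9.cmreg_le 1 0 h2 (fun r h => by simpa using h1 r h)
  · rw [Stmt9.depthQ_eq i hcol hIJ hepsI heps]
    exact tsub_le_self
  · exact (Stmt9.depthQ_eq i hcol hIJ hepsI heps).le
end
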